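/- Under the null hypothesis (i.e. when the sample is i.i.d. uniform on [0,1]), for any fixed x > 0, the probability P(M_n < x / (2 log n · log log n)) converges to 1 - e^{-2x} as n → ∞. -/

import Mathlib

open MeasureTheory Filter Set

noncomputable section

/-- Density of the Beta(a,b) distribution on [0,1]. -/
def betaPDF (a b x : ℝ) : ℝ :=
  x ^ (a - 1) * (1 - x) ^ (b - 1) / (Real.Gamma a * Real.Gamma b / Real.Gamma (a + b))

/-- Regularized incomplete beta function `I_x(a,b) = P(Beta(a,b) < x)`. -/
def regIncBeta (a b x : ℝ) : ℝ := ∫ t in Set.Ioc (0:ℝ) x, betaPDF a b t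

/-- The `i`-th order statistic (0-based) of the sample `u`. -/
def orderStat {n : ℕ} (u : Fin n → ℝ) (i : Fin n) : ℝ := u (Tuple.sort u i)

/-- `p_{(i)} = P(Beta(i, n-i+1) < u_{(i)})` (with 1-based index `i = (i : Fin n) + 1`). -/
def pOrd {n : ℕ} (u : Fin n → ℝ) (i : Fin n) : ℝ :=
  regIncBeta ((i : ℕ) + 1 : ℝ) ((n : ℝ) - (i : ℕ)) (orderStat u i)

/-- One-sided exact Berk-Jones statistic `M_n^+`. -/
def MnPlus {n : ℕ} (u : Fin n → ℝ) : ℝ := ⨅ i, pOrd u i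

/-- One-sided exact Berk-Jones statistic `M_n^-`. -/
def MnMinus {n : ℕ} (u : Fin n → ℝ) : ℝ := ⨅ i, (1 - pOrd u i)

/-- Two-sided exact Berk-Jones statistic `M_n`. -/
def Mn {n : ℕ} (u : Fin n → ℝ) : ℝ := min (MnPlus u) (MnMinus u)

/-- Joint law of `n` i.i.d. `U[0,1]` random variables (the null hypothesis). -/
def nullMeasure (n : ℕ) : Measure (Fin n → ℝ) :=
  Measure.pi fun _ => MeasureTheory.volume.restrict (Set.Icc (0:ℝ) 1)

end

/-!
`M_n` falls below `ε` when, at some time `t`, the number `k` of observations up to `t` has a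
binomial tail probability below `ε`. The proof follows the counts along a fine grid of times up to
the first such crossing, with the potential `g = w ε ∑_{σ = ±1} ∫ L_{σ exp v} dv`, where `L_z` is
the likelihood ratio at `(t, k)` for a shift of the binomial mean by `z` standard deviations and
`w = 2 log log n`. Three properties of `g` decide the limit.

* The window is wide enough that `g` is close to `1` at a crossing, at most about `1` before it,
  and of vanishing mean.
* When time is measured by half the log-odds of `t`, the process `L` is a martingale once the shift
  grows exponentially, so a time step `Δ` translates the range of `v` by `Δ`. On the non-crossing
  states only the small shifts contribute to the change, where `L` is close to `1`: the drift of
  `g` is nearly the constant `2 w ε Δ`.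
* Hence the survival probability `A_j` satisfies `A_{j+1} ≈ (1 - 2 w ε Δ) A_j` up to summable
  errors. Logistic time runs over a range of length about `log n`, so for
  `ε = x / (2 log n log log n)` the product over all steps tends to `exp (-2 x)`.

The extreme order statistics, outside this range of times, are discarded by a union bound; a
crossing between grid points is a crossing on the grid at a level larger by a factor tending to `1`.
-/

open scoped Topology

noncomputable section

namespace BerkJones

/-! ### Binomial tails -/

section BinomialTails

variable {n k l : ℕ} {p q : ℝ}

/-- The mass that the binomial law with parameters `n` and `p` gives to `k`; a polynomial in `p`,
defined for every real `p`. -/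
def binomMass (n : ℕ) (p : ℝ) (k : ℕ) : ℝ := n.choose k * p ^ k * (1 - p) ^ (n - k)

/-- The upper tail `P(Bin(n, p) ≥ k)`. -/
def upperTail (n : ℕ) (p : ℝ) (k : ℕ) : ℝ := ∑ l ∈ Finset.Icc k n, binomMass n p l

/-- The lower tail `P(Bin(n, p) ≤ k)`. -/
def lowerTail (n : ℕ) (p : ℝ) (k : ℕ) : ℝ := ∑ l ∈ Finset.range (k + 1), binomMass n p l

lemma eval_bernsteinPolynomial (n k : ℕ) (p : ℝ) :
    (bernsteinPolynomial ℝ n k).eval p = binomMass n p k := by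
  simp [bernsteinPolynomial, binomMass]

lemma binomMass_nonneg (hp : p ∈ Icc 0 1) (n k : ℕ) : 0 ≤ binomMass n p k := by
  have hp₀ : 0 ≤ p := hp.1
  have hp₁ : 0 ≤ 1 - p := sub_nonneg.2 hp.2
  unfold binomMass
  positivity

lemma binomMass_pos (hp : p ∈ Ioo 0 1) (hk : k ≤ n) : 0 < binomMass n p k := by
  have hp₀ : 0 < p := hp.1
  have hp₁ : 0 < 1 - p := sub_pos.2 hp.2
  have := Nat.choose_pos hk
  unfold binomMass
  positivity

lemma binomMass_eq_zero_of_lt (p : ℝ) (hk : n < k) : binomMass n p k = 0 := by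
  simp [binomMass, Nat.choose_eq_zero_of_lt hk]

lemma binomMass_one_sub (p : ℝ) (hk : k ≤ n) : binomMass n (1 - p) (n - k) = binomMass n p k := by
  unfold binomMass
  rw [Nat.choose_symm hk, Nat.sub_sub_self hk]
  ring

lemma sum_binomMass (n : ℕ) (p : ℝ) : ∑ k ∈ Finset.range (n + 1), binomMass n p k = 1 := by
  simp_rw [← eval_bernsteinPolynomial, ← Polynomial.eval_finsetSum, bernsteinPolynomial.sum,
    Polynomial.eval_one]

lemma continuous_binomMass (n k : ℕ) : Continuous fun p ↦ binomMass n p k := by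
  unfold binomMass
  fun_prop

lemma hasDerivAt_binomMass_succ (n k : ℕ) (p : ℝ) :
    HasDerivAt (fun p ↦ binomMass (n + 1) p (k + 1))
      ((n + 1) * (binomMass n p k - binomMass n p (k + 1))) p := by
  have h := (bernsteinPolynomial ℝ (n + 1) (k + 1)).hasDerivAt p
  rw [bernsteinPolynomial.derivative_succ] at h
  simpa [eval_bernsteinPolynomial] using h

lemma succ_mul_one_sub_mul_binomMass_succ (n k : ℕ) (p : ℝ) :
    (k + 1) * (1 - p) * binomMass n p (k + 1) = (n - k) * p * binomMass n p k := by
  rcases lt_trichotomy n k with h | rfl | h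
  · simp [binomMass_eq_zero_of_lt p h, binomMass_eq_zero_of_lt p (h.trans k.lt_succ_self)]
  · simp [binomMass_eq_zero_of_lt p n.lt_succ_self]
  · have hc : (n.choose (k + 1) : ℝ) * (k + 1) = n.choose k * (n - k) := by
      have := Nat.choose_succ_right_eq n k
      rw [← Nat.cast_sub h.le]
      exact_mod_cast this
    have e : n - k = n - (k + 1) + 1 := by omega
    unfold binomMass
    rw [e, pow_succ, pow_succ]
    linear_combination ((1 - p) * (p ^ k * p) * (1 - p) ^ (n - (k + 1))) * hc

lemma mul_binomMass (hk : k ≤ n) (p : ℝ) :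
    p * binomMass n p k = (k + 1) / (n + 1) * binomMass (n + 1) p (k + 1) := by
  have h : ((n + 1).choose (k + 1) : ℝ) * (k + 1) = (n + 1) * n.choose k := by
    exact_mod_cast (Nat.add_one_mul_choose_eq n k).symm
  unfold binomMass
  rw [show n + 1 - (k + 1) = n - k by omega]
  field_simp
  linear_combination (-(p ^ (k + 1) * (1 - p) ^ (n - k))) * h

lemma sum_binomMass_mul_id (n : ℕ) (p : ℝ) :
    ∑ k ∈ Finset.range (n + 1), binomMass n p k * k = n * p := by
  have h := congrArg (Polynomial.eval p) (bernsteinPolynomial.sum_smul ℝ n)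
  simpa [Polynomial.eval_finsetSum, eval_bernsteinPolynomial, mul_comm] using h

lemma sum_binomMass_mul_pow (n : ℕ) (p a : ℝ) :
    ∑ k ∈ Finset.range (n + 1), binomMass n p k * a ^ k = (1 - p + p * a) ^ n := by
  rw [add_comm (1 - p), add_pow]
  refine Finset.sum_congr rfl fun k _ ↦ ?_
  unfold binomMass
  ring

lemma upperTail_zero (n : ℕ) (p : ℝ) : upperTail n p 0 = 1 := by
  rw [← sum_binomMass n p, upperTail, Finset.range_eq_Ico]
  rfl

lemma upperTail_eq_zero_of_lt (p : ℝ) (hk : n < k) : upperTail n p k = 0 := by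
  rw [upperTail, Finset.Icc_eq_empty (by omega), Finset.sum_empty]

lemma upperTail_eq_add (n : ℕ) (p : ℝ) (k : ℕ) :
    upperTail n p k = binomMass n p k + upperTail n p (k + 1) := by
  rcases le_or_gt k n with hk | hk
  · unfold upperTail
    rw [← Finset.add_sum_Ioc_eq_sum_Icc hk, ← Finset.Icc_add_one_left_eq_Ioc]
  · simp [upperTail_eq_zero_of_lt p hk, upperTail_eq_zero_of_lt p (hk.trans k.lt_succ_self),
      binomMass_eq_zero_of_lt p hk]

lemma upperTail_at_zero (n k : ℕ) : upperTail n 0 (k + 1) = 0 := by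
  refine Finset.sum_eq_zero fun l hl ↦ ?_
  have : l ≠ 0 := by have := (Finset.mem_Icc.1 hl).1; omega
  simp [binomMass, this]

lemma upperTail_at_one (hk : k ≤ n) : upperTail n 1 k = 1 := by
  rw [upperTail, Finset.sum_eq_single_of_mem n (Finset.mem_Icc.2 ⟨hk, le_rfl⟩)]
  · simp [binomMass]
  · intro l hl hln
    have : n - l ≠ 0 := by have := (Finset.mem_Icc.1 hl).2; omega
    simp [binomMass, this]

lemma upperTail_succ_add_lowerTail (p : ℝ) (hk : k ≤ n) :
    upperTail n p (k + 1) + lowerTail n p k = 1 := by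
  rw [← sum_binomMass n p, upperTail, lowerTail, add_comm,
    ← Finset.sum_range_add_sum_Ico _ (show k + 1 ≤ n + 1 by omega)]
  rfl

lemma lowerTail_eq_one_sub (p : ℝ) (hk : k ≤ n) : lowerTail n p k = 1 - upperTail n p (k + 1) :=
  eq_sub_of_add_eq' (upperTail_succ_add_lowerTail p hk)

lemma lowerTail_self (n : ℕ) (p : ℝ) : lowerTail n p n = 1 := sum_binomMass n p

lemma upperTail_one_sub (p : ℝ) (hk : k ≤ n) :
    upperTail n (1 - p) (n - k) = lowerTail n p k := by
  unfold upperTail lowerTail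
  refine Finset.sum_nbij' (n - ·) (n - ·) ?_ ?_ ?_ ?_ fun l hl ↦ ?_
  any_goals intro l hl; simp only [Finset.mem_Icc, Finset.mem_range] at hl ⊢; omega
  have hl' : l ≤ n := (Finset.mem_Icc.1 hl).2
  rw [← binomMass_one_sub p (Nat.sub_le n l), Nat.sub_sub_self hl']

lemma lowerTail_one_sub (p : ℝ) (hk : k ≤ n) :
    lowerTail n (1 - p) (n - k) = upperTail n p k := by
  rw [← upperTail_one_sub _ (Nat.sub_le n k), sub_sub_cancel, Nat.sub_sub_self hk]

lemma upperTail_anti (hp : p ∈ Icc 0 1) (hkl : k ≤ l) : upperTail n p l ≤ upperTail n p k :=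
  Finset.sum_le_sum_of_subset_of_nonneg (Finset.Icc_subset_Icc_left hkl)
    fun i _ _ ↦ binomMass_nonneg hp n i

lemma lowerTail_mono (hp : p ∈ Icc 0 1) (hkl : k ≤ l) : lowerTail n p k ≤ lowerTail n p l :=
  Finset.sum_le_sum_of_subset_of_nonneg (Finset.range_mono (by omega))
    fun i _ _ ↦ binomMass_nonneg hp n i

lemma upperTail_nonneg (hp : p ∈ Icc 0 1) (n k : ℕ) : 0 ≤ upperTail n p k :=
  Finset.sum_nonneg fun i _ ↦ binomMass_nonneg hp n i

lemma continuous_upperTail (n k : ℕ) : Continuous fun p ↦ upperTail n p k :=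
  continuous_finsetSum _ fun l _ ↦ continuous_binomMass n l

lemma hasDerivAt_upperTail_succ (hk : k ≤ n) (p : ℝ) :
    HasDerivAt (fun p ↦ upperTail (n + 1) p (k + 1)) ((n + 1) * binomMass n p k) p := by
  induction hk using Nat.decreasingInduction with
  | self =>
    have h := hasDerivAt_binomMass_succ n n p
    rw [binomMass_eq_zero_of_lt p n.lt_succ_self, sub_zero] at h
    convert h using 2
    simp [upperTail]
  | of_succ k _ ih =>
    have hsplit : (fun p ↦ upperTail (n + 1) p (k + 1)) =
        fun p ↦ binomMass (n + 1) p (k + 1) + upperTail (n + 1) p (k + 1 + 1) :=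
      funext fun q ↦ upperTail_eq_add _ q _
    rw [hsplit]
    exact ((hasDerivAt_binomMass_succ n k p).add ih).congr_deriv (by ring)

lemma integral_binomMass_eq_upperTail (hk : k ≤ n) (x : ℝ) :
    ∫ p in (0 : ℝ)..x, (n + 1) * binomMass n p k = upperTail (n + 1) x (k + 1) := by
  rw [intervalIntegral.integral_eq_sub_of_hasDerivAt
    (fun p _ ↦ hasDerivAt_upperTail_succ hk p), upperTail_at_zero, sub_zero]
  exact ((continuous_binomMass n k).const_mul _).intervalIntegrable _ _

lemma integral_binomMass (hk : k ≤ n) : ∫ p in (0 : ℝ)..1, binomMass n p k = 1 / (n + 1) := by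
  have h := integral_binomMass_eq_upperTail hk 1
  rw [intervalIntegral.integral_const_mul, upperTail_at_one (by omega)] at h
  rwa [eq_div_iff (by positivity), mul_comm]

lemma integral_mul_binomMass (hk : k ≤ n) :
    ∫ p in (0 : ℝ)..1, p * binomMass n p k = (k + 1) / ((n + 1) * (n + 2)) := by
  simp_rw [mul_binomMass hk]
  rw [intervalIntegral.integral_const_mul, integral_binomMass (by omega)]
  push_cast
  field_simp
  ring

lemma integral_sq_mul_binomMass (hk : k ≤ n) :
    ∫ p in (0 : ℝ)..1, p ^ 2 * binomMass n p k
      = (k + 1) * (k + 2) / ((n + 1) * (n + 2) * (n + 3)) := by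
  simp_rw [pow_two, mul_assoc, mul_binomMass hk, mul_left_comm _ ((k + 1 : ℝ) / (n + 1))]
  rw [intervalIntegral.integral_const_mul, integral_mul_binomMass (by omega)]
  push_cast
  field_simp
  ring

lemma upperTail_mono_param (n k : ℕ) (hp : 0 ≤ p) (hpq : p ≤ q) (hq : q ≤ 1) :
    upperTail n p k ≤ upperTail n q k := by
  rcases lt_or_ge n k with hnk | hkn
  · rw [upperTail_eq_zero_of_lt p hnk, upperTail_eq_zero_of_lt q hnk]
  obtain _ | k := k
  · rw [upperTail_zero, upperTail_zero]
  obtain ⟨n, rfl⟩ := Nat.exists_eq_add_of_lt hkn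
  rw [show k + n + 1 = (k + n) + 1 from rfl, ← integral_binomMass_eq_upperTail (by omega),
    ← integral_binomMass_eq_upperTail (by omega)]
  refine intervalIntegral.integral_mono_interval le_rfl hp hpq ?_
    (((continuous_binomMass _ k).const_mul _).intervalIntegrable _ _)
  filter_upwards [ae_restrict_mem measurableSet_Ioc] with r hr
  have := binomMass_nonneg ⟨hr.1.le, hr.2.trans hq⟩ (k + n) k
  positivity

lemma lowerTail_anti_param (hk : k ≤ n) (hp : 0 ≤ p) (hpq : p ≤ q) (hq : q ≤ 1) :
    lowerTail n q k ≤ lowerTail n p k := by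
  rw [lowerTail_eq_one_sub q hk, lowerTail_eq_one_sub p hk]
  exact sub_le_sub_left (upperTail_mono_param n (k + 1) hp hpq hq) 1

end BinomialTails

/-! ### Likelihood ratios and tail estimates -/

section LikelihoodRatios

variable {n k l : ℕ} {t z R : ℝ}

/-- The standard deviation of the binomial law with parameters `n` and `t`. The square root is
`0` unless `0 < n` and `0 < t < 1`, so positivity of `stdDev n t` encodes nondegeneracy. -/
def stdDev (n : ℕ) (t : ℝ) : ℝ := √(n * t * (1 - t))

/-- The standardized value of a count `k` under the binomial law with parameters `n` and `t`. -/
def zScore (n : ℕ) (t : ℝ) (k : ℕ) : ℝ := (k - n * t) / stdDev n t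

/-- The likelihood ratio at `k` of the binomial law whose mean is shifted by `z` standard
deviations, against the binomial law with parameters `n` and `t`. -/
def likeRatio (n : ℕ) (t z : ℝ) (k : ℕ) : ℝ :=
  (1 + z * (1 - t) / stdDev n t) ^ k * (1 - z * t / stdDev n t) ^ (n - k)

lemma mem_Ioo_of_stdDev_pos (h : 0 < stdDev n t) : t ∈ Ioo (0 : ℝ) 1 := by
  have h' : 0 < n * t * (1 - t) := Real.sqrt_pos.1 h
  have hn : (0 : ℝ) ≤ n := n.cast_nonneg
  have : 0 < t * (1 - t) := pos_of_mul_pos_right (by rwa [← mul_assoc]) hn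
  constructor <;> nlinarith

lemma mem_Icc_of_stdDev_pos (h : 0 < stdDev n t) : t ∈ Icc (0 : ℝ) 1 :=
  Ioo_subset_Icc_self (mem_Ioo_of_stdDev_pos h)

lemma pos_of_stdDev_pos (h : 0 < stdDev n t) : 0 < n := by
  rcases n.eq_zero_or_pos with rfl | hn
  · simp [stdDev] at h
  · exact hn

lemma stdDev_sq (h : 0 < stdDev n t) : stdDev n t ^ 2 = n * t * (1 - t) :=
  Real.sq_sqrt (Real.sqrt_pos.1 h).le

lemma stdDev_one_sub (n : ℕ) (t : ℝ) : stdDev n (1 - t) = stdDev n t := by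
  unfold stdDev
  congr 1
  ring

lemma zScore_one_sub (t : ℝ) (hk : k ≤ n) : zScore n (1 - t) (n - k) = -zScore n t k := by
  rw [zScore, zScore, stdDev_one_sub, Nat.cast_sub hk]
  ring

lemma likeRatio_one_sub (t z : ℝ) (hk : k ≤ n) :
    likeRatio n (1 - t) z (n - k) = likeRatio n t (-z) k := by
  rw [likeRatio, likeRatio, stdDev_one_sub, Nat.sub_sub_self hk]
  ring_nf

lemma count_eq_mean_add (h : 0 < stdDev n t) (k : ℕ) :
    (k : ℝ) = n * t + zScore n t k * stdDev n t := by
  rw [zScore, div_mul_cancel₀ _ h.ne']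
  ring

lemma zScore_le_zScore (h : 0 < stdDev n t) : zScore n t k ≤ zScore n t l ↔ k ≤ l := by
  rw [zScore, zScore, div_le_div_iff_of_pos_right h, sub_le_sub_iff_right, Nat.cast_le]

lemma continuous_likeRatio (n : ℕ) (t : ℝ) (k : ℕ) : Continuous fun z ↦ likeRatio n t z k := by
  unfold likeRatio
  fun_prop

lemma binomMass_mul_likeRatio (h : 0 < stdDev n t) (z : ℝ) (k : ℕ) :
    binomMass n t k * likeRatio n t z k = binomMass n (t + z * stdDev n t / n) k := by
  have hn := pos_of_stdDev_pos h
  have hs := stdDev_sq h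
  have hup : t + z * stdDev n t / n = t * (1 + z * (1 - t) / stdDev n t) := by
    field_simp
    linear_combination z * hs
  have hdown : 1 - (t + z * stdDev n t / n) = (1 - t) * (1 - z * t / stdDev n t) := by
    field_simp
    linear_combination (-z) * hs
  unfold binomMass likeRatio
  rw [hdown, hup, mul_pow, mul_pow]
  ring

lemma sum_binomMass_mul_likeRatio (h : 0 < stdDev n t) (z : ℝ) :
    ∑ k ∈ Finset.range (n + 1), binomMass n t k * likeRatio n t z k = 1 := by
  simp_rw [binomMass_mul_likeRatio h, sum_binomMass]

lemma one_add_tilt_nonneg (h : 0 < stdDev n t) (hz : |z| ≤ stdDev n t) :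
    0 ≤ 1 + z * (1 - t) / stdDev n t := by
  obtain ⟨ht₀, ht₁⟩ := mem_Ioo_of_stdDev_pos h
  have : -1 ≤ z * (1 - t) / stdDev n t := by
    rw [le_div_iff₀ h]
    nlinarith [(abs_le.1 hz).1]
  linarith

lemma one_sub_tilt_nonneg (h : 0 < stdDev n t) (hz : |z| ≤ stdDev n t) :
    0 ≤ 1 - z * t / stdDev n t := by
  obtain ⟨ht₀, ht₁⟩ := mem_Ioo_of_stdDev_pos h
  rw [sub_nonneg, div_le_one h]
  nlinarith [(abs_le.1 hz).2]

lemma likeRatio_nonneg (h : 0 < stdDev n t) (hz : |z| ≤ stdDev n t) (k : ℕ) :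
    0 ≤ likeRatio n t z k :=
  mul_nonneg (pow_nonneg (one_add_tilt_nonneg h hz) _) (pow_nonneg (one_sub_tilt_nonneg h hz) _)

lemma likeRatio_mono (h : 0 < stdDev n t) (hz₀ : 0 ≤ z) (hz : z ≤ stdDev n t) (hkl : k ≤ l) :
    likeRatio n t z k ≤ likeRatio n t z l := by
  obtain ⟨ht₀, ht₁⟩ := mem_Ioo_of_stdDev_pos h
  have : 0 < 1 - t := sub_pos.2 ht₁
  have hup : 1 ≤ 1 + z * (1 - t) / stdDev n t := le_add_of_nonneg_right (by positivity)
  have hdown : 1 - z * t / stdDev n t ≤ 1 := sub_le_self _ (by positivity)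
  have hdown₀ := one_sub_tilt_nonneg h ((abs_of_nonneg hz₀).trans_le hz)
  unfold likeRatio
  gcongr ?_ * ?_
  · exact pow_le_pow_right₀ hup hkl
  · exact pow_le_pow_of_le_one hdown₀ hdown (by omega)

lemma upperTail_mul_likeRatio_le_one (h : 0 < stdDev n t) (hz₀ : 0 ≤ z) (hz : z ≤ stdDev n t)
    (k : ℕ) : upperTail n t k * likeRatio n t z k ≤ 1 := by
  have ht := mem_Icc_of_stdDev_pos h
  have hz' : |z| ≤ stdDev n t := (abs_of_nonneg hz₀).trans_le hz
  calc upperTail n t k * likeRatio n t z k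
      = ∑ l ∈ Finset.Icc k n, binomMass n t l * likeRatio n t z k := by
        rw [upperTail, Finset.sum_mul]
    _ ≤ ∑ l ∈ Finset.Icc k n, binomMass n t l * likeRatio n t z l :=
        Finset.sum_le_sum fun l hl ↦ mul_le_mul_of_nonneg_left
          (likeRatio_mono h hz₀ hz (Finset.mem_Icc.1 hl).1) (binomMass_nonneg ht n l)
    _ ≤ ∑ l ∈ Finset.range (n + 1), binomMass n t l * likeRatio n t z l :=
        Finset.sum_le_sum_of_subset_of_nonneg
          (fun l hl ↦ Finset.mem_range_succ_iff.2 (Finset.mem_Icc.1 hl).2)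
          fun l _ _ ↦ mul_nonneg (binomMass_nonneg ht n l) (likeRatio_nonneg h hz' l)
    _ = 1 := sum_binomMass_mul_likeRatio h z

lemma abs_log_one_add_sub_le {a : ℝ} (ha : |a| ≤ 1 / 2) :
    |Real.log (1 + a) - (a - a ^ 2 / 2)| ≤ 2 * |a| ^ 3 := by
  have h := Real.abs_log_sub_add_sum_range_le (x := -a) (by rw [abs_neg]; linarith) 2
  have hsum : ∑ i ∈ Finset.range 2, (-a) ^ (i + 1) / ((i : ℝ) + 1) + Real.log (1 - -a)
      = Real.log (1 + a) - (a - a ^ 2 / 2) := by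
    simp [Finset.sum_range_succ]
    ring
  rw [hsum, abs_neg] at h
  refine h.trans ?_
  rw [div_le_iff₀ (by linarith)]
  norm_num
  nlinarith [pow_nonneg (abs_nonneg a) 3]

lemma tilt_first_moment (h : 0 < stdDev n t) (z : ℝ) (k : ℕ) :
    k * (z * (1 - t) / stdDev n t) - (n - k) * (z * t / stdDev n t) = z * zScore n t k := by
  unfold zScore
  field_simp
  ring

lemma tilt_second_moment (h : 0 < stdDev n t) (z : ℝ) (k : ℕ) :
    k * (z * (1 - t) / stdDev n t) ^ 2 + (n - k) * (z * t / stdDev n t) ^ 2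
      = z ^ 2 + z ^ 2 * zScore n t k * (1 - 2 * t) / stdDev n t := by
  have hs := stdDev_sq h
  rw [count_eq_mean_add h k]
  field_simp
  linear_combination (-z ^ 2) * hs

lemma tilt_third_moment_le (h : 0 < stdDev n t) (hz : |z| ≤ R) (hy : |zScore n t k| ≤ R)
    (hR : 2 * R ≤ stdDev n t) :
    k * |z * (1 - t) / stdDev n t| ^ 3 + (n - k) * |z * t / stdDev n t| ^ 3
      ≤ R ^ 3 * (3 / 2 / stdDev n t) := by
  obtain ⟨ht₀, ht₁⟩ := mem_Ioo_of_stdDev_pos h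
  have ht₁' : 0 < 1 - t := sub_pos.2 ht₁
  have hs := stdDev_sq h
  have hR₀ : 0 ≤ R := (abs_nonneg z).trans hz
  have hexact : k * |z * (1 - t) / stdDev n t| ^ 3 + (n - k) * |z * t / stdDev n t| ^ 3
      = |z| ^ 3 * (((1 - t) ^ 2 + t ^ 2) / stdDev n t
        + zScore n t k * ((1 - t) ^ 3 - t ^ 3) / stdDev n t ^ 2) := by
    rw [abs_div, abs_div, abs_mul, abs_mul, abs_of_pos ht₀, abs_of_pos ht₁', abs_of_pos h,
      count_eq_mean_add h k]
    field_simp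
    linear_combination (-(|z| ^ 3 * (1 - 2 * t + 2 * t ^ 2))) * hs
  have hsquares : (1 - t) ^ 2 + t ^ 2 ≤ 1 := by nlinarith
  have hcubes : zScore n t k * ((1 - t) ^ 3 - t ^ 3) ≤ stdDev n t / 2 := by
    have hdiff : |(1 - t) ^ 3 - t ^ 3| ≤ 1 := by
      have h₁ : t ^ 3 ≤ 1 := pow_le_one₀ ht₀.le ht₁.le
      have h₂ : (1 - t) ^ 3 ≤ 1 := pow_le_one₀ ht₁'.le (by linarith)
      have h₃ : 0 ≤ t ^ 3 := by positivity
      have h₄ : 0 ≤ (1 - t) ^ 3 := by positivity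
      rw [abs_le]
      constructor <;> linarith
    calc zScore n t k * ((1 - t) ^ 3 - t ^ 3)
        ≤ |zScore n t k| * |(1 - t) ^ 3 - t ^ 3| := (le_abs_self _).trans_eq (abs_mul _ _)
      _ ≤ R * 1 := by gcongr
      _ ≤ stdDev n t / 2 := by linarith
  rw [hexact]
  calc _ ≤ |z| ^ 3 * (1 / stdDev n t + stdDev n t / 2 / stdDev n t ^ 2) := by gcongr
    _ = |z| ^ 3 * (3 / 2 / stdDev n t) := by
      field_simp
      ring
    _ ≤ R ^ 3 * (3 / 2 / stdDev n t) := by gcongr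

lemma tilt_skewness_le (h : 0 < stdDev n t) (hz : |z| ≤ R) (hy : |zScore n t k| ≤ R) :
    |z ^ 2 * zScore n t k * (1 - 2 * t) / stdDev n t / 2| ≤ R ^ 3 / stdDev n t / 2 := by
  obtain ⟨ht₀, ht₁⟩ := mem_Ioo_of_stdDev_pos h
  have hR₀ : 0 ≤ R := (abs_nonneg z).trans hz
  have ht : |1 - 2 * t| ≤ 1 := by
    rw [abs_le]
    constructor <;> linarith
  rw [abs_div, abs_div, abs_mul, abs_mul, abs_of_pos h, abs_pow,
    abs_of_pos (show (0 : ℝ) < 2 by norm_num)]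
  gcongr
  calc |z| ^ 2 * |zScore n t k| * |1 - 2 * t| ≤ R ^ 2 * R * 1 := by gcongr
    _ = R ^ 3 := by ring

lemma abs_tilt_le_half (h : 0 < stdDev n t) (hz : 2 * |z| ≤ stdDev n t) :
    |z * (1 - t) / stdDev n t| ≤ 1 / 2 ∧ |z * t / stdDev n t| ≤ 1 / 2 := by
  obtain ⟨ht₀, ht₁⟩ := mem_Ioo_of_stdDev_pos h
  have := abs_nonneg z
  rw [abs_div, abs_div, abs_mul, abs_mul, abs_of_pos ht₀, abs_of_pos (sub_pos.2 ht₁),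
    abs_of_pos h, div_le_iff₀ h, div_le_iff₀ h]
  constructor <;> nlinarith

lemma likeRatio_pos (h : 0 < stdDev n t) (hz : 2 * |z| ≤ stdDev n t) (k : ℕ) :
    0 < likeRatio n t z k := by
  obtain ⟨ha, hb⟩ := abs_tilt_le_half h hz
  have hup : 0 < 1 + z * (1 - t) / stdDev n t := by linarith [(abs_le.1 ha).1]
  have hdown : 0 < 1 - z * t / stdDev n t := by linarith [(abs_le.1 hb).2]
  exact mul_pos (pow_pos hup _) (pow_pos hdown _)

lemma log_likeRatio (h : 0 < stdDev n t) (hz : 2 * |z| ≤ stdDev n t) (hk : k ≤ n) :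
    Real.log (likeRatio n t z k) = k * Real.log (1 + z * (1 - t) / stdDev n t)
      + (n - k) * Real.log (1 + -(z * t / stdDev n t)) := by
  obtain ⟨ha, hb⟩ := abs_tilt_le_half h hz
  have hup : 1 + z * (1 - t) / stdDev n t ≠ 0 := by linarith [(abs_le.1 ha).1]
  have hdown : 1 - z * t / stdDev n t ≠ 0 := by linarith [(abs_le.1 hb).2]
  rw [likeRatio, Real.log_mul (pow_ne_zero _ hup) (pow_ne_zero _ hdown), Real.log_pow,
    Real.log_pow, Nat.cast_sub hk, ← sub_eq_add_neg]

lemma abs_log_likeRatio_sub_le (h : 0 < stdDev n t) (hk : k ≤ n) (hz : |z| ≤ R)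
    (hy : |zScore n t k| ≤ R) (hR : 2 * R ≤ stdDev n t) :
    |Real.log (likeRatio n t z k) - (z * zScore n t k - z ^ 2 / 2)| ≤ 4 * R ^ 3 / stdDev n t := by
  have hz₂ : 2 * |z| ≤ stdDev n t := by linarith
  obtain ⟨ha, hb⟩ := abs_tilt_le_half h hz₂
  have hnk : (0 : ℝ) ≤ n - k := sub_nonneg.2 (Nat.cast_le.2 hk)
  have hR₀ : 0 ≤ R := (abs_nonneg z).trans hz
  have hm₁ := tilt_first_moment h z k
  have hm₂ := tilt_second_moment h z k
  have hm₃ := tilt_third_moment_le h hz hy hR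
  have hrest := tilt_skewness_le h hz hy
  have hlog := log_likeRatio h hz₂ hk
  set a := z * (1 - t) / stdDev n t
  set b := z * t / stdDev n t
  set s := stdDev n t
  set y := zScore n t k
  calc |Real.log (likeRatio n t z k) - (z * y - z ^ 2 / 2)|
      = |(k : ℝ) * (Real.log (1 + a) - (a - a ^ 2 / 2))
          + (n - k) * (Real.log (1 + -b) - (-b - (-b) ^ 2 / 2))
          - z ^ 2 * y * (1 - 2 * t) / s / 2| := by
        congr 1
        linear_combination hlog + hm₁ - (1 / 2 : ℝ) * hm₂
    _ ≤ (k : ℝ) * |Real.log (1 + a) - (a - a ^ 2 / 2)|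
          + (n - k) * |Real.log (1 + -b) - (-b - (-b) ^ 2 / 2)|
          + |z ^ 2 * y * (1 - 2 * t) / s / 2| := by
        refine (abs_sub _ _).trans (add_le_add_left ((abs_add_le _ _).trans_eq ?_) _)
        rw [abs_mul, abs_mul, abs_of_nonneg hnk, Nat.abs_cast]
    _ ≤ (k : ℝ) * (2 * |a| ^ 3) + (n - k) * (2 * |-b| ^ 3) + R ^ 3 / s / 2 := by
        gcongr
        · exact abs_log_one_add_sub_le ha
        · exact abs_log_one_add_sub_le (by rwa [abs_neg])
    _ = 2 * (k * |a| ^ 3 + (n - k) * |b| ^ 3) + R ^ 3 / s / 2 := by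
        rw [abs_neg]
        ring
    _ ≤ 2 * (R ^ 3 * (3 / 2 / s)) + R ^ 3 / s / 2 := by gcongr
    _ ≤ 4 * R ^ 3 / s := by
        have : 0 ≤ R ^ 3 / s := by positivity
        linear_combination this / 2

-- De Moivre's telescoping identity for the truncated first moment.
lemma sum_Icc_sub_mean_mul_binomMass (t : ℝ) (hk : k ≤ n + 1) :
    ∑ l ∈ Finset.Icc k n, (l - n * t) * binomMass n t l = k * (1 - t) * binomMass n t k := by
  induction hk using Nat.decreasingInduction with
  | self =>
    rw [Finset.Icc_eq_empty (by omega), binomMass_eq_zero_of_lt t n.lt_succ_self, mul_zero,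
      Finset.sum_empty]
  | of_succ k hk ih =>
    rw [← Finset.add_sum_Ioc_eq_sum_Icc (by omega : k ≤ n), ← Finset.Icc_add_one_left_eq_Ioc, ih]
    push_cast
    linear_combination succ_mul_one_sub_mul_binomMass_succ n k t

lemma sum_Icc_sub_mean_sq_mul_binomMass (t : ℝ) (hk : k ≤ n + 1) :
    ∑ l ∈ Finset.Icc k n, (l - n * t) ^ 2 * binomMass n t l
      = (k - n * t) * (k * (1 - t) * binomMass n t k) + n * t * (1 - t) * upperTail n t (k + 1)
        + (1 - t) * ((k + 1) * (1 - t) * binomMass n t (k + 1)) := by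
  induction hk using Nat.decreasingInduction with
  | self =>
    rw [Finset.Icc_eq_empty (by omega), binomMass_eq_zero_of_lt t n.lt_succ_self,
      binomMass_eq_zero_of_lt t (by omega), upperTail_eq_zero_of_lt t (by omega)]
    simp
  | of_succ k hk ih =>
    rw [← Finset.add_sum_Ioc_eq_sum_Icc (by omega : k ≤ n), ← Finset.Icc_add_one_left_eq_Ioc, ih,
      upperTail_eq_add n t (k + 1)]
    have h₁ := succ_mul_one_sub_mul_binomMass_succ n k t
    have h₂ := succ_mul_one_sub_mul_binomMass_succ n (k + 1) t
    push_cast at h₂ ⊢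
    linear_combination (k - n * t) * h₁ + (1 - t) * h₂

lemma upperTail_mul_le_binomMass (h : 0 < stdDev n t) (hk : k ≤ n) :
    upperTail n t k * (zScore n t k * stdDev n t) ≤ k * (1 - t) * binomMass n t k := by
  rw [← sum_Icc_sub_mean_mul_binomMass t (by omega), upperTail, Finset.sum_mul]
  refine Finset.sum_le_sum fun l hl ↦ ?_
  have hkl : (k : ℝ) ≤ l := Nat.cast_le.2 (Finset.mem_Icc.1 hl).1
  rw [mul_comm]
  gcongr
  · exact binomMass_nonneg (mem_Icc_of_stdDev_pos h) n l
  · linarith [count_eq_mean_add h k]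

lemma sum_Icc_sub_mean_sq_mul_binomMass_le (h : 0 < stdDev n t) (hk : k ≤ n)
    (hy : 0 < zScore n t k) :
    ∑ l ∈ Finset.Icc k n, (l - n * t) ^ 2 * binomMass n t l
      ≤ k * (1 - t) * binomMass n t k
        * (zScore n t k * stdDev n t + stdDev n t / zScore n t k + 1) := by
  obtain ⟨ht₀, ht₁⟩ := mem_Ioo_of_stdDev_pos h
  have : 0 < 1 - t := sub_pos.2 ht₁
  have hmean := count_eq_mean_add h k
  have htail := upperTail_mul_le_binomMass h hk
  have hb := (binomMass_pos ⟨ht₀, ht₁⟩ hk).le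
  rw [sum_Icc_sub_mean_sq_mul_binomMass t (by omega), ← stdDev_sq h,
    show (k : ℝ) - n * t = zScore n t k * stdDev n t by linarith]
  have hratio : (k + 1) * (1 - t) * binomMass n t (k + 1) ≤ k * (1 - t) * binomMass n t k := by
    rw [succ_mul_one_sub_mul_binomMass_succ]
    have : n * t ≤ k := by rw [hmean]; nlinarith
    exact mul_le_mul_of_nonneg_right (by linarith) hb
  set H := k * (1 - t) * binomMass n t k
  set s := stdDev n t
  set y := zScore n t k
  have hys : 0 < y * s := by positivity
  have hvar : s ^ 2 * upperTail n t (k + 1) ≤ H * (s / y) :=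
    calc s ^ 2 * upperTail n t (k + 1) ≤ s ^ 2 * (H / (y * s)) := by
          gcongr
          rw [le_div_iff₀ hys]
          refine le_trans ?_ htail
          gcongr
          exact upperTail_anti ⟨ht₀.le, ht₁.le⟩ k.le_succ
      _ = H * (s / y) := by field_simp
  have hlast : (1 - t) * ((k + 1) * (1 - t) * binomMass n t (k + 1)) ≤ 1 * H := by
    have := binomMass_nonneg ⟨ht₀.le, ht₁.le⟩ n (k + 1)
    gcongr
    linarith
  linarith

lemma binomMass_le_upperTail_mul (h : 0 < stdDev n t) (hk : k ≤ n) (hy : 0 < zScore n t k) :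
    k * (1 - t) * binomMass n t k
      ≤ upperTail n t k * (zScore n t k * stdDev n t + stdDev n t / zScore n t k + 1) := by
  obtain ⟨ht₀, ht₁⟩ := mem_Ioo_of_stdDev_pos h
  have hk₀ : (0 : ℝ) < k := by
    rw [count_eq_mean_add h k]
    positivity
  have hH : 0 < k * (1 - t) * binomMass n t k :=
    mul_pos (mul_pos hk₀ (sub_pos.2 ht₁)) (binomMass_pos ⟨ht₀, ht₁⟩ hk)
  have hb := binomMass_nonneg (mem_Icc_of_stdDev_pos h) n
  have hcauchy : (k * (1 - t) * binomMass n t k) ^ 2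
      ≤ upperTail n t k * ∑ l ∈ Finset.Icc k n, (l - n * t) ^ 2 * binomMass n t l := by
    rw [← sum_Icc_sub_mean_mul_binomMass t (by omega)]
    exact Finset.sum_sq_le_sum_mul_sum_of_sq_le_mul _ (fun l _ ↦ hb l)
      (fun l _ ↦ mul_nonneg (sq_nonneg _) (hb l)) fun l _ ↦ le_of_eq (by ring)
  have hvar := sum_Icc_sub_mean_sq_mul_binomMass_le h hk hy
  have hF := upperTail_nonneg (mem_Icc_of_stdDev_pos h) n k
  refine le_of_mul_le_mul_left ?_ hH
  calc _ = (k * (1 - t) * binomMass n t k) ^ 2 := by ring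
    _ ≤ _ := hcauchy.trans (mul_le_mul_of_nonneg_left hvar hF)
    _ = _ := by ring

end LikelihoodRatios

/-! ### Mixtures of likelihood ratios -/

section Mixtures

variable {n k : ℕ} {t a b : ℝ}

lemma beta_variance_le {x y : ℝ} (hy : 0 < y) (hx₀ : 0 ≤ x) (hx : x ≤ y) :
    y ^ 2 * ((x + 1) * (x + 2) / ((y + 1) * (y + 2) * (y + 3)))
        - 2 * y * x * ((x + 1) / ((y + 1) * (y + 2))) + x ^ 2 * (1 / (y + 1))
      ≤ (x * (y - x) / y + 2) / (y + 1) := by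
  have : 0 ≤ x * (y - x) := mul_nonneg hx₀ (sub_nonneg.2 hx)
  have hsplit : y ^ 2 * ((x + 1) * (x + 2) / ((y + 1) * (y + 2) * (y + 3)))
        - 2 * y * x * ((x + 1) / ((y + 1) * (y + 2))) + x ^ 2 * (1 / (y + 1))
      = ((x * (y - x) + (y + 1)) * (y ^ 2 / ((y + 2) ^ 2 * (y + 3)))
          + ((y - 2 * x) / (y + 2)) ^ 2) / (y + 1) := by
    field_simp
    ring
  have hscale : y ^ 2 / ((y + 2) ^ 2 * (y + 3)) ≤ 1 / (y + 3) := by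
    rw [div_le_div_iff₀ (by positivity) (by positivity)]
    nlinarith [mul_pos hy hy]
  have hvariance : (x * (y - x) + (y + 1)) * (y ^ 2 / ((y + 2) ^ 2 * (y + 3)))
      ≤ x * (y - x) / y + 1 := calc
    _ ≤ (x * (y - x) + (y + 1)) * (1 / (y + 3)) := by gcongr
    _ = x * (y - x) / (y + 3) + (y + 1) / (y + 3) := by ring
    _ ≤ x * (y - x) / y + 1 := by
        gcongr
        · linarith
        · rw [div_le_one (by positivity)]
          linarith
  have hbias : ((y - 2 * x) / (y + 2)) ^ 2 ≤ 1 := by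
    rw [div_pow, div_le_one (by positivity)]
    exact sq_le_sq' (by linarith) (by linarith)
  rw [hsplit]
  refine div_le_div_of_nonneg_right ?_ (by positivity)
  linarith

lemma integral_sub_sq_mul_binomMass_le (hk : k ≤ n) :
    ∫ p in (0 : ℝ)..1, (n * p - k) ^ 2 * binomMass n p k
      ≤ ((k : ℝ) * (n - k) / n + 2) / (n + 1) := by
  have hc := continuous_binomMass n k
  have hexpand : ∀ p : ℝ, (n * p - k) ^ 2 * binomMass n p k
      = n ^ 2 * (p ^ 2 * binomMass n p k) - 2 * n * k * (p * binomMass n p k)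
        + k ^ 2 * binomMass n p k := fun p ↦ by ring
  simp_rw [hexpand]
  rw [intervalIntegral.integral_add, intervalIntegral.integral_sub,
    intervalIntegral.integral_const_mul, intervalIntegral.integral_const_mul,
    intervalIntegral.integral_const_mul, integral_binomMass hk, integral_mul_binomMass hk,
    integral_sq_mul_binomMass hk]
  · rcases n.eq_zero_or_pos with rfl | hn
    · obtain rfl : k = 0 := by omega
      norm_num
    · exact beta_variance_le (mod_cast hn) k.cast_nonneg (mod_cast hk)
  all_goals exact Continuous.intervalIntegrable (by fun_prop) _ _

lemma integral_le_integral_of_nonpos_outside {f g : ℝ → ℝ} (hf : Continuous f)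
    (hg : Continuous g) {c d : ℝ} (hca : c ≤ a) (hab : a ≤ b) (hbd : b ≤ d)
    (hleft : ∀ x ∈ Icc c a, f x ≤ 0) (hmid : ∀ x ∈ Icc a b, f x ≤ g x)
    (hright : ∀ x ∈ Icc b d, f x ≤ 0) : ∫ x in c..d, f x ≤ ∫ x in a..b, g x := by
  have hint : ∀ u v, IntervalIntegrable f volume u v := fun u v ↦ hf.intervalIntegrable u v
  have hsplit := intervalIntegral.integral_add_adjacent_intervals (hint c a) (hint a b)
  have hsplit' := intervalIntegral.integral_add_adjacent_intervals (hint c b) (hint b d)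
  have h₁ := intervalIntegral.integral_nonneg (μ := volume) hca fun x hx ↦ neg_nonneg.2 (hleft x hx)
  have h₂ := intervalIntegral.integral_mono_on hab (hint a b) (hg.intervalIntegrable a b) hmid
  have h₃ := intervalIntegral.integral_nonneg (μ := volume) hbd
    fun x hx ↦ neg_nonneg.2 (hright x hx)
  rw [intervalIntegral.integral_neg] at h₁ h₃
  linarith

-- Chebyshev's inequality for the Beta law with density `(n + 1) * binomMass n · k`.
lemma le_integral_binomMass_of_deviation (hk : k ≤ n) {r : ℝ} (hr : 0 < r) (ha : 0 ≤ a)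
    (hb : b ≤ 1) (hna : n * a = k - r) (hnb : n * b = k + r) :
    (1 - ((k : ℝ) * (n - k) / n + 2) / r ^ 2) / (n + 1) ≤ ∫ p in a..b, binomMass n p k := by
  have hc := continuous_binomMass n k
  have hn : (0 : ℝ) ≤ n := n.cast_nonneg
  have hab : a ≤ b := by nlinarith
  have houtside : ∀ p ∈ Icc (0 : ℝ) 1, r ≤ |n * p - k| →
      (1 - (n * p - k) ^ 2 / r ^ 2) * binomMass n p k ≤ 0 := fun p hp hdev ↦ by
    refine mul_nonpos_of_nonpos_of_nonneg ?_ (binomMass_nonneg hp n k)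
    rw [sub_nonpos, one_le_div (by positivity), ← sq_abs (n * p - k)]
    gcongr
  calc (1 - ((k : ℝ) * (n - k) / n + 2) / r ^ 2) / (n + 1)
      = 1 / (n + 1) - ((k : ℝ) * (n - k) / n + 2) / (n + 1) / r ^ 2 := by field_simp
    _ ≤ 1 / (n + 1) - (∫ p in (0 : ℝ)..1, (n * p - k) ^ 2 * binomMass n p k) / r ^ 2 := by
        gcongr
        exact integral_sub_sq_mul_binomMass_le hk
    _ = ∫ p in (0 : ℝ)..1, (1 - (n * p - k) ^ 2 / r ^ 2) * binomMass n p k := by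
        rw [← integral_binomMass hk, ← intervalIntegral.integral_div,
          ← intervalIntegral.integral_sub (hc.intervalIntegrable _ _)
            (Continuous.intervalIntegrable (by fun_prop) _ _)]
        exact intervalIntegral.integral_congr fun p _ ↦ by ring
    _ ≤ ∫ p in a..b, binomMass n p k := by
        refine integral_le_integral_of_nonpos_outside (by fun_prop) hc ha hab hb ?_ ?_ ?_
        · refine fun p hp ↦ houtside p ⟨hp.1, hp.2.trans (hab.trans hb)⟩ ?_
          have : n * p ≤ n * a := mul_le_mul_of_nonneg_left hp.2 hn
          exact le_abs.2 (Or.inr (by linarith))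
        · refine fun p hp ↦ mul_le_of_le_one_left
            (binomMass_nonneg ⟨ha.trans hp.1, hp.2.trans hb⟩ n k) ?_
          exact sub_le_self _ (by positivity)
        · refine fun p hp ↦ houtside p ⟨(ha.trans hab).trans hp.1, hp.2⟩ ?_
          have : n * b ≤ n * p := mul_le_mul_of_nonneg_left hp.1 hn
          exact le_abs.2 (Or.inl (by linarith))

/-- The mixture at `k` of the likelihood ratios with shifts `σ * exp v`, the parameter `v` being
spread over `[a, b]` with Lebesgue measure. The sign `σ = ±1` selects upward or downward shifts;
on the logarithmic scale the evolution of the uniform empirical process translates `[a, b]`. -/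
def mixLR (n : ℕ) (t σ a b : ℝ) (k : ℕ) : ℝ := ∫ v in a..b, likeRatio n t (σ * Real.exp v) k

lemma continuous_likeRatio_exp (n : ℕ) (t σ : ℝ) (k : ℕ) :
    Continuous fun v ↦ likeRatio n t (σ * Real.exp v) k :=
  (continuous_likeRatio n t k).comp (by fun_prop)

lemma intervalIntegrable_likeRatio_exp (n : ℕ) (t σ : ℝ) (k : ℕ) (a b : ℝ) :
    IntervalIntegrable (fun v ↦ likeRatio n t (σ * Real.exp v) k) volume a b :=
  (continuous_likeRatio_exp n t σ k).intervalIntegrable a b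

lemma mixLR_one_sub (t σ a b : ℝ) (hk : k ≤ n) :
    mixLR n (1 - t) σ a b (n - k) = mixLR n t (-σ) a b k := by
  simp only [mixLR, likeRatio_one_sub t _ hk, neg_mul]

lemma mixLR_mul_binomMass (h : 0 < stdDev n t) (a b : ℝ) (k : ℕ) :
    mixLR n t 1 a b k * binomMass n t k
      = ∫ v in a..b, binomMass n (t + Real.exp v * stdDev n t / n) k := by
  rw [mixLR, ← intervalIntegral.integral_mul_const]
  simp only [mul_comm _ (binomMass n t k), binomMass_mul_likeRatio h, one_mul]

lemma integral_binomMass_add_exp (n k : ℕ) (t c a b : ℝ) :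
    ∫ v in a..b, binomMass n (t + Real.exp v * c) k * (Real.exp v * c)
      = ∫ p in (t + Real.exp a * c)..(t + Real.exp b * c), binomMass n p k :=
  intervalIntegral.integral_comp_mul_deriv (f' := fun v ↦ Real.exp v * c)
    (fun v _ ↦ ((Real.hasDerivAt_exp v).mul_const c).const_add t) (by fun_prop)
    (continuous_binomMass n k)

lemma add_mul_stdDev_div_le_one (h : 0 < stdDev n t) {x : ℝ} (hx : x ≤ stdDev n t) :
    t + x * stdDev n t / n ≤ 1 := by
  obtain ⟨_, _⟩ := mem_Ioo_of_stdDev_pos h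
  have hn : (0 : ℝ) < n := mod_cast pos_of_stdDev_pos h
  have hs := stdDev_sq h
  have hle : x * stdDev n t ≤ n * (1 - t) := by
    nlinarith [mul_nonneg hn.le (sq_nonneg (1 - t))]
  have : x * stdDev n t / n ≤ 1 - t := by
    rw [div_le_iff₀ hn]
    linarith
  linarith

lemma add_exp_mul_mem_Icc (h : 0 < stdDev n t) (hb : Real.exp b ≤ stdDev n t) {v : ℝ}
    (hv : v ≤ b) : t + Real.exp v * stdDev n t / n ∈ Icc (0 : ℝ) 1 := by
  have ht := (mem_Ioo_of_stdDev_pos h).1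
  exact ⟨by positivity, add_mul_stdDev_div_le_one h ((Real.exp_le_exp.2 hv).trans hb)⟩

lemma integral_binomMass_le_exp_mul_mixLR (h : 0 < stdDev n t) (hab : a ≤ b)
    (hb : Real.exp b ≤ stdDev n t) (k : ℕ) :
    ∫ p in (t + Real.exp a * (stdDev n t / n))..(t + Real.exp b * (stdDev n t / n)),
        binomMass n p k
      ≤ mixLR n t 1 a b k * binomMass n t k * (Real.exp b * (stdDev n t / n)) := by
  have hc := continuous_binomMass n k
  rw [← integral_binomMass_add_exp, mixLR_mul_binomMass h, ← intervalIntegral.integral_mul_const]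
  simp only [← mul_div_assoc]
  refine intervalIntegral.integral_mono_on hab (Continuous.intervalIntegrable (by fun_prop) _ _)
    (Continuous.intervalIntegrable (by fun_prop) _ _) fun v hv ↦ ?_
  have := binomMass_nonneg (add_exp_mul_mem_Icc h hb hv.2) n k
  gcongr
  exact hv.2

lemma exp_mul_mixLR_le_integral_binomMass (h : 0 < stdDev n t) (hab : a ≤ b)
    (hb : Real.exp b ≤ stdDev n t) (k : ℕ) :
    mixLR n t 1 a b k * binomMass n t k * (Real.exp a * (stdDev n t / n))
      ≤ ∫ p in (t + Real.exp a * (stdDev n t / n))..(t + Real.exp b * (stdDev n t / n)),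
        binomMass n p k := by
  have hc := continuous_binomMass n k
  rw [← integral_binomMass_add_exp, mixLR_mul_binomMass h, ← intervalIntegral.integral_mul_const]
  simp only [← mul_div_assoc]
  refine intervalIntegral.integral_mono_on hab (Continuous.intervalIntegrable (by fun_prop) _ _)
    (Continuous.intervalIntegrable (by fun_prop) _ _) fun v hv ↦ ?_
  have := binomMass_nonneg (add_exp_mul_mem_Icc h hb hv.2) n k
  gcongr
  exact hv.1

lemma count_variance_le (h : 0 < stdDev n t) (hy : 0 < zScore n t k) :
    (k : ℝ) * (n - k) / n ≤ stdDev n t ^ 2 + zScore n t k * stdDev n t := by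
  have ht := (mem_Ioo_of_stdDev_pos h).1
  have hn : (0 : ℝ) < n := mod_cast pos_of_stdDev_pos h
  have hpos : 0 < n * (zScore n t k * stdDev n t) := by positivity
  rw [div_le_iff₀ hn, count_eq_mean_add h k, stdDev_sq h]
  nlinarith [sq_nonneg (zScore n t k * stdDev n t), mul_pos hpos ht]

lemma le_mixLR_mul_binomMass (h : 0 < stdDev n t) (hk : k ≤ n) {η : ℝ} (hη : 0 < η)
    (hy : 0 < zScore n t k) (ha : Real.exp a = (1 - η) * zScore n t k)
    (hb : Real.exp b = (1 + η) * zScore n t k) (hys : (1 + η) * zScore n t k ≤ stdDev n t) :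
    n / (n + 1) * (1 - (stdDev n t ^ 2 + zScore n t k * stdDev n t + 2)
        / (η * (zScore n t k * stdDev n t)) ^ 2) / (1 + η)
      ≤ mixLR n t 1 a b k * binomMass n t k * (zScore n t k * stdDev n t) := by
  have ht := (mem_Ioo_of_stdDev_pos h).1
  have hn : (0 : ℝ) < n := mod_cast pos_of_stdDev_pos h
  have hcount := count_eq_mean_add h k
  have hvar := count_variance_le h hy
  have hbs : Real.exp b ≤ stdDev n t := hb.trans_le hys
  have hab : a ≤ b := by
    rw [← Real.exp_le_exp, ha, hb]
    gcongr
    linarith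
  have hmix := integral_binomMass_le_exp_mul_mixLR h hab hbs k
  have htop : t + Real.exp b * (stdDev n t / n) ≤ 1 := by
    simpa only [mul_div_assoc] using add_mul_stdDev_div_le_one h hbs
  set s := stdDev n t
  set y := zScore n t k
  have hcheb := le_integral_binomMass_of_deviation hk (r := η * (y * s))
    (a := t + Real.exp a * (s / n)) (b := t + Real.exp b * (s / n)) (by positivity)
    (by positivity) htop (by rw [ha, hcount]; field_simp; ring)
    (by rw [hb, hcount]; field_simp; ring)
  rw [hb] at hmix hcheb
  calc n / (n + 1) * (1 - (s ^ 2 + y * s + 2) / (η * (y * s)) ^ 2) / (1 + η)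
      = (1 - (s ^ 2 + y * s + 2) / (η * (y * s)) ^ 2) / (n + 1) * (n / (1 + η)) := by ring
    _ ≤ (1 - ((k : ℝ) * (n - k) / n + 2) / (η * (y * s)) ^ 2) / (n + 1) * (n / (1 + η)) := by
        gcongr
    _ ≤ mixLR n t 1 a b k * binomMass n t k * ((1 + η) * y * (s / n)) * (n / (1 + η)) := by
        gcongr
        exact hcheb.trans hmix
    _ = mixLR n t 1 a b k * binomMass n t k * (y * s) := by field_simp

lemma mixLR_mul_binomMass_le (h : 0 < stdDev n t) (hk : k ≤ n) (hab : a ≤ b)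
    (hb : Real.exp b ≤ stdDev n t) :
    mixLR n t 1 a b k * binomMass n t k * stdDev n t ≤ Real.exp (-a) := by
  have ht := (mem_Ioo_of_stdDev_pos h).1
  have hn : (0 : ℝ) < n := mod_cast pos_of_stdDev_pos h
  have hc := continuous_binomMass n k
  have htotal : ∫ p in (t + Real.exp a * (stdDev n t / n))..(t + Real.exp b * (stdDev n t / n)),
      binomMass n p k ≤ 1 / (n + 1) := by
    rw [← integral_binomMass hk]
    refine intervalIntegral.integral_mono_interval (by positivity) (by gcongr) ?_ ?_
      (hc.intervalIntegrable _ _)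
    · simpa only [mul_div_assoc] using add_mul_stdDev_div_le_one h hb
    · filter_upwards [ae_restrict_mem measurableSet_Ioc] with p hp
      exact binomMass_nonneg (Ioc_subset_Icc_self hp) n k
  have hle := (exp_mul_mixLR_le_integral_binomMass h hab hb k).trans htotal
  calc mixLR n t 1 a b k * binomMass n t k * stdDev n t
      = mixLR n t 1 a b k * binomMass n t k * (Real.exp a * (stdDev n t / n))
          * (n * Real.exp (-a)) := by
        rw [Real.exp_neg]
        field_simp
    _ ≤ 1 / (n + 1) * (n * Real.exp (-a)) := by gcongr
    _ = n / (n + 1) * Real.exp (-a) := by ring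
    _ ≤ Real.exp (-a) :=
        mul_le_of_le_one_left (Real.exp_nonneg _) ((div_le_one (by positivity)).2 (by linarith))

lemma mixLR_add_mixLR (n : ℕ) (t σ a b c : ℝ) (k : ℕ) :
    mixLR n t σ a b k + mixLR n t σ b c k = mixLR n t σ a c k :=
  intervalIntegral.integral_add_adjacent_intervals
    (intervalIntegrable_likeRatio_exp n t σ k a b) (intervalIntegrable_likeRatio_exp n t σ k b c)

end Mixtures

/-! ### Mixtures over a window of shifts -/

section Window

variable {n k l : ℕ} {t η w : ℝ}

/-- The smallest shift, on the logarithmic scale, used in the mixtures for the window `w`. -/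
def minLogShift (w : ℝ) : ℝ := -Real.log w

/-- The largest shift, on the logarithmic scale, used in the mixtures for the window `w`. A count
on the boundary has standardized value about `√w`, well inside the range of shifts. -/
def maxLogShift (w : ℝ) : ℝ := Real.log (4 * √w)

/-- The length of the interval of logarithmic shifts for the window `w`. -/
def logShiftRange (w : ℝ) : ℝ := maxLogShift w - minLogShift w

/-- The one-sided mixture of likelihood ratios over all shifts allowed by the window `w`. -/
def windowMix (n : ℕ) (w t σ : ℝ) (k : ℕ) : ℝ :=
  mixLR n t σ (minLogShift w) (maxLogShift w) k

/-- The window `w`, which will be `2 log log n`, is large enough for every error term of the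
boundary analysis to be at most the tolerance `η`, up to constants. -/
structure IsWindow (η w : ℝ) : Prop where
  tolerance_pos : 0 < η
  tolerance_le : η ≤ 1 / 20
  le_window : 16 ≤ w
  deviation : 12 ≤ η ^ 3 * w
  small_shifts : 4 * w * logShiftRange w * Real.exp (2 - η ^ 2 * w / 8) ≤ η
  log_expansion : 256 * √w ^ 3 ≤ η * w ^ 3
  interior : w * logShiftRange w * Real.exp 2 ≤ 3 / 4 * Real.exp (η * w / 4)
  sqrt_le : 2 * √w ≤ η * w
  exp_le : Real.exp (1 - w) ≤ η
  opposite_shifts : 3 * w * logShiftRange w * Real.exp (-w / 4) ≤ η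

lemma windowMix_one_sub (w t σ : ℝ) (hk : k ≤ n) :
    windowMix n w (1 - t) σ (n - k) = windowMix n w t (-σ) k :=
  mixLR_one_sub t σ _ _ hk

lemma count_mul_one_sub_ge (h : 0 < stdDev n t) (hy : 0 < zScore n t k) :
    stdDev n t ^ 2 ≤ k * (1 - t) := by
  obtain ⟨_, ht₁⟩ := mem_Ioo_of_stdDev_pos h
  have : 0 < zScore n t k * stdDev n t := by positivity
  rw [count_eq_mean_add h k, stdDev_sq h]
  nlinarith

lemma count_mul_one_sub_le (h : 0 < stdDev n t) (hy : 0 < zScore n t k) :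
    k * (1 - t) ≤ stdDev n t * (stdDev n t + zScore n t k) := by
  obtain ⟨ht₀, _⟩ := mem_Ioo_of_stdDev_pos h
  have : 0 < zScore n t k * stdDev n t := by positivity
  rw [mul_add, ← sq, count_eq_mean_add h k, stdDev_sq h]
  nlinarith

lemma upperTail_mul_zScore_le (h : 0 < stdDev n t) (hk : k ≤ n) (hy : 0 < zScore n t k) :
    upperTail n t k * zScore n t k ≤ binomMass n t k * (stdDev n t + zScore n t k) := by
  have hb := binomMass_nonneg (mem_Icc_of_stdDev_pos h) n k
  refine le_of_mul_le_mul_right ?_ h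
  calc upperTail n t k * zScore n t k * stdDev n t
      ≤ k * (1 - t) * binomMass n t k := by
        rw [mul_assoc]
        exact upperTail_mul_le_binomMass h hk
    _ ≤ stdDev n t * (stdDev n t + zScore n t k) * binomMass n t k := by
        exact mul_le_mul_of_nonneg_right (count_mul_one_sub_le h hy) hb
    _ = binomMass n t k * (stdDev n t + zScore n t k) * stdDev n t := by ring

lemma sq_stdDev_mul_binomMass_le (h : 0 < stdDev n t) (hk : k ≤ n) (hy : 0 < zScore n t k) :
    stdDev n t ^ 2 * binomMass n t k
      ≤ upperTail n t k * (zScore n t k * stdDev n t + stdDev n t / zScore n t k + 1) :=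
  (mul_le_mul_of_nonneg_right (count_mul_one_sub_ge h hy)
    (binomMass_nonneg (mem_Icc_of_stdDev_pos h) n k)).trans (binomMass_le_upperTail_mul h hk hy)

lemma sq_stdDev_le (h : 0 < stdDev n t) : stdDev n t ^ 2 ≤ n := by
  have : (0 : ℝ) ≤ n := n.cast_nonneg
  rw [stdDev_sq h]
  nlinarith [sq_nonneg (t - 1 / 2)]

namespace IsWindow

lemma four_le_sqrt (W : IsWindow η w) : 4 ≤ √w :=
  Real.le_sqrt_of_sq_le (by linarith [W.le_window])

lemma sq_sqrt (W : IsWindow η w) : √w ^ 2 = w := Real.sq_sqrt (by linarith [W.le_window])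

lemma minLogShift_nonpos (W : IsWindow η w) : minLogShift w ≤ 0 :=
  neg_nonpos.2 (Real.log_nonneg (by linarith [W.le_window]))

lemma exp_maxLogShift (W : IsWindow η w) : Real.exp (maxLogShift w) = 4 * √w :=
  Real.exp_log (by linarith [W.four_le_sqrt])

lemma exp_minLogShift (W : IsWindow η w) : Real.exp (minLogShift w) = 1 / w := by
  rw [minLogShift, Real.exp_neg, Real.exp_log (by linarith [W.le_window]), one_div]

lemma minLogShift_le_maxLogShift (W : IsWindow η w) : minLogShift w ≤ maxLogShift w :=
  W.minLogShift_nonpos.trans (Real.log_nonneg (by linarith [W.four_le_sqrt]))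

lemma logShiftRange_nonneg (W : IsWindow η w) : 0 ≤ logShiftRange w :=
  sub_nonneg.2 W.minLogShift_le_maxLogShift

lemma exp_le_of_le_maxLogShift (W : IsWindow η w) {v : ℝ} (hv : v ≤ maxLogShift w) :
    Real.exp v ≤ 4 * √w :=
  (Real.exp_le_exp.2 hv).trans_eq W.exp_maxLogShift

lemma log_mul_mem {c y : ℝ} (W : IsWindow η w) (hc : c ∈ Icc (1 / 2) 2)
    (hy : y ∈ Icc (√w / 2) (2 * √w)) :
    Real.log (c * y) ∈ Icc (minLogShift w) (maxLogShift w) := by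
  have hr := W.four_le_sqrt
  have hlo : 1 ≤ c * y := by nlinarith [hc.1, hy.1]
  refine ⟨W.minLogShift_nonpos.trans (Real.log_nonneg hlo),
    Real.log_le_log (zero_lt_one.trans_le hlo) ?_⟩
  nlinarith [hc.1, hc.2, hy.1, hy.2]

lemma le_stdDev (W : IsWindow η w) (hs : w ^ 3 ≤ stdDev n t) : 4096 ≤ stdDev n t := calc
  (4096 : ℝ) = 16 ^ 3 := by norm_num
  _ ≤ w ^ 3 := by
    gcongr
    exact W.le_window
  _ ≤ stdDev n t := hs

lemma stdDev_pos (W : IsWindow η w) (hs : w ^ 3 ≤ stdDev n t) : 0 < stdDev n t :=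
  lt_of_lt_of_le (by norm_num) (W.le_stdDev hs)

lemma cube_sqrt_le (W : IsWindow η w) (hs : w ^ 3 ≤ stdDev n t) :
    256 * √w ^ 3 ≤ η * stdDev n t :=
  W.log_expansion.trans (mul_le_mul_of_nonneg_left hs W.tolerance_pos.le)

lemma sqrt_le_tolerance_mul (W : IsWindow η w) (hs : w ^ 3 ≤ stdDev n t) :
    4096 * √w ≤ η * stdDev n t := by
  nlinarith [W.cube_sqrt_le hs, pow_le_pow_left₀ (by norm_num) W.four_le_sqrt 2,
    W.four_le_sqrt]

lemma sqrt_le_stdDev (W : IsWindow η w) (hs : w ^ 3 ≤ stdDev n t) : 8 * √w ≤ stdDev n t := by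
  nlinarith [W.sqrt_le_tolerance_mul hs, W.tolerance_le, W.stdDev_pos hs, W.four_le_sqrt]

lemma abs_log_likeRatio_sub_le (W : IsWindow η w) (hs : w ^ 3 ≤ stdDev n t) (hk : k ≤ n) {z : ℝ}
    (hz : |z| ≤ 4 * √w) (hy : |zScore n t k| ≤ 4 * √w) :
    |Real.log (likeRatio n t z k) - (z * zScore n t k - z ^ 2 / 2)| ≤ η := by
  refine (BerkJones.abs_log_likeRatio_sub_le (W.stdDev_pos hs) hk hz hy
    (by linarith [W.sqrt_le_stdDev hs])).trans ?_
  rw [div_le_iff₀ (W.stdDev_pos hs)]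
  linarith [W.cube_sqrt_le hs]

lemma exp_le_likeRatio (W : IsWindow η w) (hs : w ^ 3 ≤ stdDev n t) (hk : k ≤ n) {z : ℝ}
    (hz : |z| ≤ 4 * √w) (hy : |zScore n t k| ≤ 4 * √w) :
    Real.exp (z * zScore n t k - z ^ 2 / 2 - η) ≤ likeRatio n t z k := by
  have hpos := likeRatio_pos (W.stdDev_pos hs) (z := z) (by linarith [W.sqrt_le_stdDev hs]) k
  rw [← Real.le_log_iff_exp_le hpos]
  linarith [(abs_le.1 (W.abs_log_likeRatio_sub_le hs hk hz hy)).1]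

lemma likeRatio_le_exp (W : IsWindow η w) (hs : w ^ 3 ≤ stdDev n t) (hk : k ≤ n) {z : ℝ}
    (hz : |z| ≤ 4 * √w) (hy : |zScore n t k| ≤ 4 * √w) :
    likeRatio n t z k ≤ Real.exp (z * zScore n t k - z ^ 2 / 2 + η) := by
  have hpos := likeRatio_pos (W.stdDev_pos hs) (z := z) (by linarith [W.sqrt_le_stdDev hs]) k
  rw [← Real.log_le_iff_le_exp hpos]
  linarith [(abs_le.1 (W.abs_log_likeRatio_sub_le hs hk hz hy)).2]

lemma upperTail_le_exp (W : IsWindow η w) (hs : w ^ 3 ≤ stdDev n t) (hk : k ≤ n)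
    (hy : zScore n t k ∈ Icc 0 (4 * √w)) :
    upperTail n t k ≤ Real.exp (-zScore n t k ^ 2 / 2 + η) := by
  have h := W.stdDev_pos hs
  have hya : |zScore n t k| ≤ 4 * √w := (abs_of_nonneg hy.1).trans_le hy.2
  have hF := upperTail_nonneg (mem_Icc_of_stdDev_pos h) n k
  have hexp : Real.exp (-zScore n t k ^ 2 / 2 + η)
      = 1 / Real.exp (zScore n t k * zScore n t k - zScore n t k ^ 2 / 2 - η) := by
    rw [one_div, ← Real.exp_neg]
    ring_nf
  rw [hexp, le_div_iff₀ (Real.exp_pos _)]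
  calc _ ≤ upperTail n t k * likeRatio n t (zScore n t k) k := by
        gcongr
        exact W.exp_le_likeRatio hs hk hya hya
    _ ≤ 1 := upperTail_mul_likeRatio_le_one h hy.1
        (by linarith [W.sqrt_le_stdDev hs, W.four_le_sqrt, hy.2]) k

lemma mixLR_le (W : IsWindow η w) (hs : w ^ 3 ≤ stdDev n t) (hk : k ≤ n)
    (hy : |zScore n t k| ≤ 4 * √w) {a b c : ℝ} (ha : minLogShift w ≤ a) (hab : a ≤ b)
    (hb : b ≤ maxLogShift w)
    (hc : ∀ v ∈ Icc a b, Real.exp v * zScore n t k - Real.exp v ^ 2 / 2 ≤ c) :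
    mixLR n t 1 a b k ≤ logShiftRange w * Real.exp (c + η) := by
  calc mixLR n t 1 a b k ≤ ∫ _ in a..b, Real.exp (c + η) := by
        refine intervalIntegral.integral_mono_on hab
          (intervalIntegrable_likeRatio_exp n t 1 k a b) (by simp) fun v hv ↦ ?_
        rw [one_mul]
        refine (W.likeRatio_le_exp hs hk ?_ hy).trans (Real.exp_le_exp.2 (by linarith [hc v hv]))
        rw [abs_of_pos (Real.exp_pos v)]
        exact W.exp_le_of_le_maxLogShift (hv.2.trans hb)
    _ = (b - a) * Real.exp (c + η) := by rw [intervalIntegral.integral_const, smul_eq_mul]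
    _ ≤ logShiftRange w * Real.exp (c + η) := by
        unfold logShiftRange
        gcongr

lemma mixLR_nonneg (W : IsWindow η w) (hs : w ^ 3 ≤ stdDev n t) (k : ℕ) {a b : ℝ}
    (hab : a ≤ b) (hb : b ≤ maxLogShift w) : 0 ≤ mixLR n t 1 a b k := by
  refine intervalIntegral.integral_nonneg hab fun v hv ↦ likeRatio_nonneg (W.stdDev_pos hs) ?_ k
  rw [one_mul, abs_of_pos (Real.exp_pos v)]
  linarith [W.exp_le_of_le_maxLogShift (hv.2.trans hb), W.sqrt_le_stdDev hs, W.four_le_sqrt]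

lemma windowMix_nonneg (W : IsWindow η w) (hs : w ^ 3 ≤ stdDev n t) (k : ℕ) :
    0 ≤ windowMix n w t 1 k :=
  W.mixLR_nonneg hs k W.minLogShift_le_maxLogShift le_rfl

lemma windowMix_mono (W : IsWindow η w) (hs : w ^ 3 ≤ stdDev n t) (hkl : k ≤ l) :
    windowMix n w t 1 k ≤ windowMix n w t 1 l := by
  refine intervalIntegral.integral_mono_on W.minLogShift_le_maxLogShift
    (intervalIntegrable_likeRatio_exp n t 1 k _ _) (intervalIntegrable_likeRatio_exp n t 1 l _ _)
    fun v hv ↦ ?_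
  rw [one_mul]
  refine likeRatio_mono (W.stdDev_pos hs) (Real.exp_nonneg v) ?_ hkl
  linarith [W.exp_le_of_le_maxLogShift hv.2, W.sqrt_le_stdDev hs, W.four_le_sqrt]

lemma upperTail_mul_small_shifts_le (W : IsWindow η w) (hs : w ^ 3 ≤ stdDev n t) (hk : k ≤ n)
    (hy : zScore n t k ∈ Icc (√w / 2) (2 * √w)) :
    upperTail n t k * zScore n t k ^ 2
      * mixLR n t 1 (minLogShift w) (Real.log ((1 - η) * zScore n t k)) k ≤ η := by
  have hr := W.four_le_sqrt
  have hrr := W.sq_sqrt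
  have hη₀ := W.tolerance_pos
  have hη₁ := W.tolerance_le
  have hw := W.le_window
  have hL := W.logShiftRange_nonneg
  have hF := W.upperTail_le_exp hs hk ⟨by linarith [hy.1], by linarith [hy.2]⟩
  have hmem := W.log_mul_mem (c := 1 - η) ⟨by linarith, by linarith⟩ hy
  have hmix₀ := W.mixLR_nonneg hs k hmem.1 hmem.2
  set y := zScore n t k with hy_def
  have hy₀ : 0 < y := by linarith [hy.1]
  have hmix : mixLR n t 1 (minLogShift w) (Real.log ((1 - η) * y)) k
      ≤ logShiftRange w * Real.exp ((1 - η ^ 2) * y ^ 2 / 2 + η) := by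
    refine W.mixLR_le hs hk (by rw [← hy_def, abs_of_pos hy₀]; linarith [hy.2]) le_rfl hmem.1
      hmem.2 fun v hv ↦ ?_
    have hv' : Real.exp v ≤ (1 - η) * y :=
      (Real.le_log_iff_exp_le (mul_pos (by linarith) hy₀)).1 hv.2
    rw [← hy_def]
    nlinarith [mul_pos hη₀ hy₀]
  have hsq : y ^ 2 ≤ 4 * w := by nlinarith [hy.2]
  have hsq' : w / 4 ≤ y ^ 2 := by nlinarith [hy.1]
  calc upperTail n t k * y ^ 2 * mixLR n t 1 (minLogShift w) (Real.log ((1 - η) * y)) k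
      ≤ Real.exp (-y ^ 2 / 2 + η) * (4 * w)
          * (logShiftRange w * Real.exp ((1 - η ^ 2) * y ^ 2 / 2 + η)) := by gcongr
    _ = 4 * w * logShiftRange w
          * Real.exp ((-y ^ 2 / 2 + η) + ((1 - η ^ 2) * y ^ 2 / 2 + η)) := by
        rw [Real.exp_add (-y ^ 2 / 2 + η)]
        ring
    _ ≤ 4 * w * logShiftRange w * Real.exp (2 - η ^ 2 * w / 8) := by
        have : η ^ 2 * (w / 4) ≤ η ^ 2 * y ^ 2 := by gcongr
        gcongr _ * Real.exp ?_
        linarith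
    _ ≤ η := W.small_shifts

lemma upperTail_mul_large_shifts_le (W : IsWindow η w) (hs : w ^ 3 ≤ stdDev n t) (hk : k ≤ n)
    (hy : zScore n t k ∈ Icc (√w / 2) (2 * √w)) :
    upperTail n t k * zScore n t k ^ 2
      * mixLR n t 1 (Real.log ((1 - η) * zScore n t k)) (maxLogShift w) k
      ≤ (1 + η) / (1 - η) := by
  have hr := W.four_le_sqrt
  have hη₀ := W.tolerance_pos
  have hη₁ := W.tolerance_le
  have h := W.stdDev_pos hs
  have hb := binomMass_nonneg (mem_Icc_of_stdDev_pos h) n k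
  have hmem := W.log_mul_mem (c := 1 - η) ⟨by linarith, by linarith⟩ hy
  have hmix₀ := W.mixLR_nonneg hs k hmem.2 le_rfl
  have hmix := mixLR_mul_binomMass_le h hk hmem.2
    (W.exp_maxLogShift.trans_le (by linarith [W.sqrt_le_stdDev hs]))
  have hy₀ : 0 < zScore n t k := by linarith [hy.1]
  have hη₂ : 0 < 1 - η := by linarith
  rw [Real.exp_neg, Real.exp_log (mul_pos hη₂ hy₀)] at hmix
  have htail : upperTail n t k * zScore n t k ≤ binomMass n t k * ((1 + η) * stdDev n t) := by
    refine (upperTail_mul_zScore_le h hk hy₀).trans ?_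
    gcongr
    linarith [W.sqrt_le_tolerance_mul hs, hy.2]
  set y := zScore n t k
  set J := mixLR n t 1 (Real.log ((1 - η) * y)) (maxLogShift w) k
  calc upperTail n t k * y ^ 2 * J = (upperTail n t k * y) * (y * J) := by ring
    _ ≤ (binomMass n t k * ((1 + η) * stdDev n t)) * (y * J) := by gcongr
    _ = (1 + η) * y * (J * binomMass n t k * stdDev n t) := by ring
    _ ≤ (1 + η) * y * ((1 - η) * y)⁻¹ := by gcongr
    _ = (1 + η) / (1 - η) := by field_simp

lemma upperTail_mul_windowMix_le (W : IsWindow η w) (hs : w ^ 3 ≤ stdDev n t) (hk : k ≤ n)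
    (hy : zScore n t k ∈ Icc (√w / 2) (2 * √w)) :
    upperTail n t k * zScore n t k ^ 2 * windowMix n w t 1 k ≤ 1 + 8 * η := by
  have hη₀ := W.tolerance_pos
  have hη₁ := W.tolerance_le
  have hsmall := W.upperTail_mul_small_shifts_le hs hk hy
  have hlarge := W.upperTail_mul_large_shifts_le hs hk hy
  have hratio : (1 + η) / (1 - η) ≤ 1 + 7 * η := by
    rw [div_le_iff₀ (by linarith)]
    nlinarith
  rw [windowMix, ← mixLR_add_mixLR n t 1 _ (Real.log ((1 - η) * zScore n t k)), mul_add]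
  linarith

lemma one_sub_le_cast_div (W : IsWindow η w) (hs : w ^ 3 ≤ stdDev n t) :
    1 - η / 4 ≤ n / (n + 1) := by
  have hn := sq_stdDev_le (W.stdDev_pos hs)
  have hη := W.tolerance_pos
  have h4 := W.le_stdDev hs
  have hsqrt := W.sqrt_le_tolerance_mul hs
  have hr := W.four_le_sqrt
  rw [le_div_iff₀ (by positivity)]
  nlinarith

lemma deviation_le {s y : ℝ} (hη : 0 < η) (hη₁ : η ≤ 1 / 20) (hy : 2 ≤ y) (hs : 4096 ≤ s)
    (hys : 2 * y ≤ η * s) (hdev : 3 ≤ η ^ 3 * y ^ 2) :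
    (s ^ 2 + y * s + 2) / (η * (y * s)) ^ 2 ≤ 2 / 3 * η := by
  rw [div_le_iff₀ (by positivity)]
  have hys' : y * s + 2 ≤ s ^ 2 := by nlinarith
  calc s ^ 2 + y * s + 2 ≤ 2 / 3 * 3 * s ^ 2 := by linarith
    _ ≤ 2 / 3 * (η ^ 3 * y ^ 2) * s ^ 2 := by gcongr
    _ = 2 / 3 * η * (η * (y * s)) ^ 2 := by ring

lemma mills_error_le {s y : ℝ} (hη : 0 < η) (hη₁ : η ≤ 1 / 20) (hy : 2 ≤ y)
    (hys : 2 * y ≤ η * s) (hdev : 3 ≤ η ^ 3 * y ^ 2) :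
    y * s + s / y + 1 ≤ (1 + η) * (y * s) := by
  have : 0 < s := pos_of_mul_pos_right (by linarith : 0 < η * s) hη.le
  have hηy : 3 ≤ η * y ^ 2 := by
    have : η ^ 3 * y ^ 2 ≤ η * y ^ 2 := by
      gcongr
      exact pow_le_of_le_one hη.le (by linarith) (by norm_num)
    linarith
  have hdiv : s / y ≤ η / 2 * (y * s) := by
    rw [div_le_iff₀ (by linarith)]
    nlinarith
  have hone : 1 ≤ η / 2 * (y * s) := by nlinarith
  linarith

lemma mixLR_le_windowMix (W : IsWindow η w) (hs : w ^ 3 ≤ stdDev n t) (k : ℕ) {a b : ℝ}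
    (ha : minLogShift w ≤ a) (hab : a ≤ b) (hb : b ≤ maxLogShift w) :
    mixLR n t 1 a b k ≤ windowMix n w t 1 k := by
  have hleft := W.mixLR_nonneg hs k ha (hab.trans hb)
  have hright := W.mixLR_nonneg hs k hb le_rfl
  have hsplit := mixLR_add_mixLR n t 1 (minLogShift w) a b k
  have hsplit' := mixLR_add_mixLR n t 1 (minLogShift w) b (maxLogShift w) k
  unfold windowMix
  linarith

lemma binomMass_mul_stdDev_le (W : IsWindow η w) (hs : w ^ 3 ≤ stdDev n t) (hk : k ≤ n)
    (hy : zScore n t k ∈ Icc (√w / 2) (2 * √w)) (hdev : 3 ≤ η ^ 3 * zScore n t k ^ 2) :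
    binomMass n t k * stdDev n t ≤ upperTail n t k * ((1 + η) * zScore n t k) := by
  have h := W.stdDev_pos hs
  have hr := W.four_le_sqrt
  have hy₂ : 2 ≤ zScore n t k := by linarith [hy.1]
  have hF := upperTail_nonneg (mem_Icc_of_stdDev_pos h) n k
  have hys : 2 * zScore n t k ≤ η * stdDev n t := by
    linarith [hy.2, W.sqrt_le_tolerance_mul hs]
  refine le_of_mul_le_mul_right ?_ h
  calc binomMass n t k * stdDev n t * stdDev n t = stdDev n t ^ 2 * binomMass n t k := by ring
    _ ≤ upperTail n t k
          * (zScore n t k * stdDev n t + stdDev n t / zScore n t k + 1) :=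
        sq_stdDev_mul_binomMass_le h hk (by linarith)
    _ ≤ upperTail n t k * ((1 + η) * (zScore n t k * stdDev n t)) :=
        mul_le_mul_of_nonneg_left
          (mills_error_le W.tolerance_pos W.tolerance_le hy₂ hys hdev) hF
    _ = upperTail n t k * ((1 + η) * zScore n t k) * stdDev n t := by ring

-- Only the shifts within a factor `1 ± η` of the observed deviation are kept.
lemma le_windowMix_mul_binomMass (W : IsWindow η w) (hs : w ^ 3 ≤ stdDev n t) (hk : k ≤ n)
    (hy : zScore n t k ∈ Icc (√w / 2) (2 * √w)) (hdev : 3 ≤ η ^ 3 * zScore n t k ^ 2) :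
    (1 - η / 4) * (1 - 2 / 3 * η) / (1 + η)
      ≤ windowMix n w t 1 k * binomMass n t k * (zScore n t k * stdDev n t) := by
  have h := W.stdDev_pos hs
  have hr := W.four_le_sqrt
  have hη₀ := W.tolerance_pos
  have hη₁ := W.tolerance_le
  have hsqrt := W.sqrt_le_tolerance_mul hs
  have hb := binomMass_nonneg (mem_Icc_of_stdDev_pos h) n k
  have hy₂ : 2 ≤ zScore n t k := by linarith [hy.1]
  have hys : 2 * zScore n t k ≤ η * stdDev n t := by linarith [hy.2]
  have hlo := W.log_mul_mem (c := 1 - η) ⟨by linarith, by linarith⟩ hy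
  have hhi := W.log_mul_mem (c := 1 + η) ⟨by linarith, by linarith⟩ hy
  have hlohi : Real.log ((1 - η) * zScore n t k) ≤ Real.log ((1 + η) * zScore n t k) :=
    Real.log_le_log (mul_pos (by linarith) (by linarith)) (by gcongr; linarith)
  calc (1 - η / 4) * (1 - 2 / 3 * η) / (1 + η)
      ≤ n / (n + 1) * (1 - (stdDev n t ^ 2 + zScore n t k * stdDev n t + 2)
          / (η * (zScore n t k * stdDev n t)) ^ 2) / (1 + η) := by
        gcongr
        · linarith
        · exact W.one_sub_le_cast_div hs
        · exact deviation_le hη₀ hη₁ hy₂ (W.le_stdDev hs) hys hdev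
    _ ≤ mixLR n t 1 (Real.log ((1 - η) * zScore n t k)) (Real.log ((1 + η) * zScore n t k)) k
          * binomMass n t k * (zScore n t k * stdDev n t) :=
        le_mixLR_mul_binomMass h hk hη₀ (by linarith)
          (Real.exp_log (mul_pos (by linarith) (by linarith))) (Real.exp_log (by positivity))
          (by nlinarith [W.sqrt_le_stdDev hs, hy.2])
    _ ≤ windowMix n w t 1 k * binomMass n t k * (zScore n t k * stdDev n t) := by
        gcongr
        exact W.mixLR_le_windowMix hs k hlo.1 hlohi hhi.2

lemma le_upperTail_mul_windowMix (W : IsWindow η w) (hs : w ^ 3 ≤ stdDev n t) (hk : k ≤ n)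
    (hy : zScore n t k ∈ Icc (√w / 2) (2 * √w)) :
    1 - 5 * η ≤ upperTail n t k * zScore n t k ^ 2 * windowMix n w t 1 k := by
  have hr := W.four_le_sqrt
  have hη₀ := W.tolerance_pos
  have hη₁ := W.tolerance_le
  have hI := W.windowMix_nonneg hs k
  have hdev : 3 ≤ η ^ 3 * zScore n t k ^ 2 := by
    have : w / 4 ≤ zScore n t k ^ 2 := by nlinarith [hy.1, W.sq_sqrt]
    nlinarith [W.deviation, pow_pos hη₀ 3]
  have hmix := W.le_windowMix_mul_binomMass hs hk hy hdev
  have hmills := W.binomMass_mul_stdDev_le hs hk hy hdev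
  set y := zScore n t k
  have hy₀ : 0 < y := by linarith [hy.1]
  have hchain : (1 - η / 4) * (1 - 2 / 3 * η) / (1 + η)
      ≤ upperTail n t k * y ^ 2 * windowMix n w t 1 k * (1 + η) := calc
    _ ≤ windowMix n w t 1 k * y * (binomMass n t k * stdDev n t) := by linarith
    _ ≤ windowMix n w t 1 k * y * (upperTail n t k * ((1 + η) * y)) := by gcongr
    _ = upperTail n t k * y ^ 2 * windowMix n w t 1 k * (1 + η) := by ring
  rw [div_le_iff₀ (by positivity)] at hchain
  have hpoly : (1 - 5 * η) * ((1 + η) * (1 + η)) ≤ (1 - η / 4) * (1 - 2 / 3 * η) := by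
    nlinarith [sq_nonneg η, pow_pos hη₀ 3]
  refine le_of_mul_le_mul_right ?_ (by positivity : 0 < (1 + η) * (1 + η))
  linarith

end IsWindow

end Window

/-! ### The potential near the boundary -/

section Boundary

variable {n k : ℕ} {t η w ε : ℝ}

/-- The level `ε` agrees with `exp (-w / 2)`, up to the tolerance `η` in the exponent. At this
level the tail probabilities cross at standardized counts near `±√w`. -/
structure IsLevel (η w ε : ℝ) : Prop where
  ge : Real.exp (-(1 + η) * w / 2) ≤ ε
  le : ε ≤ Real.exp (-(1 - η / 2) * w / 2)

/-- Neither tail probability of the count `k` has fallen below the level `ε`. -/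
def NonCrossing (n : ℕ) (ε t : ℝ) (k : ℕ) : Prop := ε ≤ upperTail n t k ∧ ε ≤ lowerTail n t k

/-- The two-sided mixture of likelihood ratios, normalized to be about `1` when a boundary is
crossed. -/
def potential (n : ℕ) (w ε t : ℝ) (k : ℕ) : ℝ :=
  w * ε * (windowMix n w t 1 k + windowMix n w t (-1) k)

lemma IsLevel.pos (E : IsLevel η w ε) : 0 < ε := (Real.exp_pos _).trans_le E.ge

lemma nonCrossing_one_sub (hk : k ≤ n) :
    NonCrossing n ε (1 - t) (n - k) ↔ NonCrossing n ε t k := by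
  rw [NonCrossing, NonCrossing, upperTail_one_sub t hk, lowerTail_one_sub t hk, and_comm]

lemma potential_one_sub (w ε t : ℝ) (hk : k ≤ n) :
    potential n w ε (1 - t) (n - k) = potential n w ε t k := by
  rw [potential, potential, windowMix_one_sub w t 1 hk, windowMix_one_sub w t (-1) hk, neg_neg,
    add_comm]

namespace IsWindow

lemma exists_zScore_near (W : IsWindow η w) (hs : w ^ 3 ≤ stdDev n t) {c : ℝ}
    (hc : c ∈ Icc 0 (2 * √w)) :
    ∃ k ≤ n, zScore n t k ∈ Icc c (c + η * √w / 4) ∧ ∀ l, c ≤ zScore n t l → k ≤ l := by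
  have h := W.stdDev_pos hs
  obtain ⟨ht₀, ht₁⟩ := mem_Ioo_of_stdDev_pos h
  have hr := W.four_le_sqrt
  have hx : 0 ≤ n * t + c * stdDev n t := add_nonneg (by positivity) (mul_nonneg hc.1 h.le)
  have hceil := Nat.le_ceil (n * t + c * stdDev n t)
  have hceil' := Nat.ceil_lt_add_one hx
  refine ⟨⌈n * t + c * stdDev n t⌉₊, ?_, ⟨?_, ?_⟩, fun l hl ↦ ?_⟩
  · have hcs : c * stdDev n t ≤ stdDev n t ^ 2 := by
      nlinarith [hc.2, W.sqrt_le_stdDev hs]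
    rw [stdDev_sq h] at hcs
    have hn : (0 : ℝ) ≤ n := n.cast_nonneg
    exact Nat.ceil_le.2 (by nlinarith [mul_nonneg hn (sq_nonneg (1 - t))])
  · rw [zScore, le_div_iff₀ h]
    linarith
  · rw [zScore, div_le_iff₀ h]
    nlinarith [W.sqrt_le_tolerance_mul hs]
  · refine Nat.ceil_le.2 ?_
    rw [count_eq_mean_add h l]
    gcongr

lemma upperTail_lt_of_zScore_mem (W : IsWindow η w) (E : IsLevel η w ε) (hs : w ^ 3 ≤ stdDev n t)
    (hk : k ≤ n) (hy : zScore n t k ∈ Icc ((1 + η) * √w) (2 * √w)) : upperTail n t k < ε := by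
  have hr := W.four_le_sqrt
  have hη := W.tolerance_pos
  have hy₀ : 0 ≤ zScore n t k := le_trans (by positivity) hy.1
  refine (W.upperTail_le_exp hs hk ⟨hy₀, by linarith [hy.2]⟩).trans_lt (lt_of_lt_of_le ?_ E.ge)
  have hsq : ((1 + η) * √w) ^ 2 ≤ zScore n t k ^ 2 := by
    gcongr
    exact hy.1
  rw [mul_pow, W.sq_sqrt] at hsq
  refine Real.exp_lt_exp.2 ?_
  nlinarith [W.le_window, mul_pos hη hη]

lemma exp_mul_sq_mul_le (W : IsWindow η w) {y : ℝ} (hy₀ : 0 < y)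
    (hy : y ≤ (1 - 3 / 4 * η) * √w) :
    Real.exp (-(1 - η / 2) * w / 2) * (y ^ 2 * (logShiftRange w * Real.exp (y ^ 2 / 2 + η)))
      ≤ 1 - 5 * η := by
  have hη₀ := W.tolerance_pos
  have hη₁ := W.tolerance_le
  have hw := W.le_window
  have hL := W.logShiftRange_nonneg
  have hsq : y ^ 2 ≤ (1 - η) * w := by
    have : y ^ 2 ≤ ((1 - 3 / 4 * η) * √w) ^ 2 := by gcongr
    rw [mul_pow, W.sq_sqrt] at this
    exact this.trans (mul_le_mul_of_nonneg_right (by nlinarith) (by linarith))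
  have hsq' : y ^ 2 ≤ w := by nlinarith
  calc Real.exp (-(1 - η / 2) * w / 2) * (y ^ 2 * (logShiftRange w * Real.exp (y ^ 2 / 2 + η)))
      ≤ Real.exp (-(1 - η / 2) * w / 2)
          * (w * (logShiftRange w * Real.exp ((1 - η) * w / 2 + 2))) := by
        gcongr _ * (?_ * (_ * Real.exp ?_))
        linarith
    _ = w * logShiftRange w
          * (Real.exp (-(1 - η / 2) * w / 2) * Real.exp ((1 - η) * w / 2 + 2)) := by ring
    _ = w * logShiftRange w * (Real.exp 2 * Real.exp (-(η * w / 4))) := by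
        rw [← Real.exp_add, ← Real.exp_add]
        ring_nf
    _ ≤ 3 / 4 * Real.exp (η * w / 4) * Real.exp (-(η * w / 4)) := by
        rw [← mul_assoc]
        exact mul_le_mul_of_nonneg_right W.interior (Real.exp_nonneg _)
    _ = 3 / 4 := by rw [mul_assoc, ← Real.exp_add, add_neg_cancel, Real.exp_zero, mul_one]
    _ ≤ 1 - 5 * η := by linarith

lemma windowMix_le_exp (W : IsWindow η w) (hs : w ^ 3 ≤ stdDev n t) (hk : k ≤ n)
    (hy : |zScore n t k| ≤ 4 * √w) :
    windowMix n w t 1 k ≤ logShiftRange w * Real.exp (zScore n t k ^ 2 / 2 + η) :=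
  W.mixLR_le hs hk hy le_rfl W.minLogShift_le_maxLogShift le_rfl fun v _ ↦ by
    nlinarith [sq_nonneg (Real.exp v - zScore n t k)]

lemma le_upperTail_of_zScore_mem (W : IsWindow η w) (E : IsLevel η w ε) (hs : w ^ 3 ≤ stdDev n t)
    (hk : k ≤ n) (hy : zScore n t k ∈ Icc ((1 - η) * √w) ((1 - 3 / 4 * η) * √w)) :
    ε ≤ upperTail n t k := by
  have hr := W.four_le_sqrt
  have hη₀ := W.tolerance_pos
  have hη₁ := W.tolerance_le
  have hy₀ : 0 < zScore n t k := lt_of_lt_of_le (by nlinarith) hy.1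
  have hyr : zScore n t k ∈ Icc (√w / 2) (2 * √w) := ⟨by nlinarith [hy.1], by nlinarith [hy.2]⟩
  have hF := upperTail_nonneg (mem_Icc_of_stdDev_pos (W.stdDev_pos hs)) n k
  have hmix := W.windowMix_le_exp hs hk ((abs_of_pos hy₀).trans_le (by linarith [hyr.2]))
  have hlower := W.le_upperTail_mul_windowMix hs hk hyr
  have hinterior := W.exp_mul_sq_mul_le hy₀ hy.2
  set y := zScore n t k
  have hle : Real.exp (-(1 - η / 2) * w / 2)
        * (y ^ 2 * (logShiftRange w * Real.exp (y ^ 2 / 2 + η)))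
      ≤ upperTail n t k * (y ^ 2 * (logShiftRange w * Real.exp (y ^ 2 / 2 + η))) := by
    refine hinterior.trans (hlower.trans ?_)
    rw [mul_assoc]
    gcongr
  have hmix₀ : 0 < logShiftRange w * Real.exp (y ^ 2 / 2 + η) := by
    refine lt_of_lt_of_le ?_ hmix
    refine (W.windowMix_nonneg hs k).lt_of_ne fun h0 ↦ ?_
    rw [← h0, mul_zero] at hlower
    linarith
  exact E.le.trans (le_of_mul_le_mul_right hle (by positivity))

lemma exists_upperTail_lt (W : IsWindow η w) (E : IsLevel η w ε) (hs : w ^ 3 ≤ stdDev n t)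
    (hy : (1 + η) * √w ≤ zScore n t k) :
    ∃ l ≤ k, l ≤ n ∧ upperTail n t l < ε ∧
      zScore n t l ∈ Icc ((1 + η) * √w) ((1 + 2 * η) * √w) := by
  have hr := W.four_le_sqrt
  have hη₀ := W.tolerance_pos
  have hη₁ := W.tolerance_le
  obtain ⟨l, hl, hyl, hmin⟩ := W.exists_zScore_near hs (c := (1 + η) * √w)
    ⟨by positivity, by nlinarith⟩
  have hyl' : zScore n t l ≤ (1 + 2 * η) * √w := by nlinarith [hyl.2]
  exact ⟨l, hmin k hy, hl,
    W.upperTail_lt_of_zScore_mem E hs hl ⟨hyl.1, hyl'.trans (by nlinarith)⟩, hyl.1, hyl'⟩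

lemma exists_le_upperTail (W : IsWindow η w) (E : IsLevel η w ε) (hs : w ^ 3 ≤ stdDev n t)
    (hy : zScore n t k ≤ (1 - η) * √w) :
    ∃ l ≥ k, l ≤ n ∧ ε ≤ upperTail n t l ∧ zScore n t l ∈ Icc ((1 - η) * √w) √w := by
  have hr := W.four_le_sqrt
  have hη₀ := W.tolerance_pos
  have hη₁ := W.tolerance_le
  obtain ⟨l, hl, hyl, -⟩ := W.exists_zScore_near hs (c := (1 - η) * √w)
    ⟨mul_nonneg (by linarith) (by positivity), by nlinarith⟩
  exact ⟨l, (zScore_le_zScore (W.stdDev_pos hs)).1 (hy.trans hyl.1), hl,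
    W.le_upperTail_of_zScore_mem E hs hl ⟨hyl.1, by nlinarith [hyl.2]⟩, hyl.1,
    by nlinarith [hyl.2]⟩

lemma zScore_le_of_le_upperTail (W : IsWindow η w) (E : IsLevel η w ε)
    (hs : w ^ 3 ≤ stdDev n t) (hF : ε ≤ upperTail n t k) : zScore n t k ≤ (1 + η) * √w := by
  by_contra! hy
  obtain ⟨l, hlk, -, hl, -⟩ := W.exists_upperTail_lt E hs hy.le
  exact hl.not_ge (hF.trans (upperTail_anti (mem_Icc_of_stdDev_pos (W.stdDev_pos hs)) hlk))

lemma lt_zScore_of_upperTail_lt (W : IsWindow η w) (E : IsLevel η w ε)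
    (hs : w ^ 3 ≤ stdDev n t) (hF : upperTail n t k < ε) : (1 - η) * √w < zScore n t k := by
  by_contra! hy
  obtain ⟨l, hkl, -, hl, -⟩ := W.exists_le_upperTail E hs hy
  exact hF.not_ge
    (hl.trans (upperTail_anti (mem_Icc_of_stdDev_pos (W.stdDev_pos hs)) hkl))

lemma le_windowMix_near_boundary (W : IsWindow η w) (hs : w ^ 3 ≤ stdDev n t) (hk : k ≤ n)
    (hy : zScore n t k ∈ Icc (√w / 2) ((1 + 2 * η) * √w)) (hF : upperTail n t k ≤ ε) :
    1 - 9 * η ≤ w * ε * windowMix n w t 1 k := by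
  have hr := W.four_le_sqrt
  have := W.le_window
  have hη₀ := W.tolerance_pos
  have hη₁ := W.tolerance_le
  have hI := W.windowMix_nonneg hs k
  have hF₀ := upperTail_nonneg (mem_Icc_of_stdDev_pos (W.stdDev_pos hs)) n k
  have hlower := W.le_upperTail_mul_windowMix hs hk ⟨hy.1, by nlinarith [hy.2]⟩
  have hsq : zScore n t k ^ 2 ≤ (1 + 2 * η) ^ 2 * w := by
    have := pow_le_pow_left₀ (by linarith [hy.1]) hy.2 2
    rwa [mul_pow, W.sq_sqrt] at this
  have hchain : upperTail n t k * zScore n t k ^ 2 * windowMix n w t 1 k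
      ≤ (1 + 2 * η) ^ 2 * (w * ε * windowMix n w t 1 k) := calc
    _ ≤ ε * ((1 + 2 * η) ^ 2 * w) * windowMix n w t 1 k := by
      gcongr
      exact hF₀.trans hF
    _ = (1 + 2 * η) ^ 2 * (w * ε * windowMix n w t 1 k) := by ring
  have hpoly : (1 - 9 * η) * (1 + 2 * η) ^ 2 ≤ 1 - 5 * η := by
    nlinarith [sq_nonneg η, pow_pos hη₀ 3]
  refine le_of_mul_le_mul_left ?_ (by positivity : 0 < (1 + 2 * η) ^ 2)
  linarith

lemma windowMix_near_boundary_le (W : IsWindow η w) (E : IsLevel η w ε)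
    (hs : w ^ 3 ≤ stdDev n t) (hk : k ≤ n) (hy : zScore n t k ∈ Icc ((1 - η) * √w) (2 * √w))
    (hF : ε ≤ upperTail n t k) : w * ε * windowMix n w t 1 k ≤ 1 + 20 * η := by
  have hr := W.four_le_sqrt
  have hw := W.le_window
  have hη₀ := W.tolerance_pos
  have hη₁ := W.tolerance_le
  have hε := E.pos
  have hI := W.windowMix_nonneg hs k
  have hF₀ := hε.le.trans hF
  have hupper := W.upperTail_mul_windowMix_le hs hk ⟨by nlinarith [hy.1], hy.2⟩
  have hsq : (1 - η) ^ 2 * w ≤ zScore n t k ^ 2 := by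
    have := pow_le_pow_left₀ (mul_nonneg (by linarith) (by linarith)) hy.1 2
    rwa [mul_pow, W.sq_sqrt] at this
  have hchain : (1 - η) ^ 2 * (w * ε * windowMix n w t 1 k)
      ≤ upperTail n t k * zScore n t k ^ 2 * windowMix n w t 1 k := calc
    _ = ε * ((1 - η) ^ 2 * w) * windowMix n w t 1 k := by ring
    _ ≤ upperTail n t k * zScore n t k ^ 2 * windowMix n w t 1 k := by gcongr
  have hpoly : 1 + 8 * η ≤ (1 - η) ^ 2 * (1 + 20 * η) := by
    nlinarith [sq_nonneg η, pow_pos hη₀ 3]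
  refine le_of_mul_le_mul_left ?_ (pow_pos (by linarith) 2 : 0 < (1 - η) ^ 2)
  linarith

lemma le_windowMix_of_upperTail_lt (W : IsWindow η w) (E : IsLevel η w ε)
    (hs : w ^ 3 ≤ stdDev n t) (hk : k ≤ n) (hF : upperTail n t k < ε) :
    1 - 9 * η ≤ w * ε * windowMix n w t 1 k := by
  have hr := W.four_le_sqrt
  have hw := W.le_window
  have hη₀ := W.tolerance_pos
  have hη₁ := W.tolerance_le
  have hε := E.pos
  have hy := W.lt_zScore_of_upperTail_lt E hs hF
  rcases le_total (zScore n t k) ((1 + η) * √w) with hyk | hyk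
  · exact W.le_windowMix_near_boundary hs hk ⟨by nlinarith, by nlinarith⟩ hF.le
  · obtain ⟨l, hlk, hl, hFl, hyl⟩ := W.exists_upperTail_lt E hs hyk
    refine (W.le_windowMix_near_boundary hs hl ⟨by nlinarith [hyl.1], hyl.2⟩ hFl.le).trans ?_
    have := W.windowMix_mono hs hlk
    gcongr

lemma windowMix_le_of_le_upperTail (W : IsWindow η w) (E : IsLevel η w ε)
    (hs : w ^ 3 ≤ stdDev n t) (hk : k ≤ n) (hF : ε ≤ upperTail n t k) :
    w * ε * windowMix n w t 1 k ≤ 1 + 20 * η := by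
  have hr := W.four_le_sqrt
  have hw := W.le_window
  have hη₁ := W.tolerance_le
  have hε := E.pos
  rcases le_total ((1 - η) * √w) (zScore n t k) with hyk | hyk
  · refine W.windowMix_near_boundary_le E hs hk ⟨hyk, ?_⟩ hF
    nlinarith [W.zScore_le_of_le_upperTail E hs hF]
  · obtain ⟨l, hkl, hl, hFl, hyl⟩ := W.exists_le_upperTail E hs hyk
    refine le_trans ?_
      (W.windowMix_near_boundary_le E hs hl ⟨hyl.1, by linarith [hyl.2]⟩ hFl)
    have := W.windowMix_mono hs hkl
    gcongr

lemma windowMix_le_of_zScore_nonpos (W : IsWindow η w) (E : IsLevel η w ε)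
    (hs : w ^ 3 ≤ stdDev n t) (hk : k ≤ n) (hy : zScore n t k ∈ Icc (-(4 * √w)) 0) :
    w * ε * windowMix n w t 1 k ≤ η := by
  have hw := W.le_window
  have hη₁ := W.tolerance_le
  have hL := W.logShiftRange_nonneg
  have hmix : windowMix n w t 1 k ≤ logShiftRange w * Real.exp (0 + η) := by
    refine W.mixLR_le hs hk (abs_le.2 ⟨hy.1, by linarith [hy.2, Real.sqrt_nonneg w]⟩) le_rfl
      W.minLogShift_le_maxLogShift le_rfl fun v _ ↦ ?_
    nlinarith [sq_nonneg (Real.exp v), Real.exp_pos v, hy.2]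
  have hexp : Real.exp (0 + η) ≤ 3 :=
    (Real.exp_le_exp.2 (by linarith)).trans Real.exp_one_lt_three.le
  have hε : ε ≤ Real.exp (-w / 4) := E.le.trans (Real.exp_le_exp.2 (by nlinarith))
  calc w * ε * windowMix n w t 1 k ≤ w * Real.exp (-w / 4) * (logShiftRange w * 3) := by
        gcongr
        · exact W.windowMix_nonneg hs k
        · exact hmix.trans (by gcongr)
    _ = 3 * w * logShiftRange w * Real.exp (-w / 4) := by ring
    _ ≤ η := W.opposite_shifts

lemma abs_zScore_le (W : IsWindow η w) (E : IsLevel η w ε) (hs : w ^ 3 ≤ stdDev n t) (hk : k ≤ n)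
    (hc : NonCrossing n ε t k) : |zScore n t k| ≤ (1 + η) * √w := by
  have hup := W.zScore_le_of_le_upperTail E hs hc.1
  have hdown := W.zScore_le_of_le_upperTail E (hs.trans_eq (stdDev_one_sub n t).symm)
    ((nonCrossing_one_sub hk).2 hc).1
  rw [zScore_one_sub t hk] at hdown
  exact abs_le.2 ⟨by linarith, hup⟩

lemma potential_nonneg (W : IsWindow η w) (hε : 0 ≤ ε) (hs : w ^ 3 ≤ stdDev n t) (hk : k ≤ n) :
    0 ≤ potential n w ε t k := by
  have hup := W.windowMix_nonneg hs k
  have hdown := W.windowMix_nonneg (hs.trans_eq (stdDev_one_sub n t).symm) (n - k)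
  rw [windowMix_one_sub w t 1 hk] at hdown
  have := W.le_window
  unfold potential
  positivity

lemma potential_le_of_zScore_nonneg (W : IsWindow η w) (E : IsLevel η w ε)
    (hs : w ^ 3 ≤ stdDev n t) (hk : k ≤ n) (hc : NonCrossing n ε t k) (hy : 0 ≤ zScore n t k) :
    potential n w ε t k ≤ 1 + 21 * η := by
  have hyb := W.abs_zScore_le E hs hk hc
  rw [abs_of_nonneg hy] at hyb
  have hup := W.windowMix_le_of_le_upperTail E hs hk hc.1
  have hdown := W.windowMix_le_of_zScore_nonpos E (hs.trans_eq (stdDev_one_sub n t).symm)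
    (n.sub_le k) (by
      rw [zScore_one_sub t hk]
      constructor <;> nlinarith [W.tolerance_le, W.four_le_sqrt])
  rw [windowMix_one_sub w t 1 hk] at hdown
  unfold potential
  linarith

lemma potential_le (W : IsWindow η w) (E : IsLevel η w ε) (hs : w ^ 3 ≤ stdDev n t) (hk : k ≤ n)
    (hc : NonCrossing n ε t k) : potential n w ε t k ≤ 1 + 21 * η := by
  rcases le_total 0 (zScore n t k) with hy | hy
  · exact W.potential_le_of_zScore_nonneg E hs hk hc hy
  · rw [← potential_one_sub w ε t hk]
    exact W.potential_le_of_zScore_nonneg E (hs.trans_eq (stdDev_one_sub n t).symm) (n.sub_le k)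
      ((nonCrossing_one_sub hk).2 hc) (by rw [zScore_one_sub t hk]; linarith)

lemma le_potential_of_upperTail_lt (W : IsWindow η w) (E : IsLevel η w ε)
    (hs : w ^ 3 ≤ stdDev n t) (hk : k ≤ n) (hF : upperTail n t k < ε) :
    1 - 9 * η ≤ potential n w ε t k := by
  have hup := W.le_windowMix_of_upperTail_lt E hs hk hF
  have hdown := W.windowMix_nonneg (hs.trans_eq (stdDev_one_sub n t).symm) (n - k)
  rw [windowMix_one_sub w t 1 hk] at hdown
  have := E.pos
  have := W.le_window
  have : 0 ≤ w * ε * windowMix n w t (-1) k := by positivity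
  unfold potential
  linarith

lemma le_potential (W : IsWindow η w) (E : IsLevel η w ε) (hs : w ^ 3 ≤ stdDev n t) (hk : k ≤ n)
    (hc : ¬NonCrossing n ε t k) : 1 - 9 * η ≤ potential n w ε t k := by
  rcases lt_or_ge (upperTail n t k) ε with hF | hF
  · exact W.le_potential_of_upperTail_lt E hs hk hF
  · rw [← potential_one_sub w ε t hk]
    refine W.le_potential_of_upperTail_lt E (hs.trans_eq (stdDev_one_sub n t).symm) (n.sub_le k) ?_
    rw [upperTail_one_sub t hk]
    exact not_le.1 fun hG ↦ hc ⟨hF, hG⟩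

lemma abs_likeRatio_sub_one_le (W : IsWindow η w) (hs : w ^ 3 ≤ stdDev n t) (hk : k ≤ n)
    (hy : |zScore n t k| ≤ (1 + η) * √w) {z : ℝ} (hz : |z| ≤ 1 / w) :
    |likeRatio n t z k - 1| ≤ 6 * η := by
  have hη₀ := W.tolerance_pos
  have hη₁ := W.tolerance_le
  have hw := W.le_window
  have hr := W.four_le_sqrt
  have hw₀ : 0 < w := by linarith
  have hy' : |zScore n t k| ≤ 2 * √w := hy.trans (by nlinarith)
  have hwη : 1 / w ≤ η := by
    rw [div_le_iff₀ hw₀]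
    linarith [W.sqrt_le]
  obtain ⟨hzy, hzy'⟩ : -η ≤ z * zScore n t k ∧ z * zScore n t k ≤ η := by
    rw [← abs_le, abs_mul]
    calc |z| * |zScore n t k| ≤ 1 / w * (2 * √w) := by gcongr
      _ ≤ 1 / w * (η * w) := mul_le_mul_of_nonneg_left W.sqrt_le (by positivity)
      _ = η := by field_simp
  have hz₂ : z ^ 2 / 2 ≤ η := by
    rw [← sq_abs]
    nlinarith [abs_nonneg z]
  have hlog := W.abs_log_likeRatio_sub_le hs hk (z := z) (by linarith) (by linarith)
  have hpos := likeRatio_pos (W.stdDev_pos hs) (z := z) (by linarith [W.sqrt_le_stdDev hs]) k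
  have hlog' : |Real.log (likeRatio n t z k)| ≤ 3 * η := by
    obtain ⟨hlo, hhi⟩ := abs_le.1 hlog
    exact abs_le.2 ⟨by linarith, by linarith [sq_nonneg z]⟩
  have hexp := Real.abs_exp_sub_one_le (hlog'.trans (by linarith))
  rw [Real.exp_log hpos] at hexp
  linarith

lemma likeRatio_le_of_large_shift (W : IsWindow η w) (hs : w ^ 3 ≤ stdDev n t) (hk : k ≤ n)
    (hy : |zScore n t k| ≤ (1 + η) * √w) {z : ℝ} (hz : |z| ∈ Icc (3 * √w) (4 * √w)) :
    likeRatio n t z k ≤ η := by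
  have hw := W.le_window
  have hr := W.four_le_sqrt
  have hy' : |zScore n t k| ≤ 21 / 20 * √w := hy.trans (by nlinarith [W.tolerance_le])
  refine (W.likeRatio_le_exp hs hk hz.2 (by linarith)).trans
    (le_trans (Real.exp_le_exp.2 ?_) W.exp_le)
  have hzy : z * zScore n t k ≤ |z| * (21 / 20 * √w) := calc
    z * zScore n t k ≤ |z| * |zScore n t k| := (le_abs_self _).trans_eq (abs_mul _ _)
    _ ≤ |z| * (21 / 20 * √w) := by gcongr
  have hz₂ : |z| * (3 * √w) ≤ z ^ 2 := by
    rw [← sq_abs, sq]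
    gcongr
    exact hz.1
  have hzw : 3 * √w * √w ≤ |z| * √w := by
    gcongr
    exact hz.1
  nlinarith [W.sq_sqrt, W.tolerance_le]

end IsWindow

end Boundary

/-! ### The count chain in logistic time -/

section CountChain

variable {n k l r : ℕ} {s t t' w η ε Δ z σ : ℝ}

/-- The time in `(0, 1)` with log-odds `2 * s`. On this time scale the shift size of a harmonic
likelihood ratio grows exactly like `exp s`. -/
def logisticTime (s : ℝ) : ℝ := Real.sigmoid (2 * s)

lemma logisticTime_eq (s : ℝ) :
    logisticTime s = Real.exp s / (Real.exp s + Real.exp (-s)) := by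
  rw [logisticTime, Real.sigmoid_def, ← one_div, div_eq_div_iff (by positivity) (by positivity),
    one_mul, mul_add, mul_one, ← Real.exp_add]
  ring_nf

lemma one_sub_logisticTime (s : ℝ) :
    1 - logisticTime s = Real.exp (-s) / (Real.exp s + Real.exp (-s)) := by
  rw [logisticTime_eq]
  field_simp
  ring

lemma logisticTime_neg (s : ℝ) : logisticTime (-s) = 1 - logisticTime s := by
  rw [logisticTime_eq, one_sub_logisticTime, neg_neg, add_comm]

lemma logisticTime_mem_Ioo (s : ℝ) : logisticTime s ∈ Ioo (0 : ℝ) 1 :=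
  ⟨Real.sigmoid_pos _, Real.sigmoid_lt_one _⟩

lemma logisticTime_mono : Monotone logisticTime :=
  fun _ _ h ↦ Real.sigmoid_monotone (by linarith)

lemma stdDev_logisticTime (n : ℕ) (s : ℝ) :
    stdDev n (logisticTime s) = √n / (Real.exp s + Real.exp (-s)) := by
  have hexp : Real.exp s * Real.exp (-s) = 1 := by
    rw [← Real.exp_add, add_neg_cancel, Real.exp_zero]
  have hvar : (n : ℝ) * logisticTime s * (1 - logisticTime s)
      = n / (Real.exp s + Real.exp (-s)) ^ 2 := by
    rw [one_sub_logisticTime, logisticTime_eq]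
    field_simp
    linear_combination (n : ℝ) * hexp
  rw [stdDev, hvar, Real.sqrt_div (by positivity), Real.sqrt_sq (by positivity)]

lemma tilt_up_logisticTime (hn : 0 < n) (s Δ z : ℝ) :
    1 + z * Real.exp Δ * (1 - logisticTime (s + Δ)) / stdDev n (logisticTime (s + Δ))
      = 1 + z / √n * Real.exp (-s) := by
  have : (0 : ℝ) < √n := by positivity
  rw [one_sub_logisticTime, stdDev_logisticTime, neg_add, Real.exp_add (-s), Real.exp_neg Δ]
  field_simp

lemma tilt_down_logisticTime (hn : 0 < n) (s Δ z : ℝ) :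
    1 - z * Real.exp Δ * logisticTime (s + Δ) / stdDev n (logisticTime (s + Δ))
      = 1 - z / √n * (Real.exp s * Real.exp Δ ^ 2) := by
  have : (0 : ℝ) < √n := by positivity
  rw [stdDev_logisticTime, logisticTime_eq, Real.exp_add s]
  field_simp

lemma likeRatio_logisticTime_add (hn : 0 < n) (s Δ z : ℝ) (k : ℕ) :
    likeRatio n (logisticTime (s + Δ)) (z * Real.exp Δ) k =
      (1 + z / √n * Real.exp (-s)) ^ k
        * (1 - z / √n * (Real.exp s * Real.exp Δ ^ 2)) ^ (n - k) := by
  rw [likeRatio, tilt_up_logisticTime hn, tilt_down_logisticTime hn]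

lemma likeRatio_logisticTime (hn : 0 < n) (s z : ℝ) (k : ℕ) :
    likeRatio n (logisticTime s) z k =
      (1 + z / √n * Real.exp (-s)) ^ k * (1 - z / √n * Real.exp s) ^ (n - k) := by
  simpa using likeRatio_logisticTime_add hn s 0 z k

/-- The conditional probability that a uniform variable above `t` is at most `t'`. -/
def jumpProb (t t' : ℝ) : ℝ := (t' - t) / (1 - t)

lemma jumpProb_mem_Icc (ht : t < 1) (htt' : t ≤ t') (ht' : t' ≤ 1) :
    jumpProb t t' ∈ Icc (0 : ℝ) 1 :=
  ⟨div_nonneg (by linarith) (by linarith), (div_le_one (by linarith)).2 (by linarith)⟩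

lemma jumpProb_logisticTime_mem_Icc (hΔ : 0 ≤ Δ) :
    jumpProb (logisticTime s) (logisticTime (s + Δ)) ∈ Icc (0 : ℝ) 1 :=
  jumpProb_mem_Icc (logisticTime_mem_Ioo s).2 (logisticTime_mono (by linarith))
    (logisticTime_mem_Ioo _).2.le

lemma one_sub_jumpProb_logisticTime (s Δ : ℝ) :
    1 - jumpProb (logisticTime s) (logisticTime (s + Δ)) =
      (1 + Real.exp s ^ 2) / (1 + Real.exp s ^ 2 * Real.exp Δ ^ 2) := by
  have h : 1 - logisticTime s ≠ 0 := (sub_pos.2 (logisticTime_mem_Ioo s).2).ne'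
  have hstay : 1 - jumpProb (logisticTime s) (logisticTime (s + Δ))
      = (1 - logisticTime (s + Δ)) / (1 - logisticTime s) := by
    rw [jumpProb]
    field_simp
    ring
  rw [hstay, one_sub_logisticTime, one_sub_logisticTime]
  simp only [Real.exp_neg, Real.exp_add]
  field_simp
  ring

lemma jumpProb_logisticTime_le (hΔ : 0 ≤ Δ) :
    jumpProb (logisticTime s) (logisticTime (s + Δ)) ≤ 2 * Δ := by
  have hone : 1 ≤ Real.exp Δ ^ 2 := one_le_pow₀ (Real.one_le_exp hΔ)
  have hstay : 1 - 2 * Δ ≤ (1 + Real.exp s ^ 2) / (1 + Real.exp s ^ 2 * Real.exp Δ ^ 2) := calc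
    1 - 2 * Δ ≤ Real.exp (-(2 * Δ)) := by linarith [Real.add_one_le_exp (-(2 * Δ))]
    _ = 1 / Real.exp Δ ^ 2 := by rw [Real.exp_neg, ← Real.exp_nat_mul, Nat.cast_ofNat, one_div]
    _ ≤ _ := by
        rw [div_le_div_iff₀ (by positivity) (by positivity)]
        nlinarith [sq_nonneg (Real.exp s)]
  linarith [one_sub_jumpProb_logisticTime s Δ]

lemma jumpProb_mul_tilt_add (s Δ x : ℝ) :
    jumpProb (logisticTime s) (logisticTime (s + Δ)) * (1 + x * Real.exp (-s))
      + (1 - jumpProb (logisticTime s) (logisticTime (s + Δ)))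
        * (1 - x * (Real.exp s * Real.exp Δ ^ 2)) = 1 - x * Real.exp s := by
  have h := one_sub_jumpProb_logisticTime s Δ
  rw [h, eq_sub_of_add_eq' (sub_eq_iff_eq_add.1 h).symm, Real.exp_neg]
  field_simp
  ring

/-- The transition kernel from time `t` to time `t'` of the number of uniform variables among `n`
seen so far: each variable still to come arrives independently. -/
def transition (n : ℕ) (t t' : ℝ) (k l : ℕ) : ℝ :=
  if k ≤ l then binomMass (n - k) (jumpProb t t') (l - k) else 0

/-- The conditional mean of `f` at the count of time `t'`, given the count `k` at time `t`. -/
def condMean (n : ℕ) (t t' : ℝ) (f : ℕ → ℝ) (k : ℕ) : ℝ :=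
  ∑ l ∈ Finset.range (n + 1), transition n t t' k l * f l

lemma condMean_eq_sum_jump (t t' : ℝ) (f : ℕ → ℝ) (hk : k ≤ n) :
    condMean n t t' f k =
      ∑ r ∈ Finset.range (n - k + 1), binomMass (n - k) (jumpProb t t') r * f (k + r) := by
  obtain ⟨m, rfl⟩ := Nat.exists_eq_add_of_le hk
  rw [condMean, Nat.add_sub_cancel_left, add_assoc, Finset.sum_range_add, Finset.sum_eq_zero,
    zero_add]
  · exact Finset.sum_congr rfl fun r _ ↦ by simp [transition]
  · intro l hl
    simp [transition, Finset.mem_range.1 hl]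

lemma transition_nonneg (hq : jumpProb t t' ∈ Icc (0 : ℝ) 1) (n k l : ℕ) :
    0 ≤ transition n t t' k l := by
  unfold transition
  split_ifs
  exacts [binomMass_nonneg hq _ _, le_rfl]

lemma condMean_const (t t' c : ℝ) (hk : k ≤ n) : condMean n t t' (fun _ ↦ c) k = c := by
  rw [condMean_eq_sum_jump t t' _ hk, ← Finset.sum_mul, sum_binomMass, one_mul]

lemma condMean_sub (n : ℕ) (t t' : ℝ) (f g : ℕ → ℝ) (k : ℕ) :
    condMean n t t' (fun l ↦ f l - g l) k = condMean n t t' f k - condMean n t t' g k := by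
  simp only [condMean, mul_sub, Finset.sum_sub_distrib]

lemma condMean_add (n : ℕ) (t t' : ℝ) (f g : ℕ → ℝ) (k : ℕ) :
    condMean n t t' (fun l ↦ f l + g l) k = condMean n t t' f k + condMean n t t' g k := by
  simp only [condMean, mul_add, Finset.sum_add_distrib]

lemma condMean_const_mul (n : ℕ) (t t' c : ℝ) (f : ℕ → ℝ) (k : ℕ) :
    condMean n t t' (fun l ↦ c * f l) k = c * condMean n t t' f k := by
  simp only [condMean, Finset.mul_sum, mul_left_comm]

lemma condMean_mono (hq : jumpProb t t' ∈ Icc (0 : ℝ) 1) {f g : ℕ → ℝ} (hk : k ≤ n)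
    (hfg : ∀ r, k + r ≤ n → f (k + r) ≤ g (k + r)) :
    condMean n t t' f k ≤ condMean n t t' g k := by
  rw [condMean_eq_sum_jump t t' f hk, condMean_eq_sum_jump t t' g hk]
  refine Finset.sum_le_sum fun r hr ↦
    mul_le_mul_of_nonneg_left (hfg r ?_) (binomMass_nonneg hq _ _)
  have := Finset.mem_range.1 hr
  omega

lemma binomMass_mul_transition (ht : t < 1) (hkl : k ≤ l) (hl : l ≤ n) :
    binomMass n t k * transition n t t' k l
      = n.choose l * (1 - t') ^ (n - l) * (t ^ k * (t' - t) ^ (l - k) * l.choose k) := by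
  have ht' : 1 - t ≠ 0 := (sub_pos.2 ht).ne'
  have hjump : (1 - t) * jumpProb t t' = t' - t := by rw [jumpProb]; field_simp
  have hstay : (1 - t) * (1 - jumpProb t t') = 1 - t' := by linear_combination -hjump
  have hchoose : (n.choose k : ℝ) * ((n - k).choose (l - k) : ℝ) = n.choose l * l.choose k := by
    exact_mod_cast (Nat.choose_mul hkl).symm
  rw [transition, if_pos hkl, binomMass, binomMass, ← hjump, ← hstay,
    show n - k - (l - k) = n - l by omega, show n - k = (l - k) + (n - l) by omega, pow_add,
    mul_pow, mul_pow]
  rw [show n - k = (l - k) + (n - l) by omega] at hchoose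
  linear_combination (t ^ k * (1 - t) ^ (l - k) * (1 - t) ^ (n - l) * jumpProb t t' ^ (l - k)
    * (1 - jumpProb t t') ^ (n - l)) * hchoose

lemma sum_binomMass_mul_transition (ht : t < 1) (t' : ℝ) (hl : l ≤ n) :
    ∑ k ∈ Finset.range (n + 1), binomMass n t k * transition n t t' k l = binomMass n t' l := by
  have hsub : Finset.range (l + 1) ⊆ Finset.range (n + 1) := by
    simpa only [Finset.range_subset_range, add_le_add_iff_right]
  rw [← Finset.sum_subset hsub fun k _ hk ↦ by
    rw [transition, if_neg (by simpa [Nat.lt_succ_iff] using hk), mul_zero]]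
  rw [Finset.sum_congr rfl fun k hk ↦
    binomMass_mul_transition (t' := t') ht (Nat.lt_succ_iff.1 (Finset.mem_range.1 hk)) hl,
    ← Finset.mul_sum, ← add_pow, add_sub_cancel, binomMass]
  ring

lemma condMean_likeRatio (hn : 0 < n) (s Δ z : ℝ) (hk : k ≤ n) :
    condMean n (logisticTime s) (logisticTime (s + Δ))
      (likeRatio n (logisticTime (s + Δ)) (z * Real.exp Δ)) k
        = likeRatio n (logisticTime s) z k := by
  rw [condMean_eq_sum_jump _ _ _ hk]
  simp_rw [likeRatio_logisticTime_add hn]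
  rw [likeRatio_logisticTime hn, ← jumpProb_mul_tilt_add s Δ (z / √n),
    add_pow (_ * (1 + z / √n * Real.exp (-s))), Finset.mul_sum]
  refine Finset.sum_congr rfl fun r _ ↦ ?_
  rw [binomMass, Nat.sub_add_eq, pow_add, mul_pow, mul_pow]
  ring

lemma mixLR_shift (n : ℕ) (t σ a b δ : ℝ) (k : ℕ) :
    mixLR n t σ (a - δ) (b - δ) k = ∫ v in a..b, likeRatio n t (σ * Real.exp (v - δ)) k :=
  (intervalIntegral.integral_comp_sub_right (fun v ↦ likeRatio n t (σ * Real.exp v) k) δ).symm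

lemma continuous_likeRatio_exp_sub (n : ℕ) (t σ δ : ℝ) (k : ℕ) :
    Continuous fun v ↦ likeRatio n t (σ * Real.exp (v - δ)) k :=
  (continuous_likeRatio_exp n t σ k).comp (continuous_sub_right δ)

lemma condMean_mixLR (hn : 0 < n) (s Δ σ a b : ℝ) (hk : k ≤ n) :
    condMean n (logisticTime s) (logisticTime (s + Δ))
      (mixLR n (logisticTime (s + Δ)) σ a b) k
        = mixLR n (logisticTime s) σ (a - Δ) (b - Δ) k := by
  rw [mixLR_shift]
  simp only [condMean, mixLR, ← intervalIntegral.integral_const_mul]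
  rw [← intervalIntegral.integral_finsetSum fun l _ ↦
    (intervalIntegrable_likeRatio_exp n _ σ l a b).const_mul _]
  refine intervalIntegral.integral_congr fun v _ ↦ ?_
  have hv : σ * Real.exp v = σ * Real.exp (v - Δ) * Real.exp Δ := by
    rw [mul_assoc, ← Real.exp_add, sub_add_cancel]
  simp only [hv]
  exact condMean_likeRatio hn s Δ _ hk

lemma sum_binomMass_mul_mixLR (h : 0 < stdDev n t) (σ a b : ℝ) :
    ∑ k ∈ Finset.range (n + 1), binomMass n t k * mixLR n t σ a b k = b - a := by
  simp only [mixLR, ← intervalIntegral.integral_const_mul]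
  rw [← intervalIntegral.integral_finsetSum fun l _ ↦
    (intervalIntegrable_likeRatio_exp n _ σ l a b).const_mul _]
  simp_rw [sum_binomMass_mul_likeRatio h, intervalIntegral.integral_const, smul_eq_mul, mul_one]

lemma sum_binomMass_mul_potential (h : 0 < stdDev n t) (w ε : ℝ) :
    ∑ k ∈ Finset.range (n + 1), binomMass n t k * potential n w ε t k
      = 2 * (w * ε) * logShiftRange w := by
  simp only [potential, mul_left_comm _ (w * ε), ← Finset.mul_sum, mul_add, Finset.sum_add_distrib,
    windowMix, sum_binomMass_mul_mixLR h, logShiftRange]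
  ring

/-- The potential with all shift sizes multiplied by `exp (-Δ)`. -/
def shiftedPotential (n : ℕ) (w ε t Δ : ℝ) (k : ℕ) : ℝ :=
  w * ε * (mixLR n t 1 (minLogShift w - Δ) (maxLogShift w - Δ) k
    + mixLR n t (-1) (minLogShift w - Δ) (maxLogShift w - Δ) k)

lemma condMean_potential (hn : 0 < n) (w ε s Δ : ℝ) (hk : k ≤ n) :
    condMean n (logisticTime s) (logisticTime (s + Δ)) (potential n w ε (logisticTime (s + Δ))) k
      = shiftedPotential n w ε (logisticTime s) Δ k := by
  rw [shiftedPotential, ← condMean_mixLR hn s Δ 1 _ _ hk, ← condMean_mixLR hn s Δ (-1) _ _ hk,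
    ← condMean_add, ← condMean_const_mul]
  rfl

namespace IsWindow

lemma abs_mixLR_small_shifts_sub_le (W : IsWindow η w) (hs : w ^ 3 ≤ stdDev n t) (hk : k ≤ n)
    (hy : |zScore n t k| ≤ (1 + η) * √w) (hσ : |σ| = 1) (hΔ : 0 ≤ Δ) :
    |mixLR n t σ (minLogShift w - Δ) (minLogShift w) k - Δ| ≤ 6 * η * Δ := by
  have hsub : mixLR n t σ (minLogShift w - Δ) (minLogShift w) k - Δ
      = ∫ v in (minLogShift w - Δ)..minLogShift w, (likeRatio n t (σ * Real.exp v) k - 1) := by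
    rw [intervalIntegral.integral_sub (intervalIntegrable_likeRatio_exp n t σ k _ _)
      intervalIntegrable_const, mixLR]
    simp
  have hbound := intervalIntegral.norm_integral_le_of_norm_le_const
    (a := minLogShift w - Δ) (b := minLogShift w)
    (f := fun v ↦ likeRatio n t (σ * Real.exp v) k - 1) (C := 6 * η) fun v hv ↦ by
      rw [uIoc_of_le (by linarith)] at hv
      refine W.abs_likeRatio_sub_one_le hs hk hy ?_
      rw [abs_mul, hσ, one_mul, abs_of_pos (Real.exp_pos v), ← W.exp_minLogShift]
      exact Real.exp_le_exp.2 hv.2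
  rwa [← hsub, sub_sub_cancel, abs_of_nonneg hΔ] at hbound

lemma mixLR_large_shifts_mem (W : IsWindow η w) (hs : w ^ 3 ≤ stdDev n t) (hk : k ≤ n)
    (hy : |zScore n t k| ≤ (1 + η) * √w) (hσ : |σ| = 1) (hΔ : Δ ∈ Icc (0 : ℝ) (1 / 4)) :
    mixLR n t σ (maxLogShift w - Δ) (maxLogShift w) k ∈ Icc 0 (η * Δ) := by
  have hr := W.four_le_sqrt
  have habs (v : ℝ) : |σ * Real.exp v| = Real.exp v := by
    rw [abs_mul, hσ, one_mul, abs_of_pos (Real.exp_pos v)]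
  have hle : maxLogShift w - Δ ≤ maxLogShift w := by linarith [hΔ.1]
  have hLR : ∀ v ∈ Icc (maxLogShift w - Δ) (maxLogShift w),
      likeRatio n t (σ * Real.exp v) k ∈ Icc 0 η := fun v hv ↦ by
    have hup := W.exp_le_of_le_maxLogShift hv.2
    have hexp : 3 / 4 ≤ Real.exp (-Δ) := by linarith [Real.add_one_le_exp (-Δ), hΔ.2]
    have hdown : 3 * √w ≤ Real.exp v := calc
      3 * √w = 4 * √w * (3 / 4) := by ring
      _ ≤ 4 * √w * Real.exp (-Δ) := by gcongr
      _ = Real.exp (maxLogShift w - Δ) := by rw [sub_eq_add_neg, Real.exp_add, W.exp_maxLogShift]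
      _ ≤ Real.exp v := Real.exp_le_exp.2 hv.1
    refine ⟨likeRatio_nonneg (W.stdDev_pos hs) ?_ k,
      W.likeRatio_le_of_large_shift hs hk hy ?_⟩ <;> rw [habs]
    exacts [by linarith [W.sqrt_le_stdDev hs], ⟨hdown, hup⟩]
  refine ⟨intervalIntegral.integral_nonneg hle fun v hv ↦ (hLR v hv).1, ?_⟩
  calc mixLR n t σ (maxLogShift w - Δ) (maxLogShift w) k
      ≤ ∫ _ in (maxLogShift w - Δ)..maxLogShift w, η :=
        intervalIntegral.integral_mono_on hle (intervalIntegrable_likeRatio_exp n t σ k _ _)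
          intervalIntegrable_const fun v hv ↦ (hLR v hv).2
    _ = η * Δ := by rw [intervalIntegral.integral_const, sub_sub_cancel, smul_eq_mul, mul_comm]

lemma mixLR_shift_sub_windowMix_mem (W : IsWindow η w) (hs : w ^ 3 ≤ stdDev n t) (hk : k ≤ n)
    (hy : |zScore n t k| ≤ (1 + η) * √w) (hσ : |σ| = 1) (hΔ : Δ ∈ Icc (0 : ℝ) (1 / 4)) :
    mixLR n t σ (minLogShift w - Δ) (maxLogShift w - Δ) k - windowMix n w t σ k
      ∈ Icc (Δ * (1 - 7 * η)) (Δ * (1 + 6 * η)) := by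
  have hsmall := abs_le.1 (W.abs_mixLR_small_shifts_sub_le hs hk hy hσ hΔ.1)
  have hlarge := W.mixLR_large_shifts_mem hs hk hy hσ hΔ
  have hleft := mixLR_add_mixLR n t σ (minLogShift w - Δ) (minLogShift w) (maxLogShift w) k
  have hright := mixLR_add_mixLR n t σ (minLogShift w - Δ) (maxLogShift w - Δ) (maxLogShift w) k
  rw [windowMix]
  constructor <;> linarith [hlarge.1, hlarge.2, hsmall.1, hsmall.2]

lemma shiftedPotential_sub_potential_mem (W : IsWindow η w) (E : IsLevel η w ε)
    (hs : w ^ 3 ≤ stdDev n t) (hk : k ≤ n) (hc : NonCrossing n ε t k)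
    (hΔ : Δ ∈ Icc (0 : ℝ) (1 / 4)) :
    shiftedPotential n w ε t Δ k - potential n w ε t k
      ∈ Icc (2 * (w * ε) * Δ * (1 - 7 * η)) (2 * (w * ε) * Δ * (1 + 6 * η)) := by
  have hy := W.abs_zScore_le E hs hk hc
  have hup := W.mixLR_shift_sub_windowMix_mem hs hk hy (σ := 1) abs_one hΔ
  have hdown := W.mixLR_shift_sub_windowMix_mem hs hk hy (σ := -1) (by simp) hΔ
  have hwε : 0 ≤ w * ε := mul_nonneg (by linarith [W.le_window]) E.pos.le
  rw [shiftedPotential, potential, ← mul_sub]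
  constructor
  · calc 2 * (w * ε) * Δ * (1 - 7 * η) = w * ε * (2 * (Δ * (1 - 7 * η))) := by ring
      _ ≤ _ := mul_le_mul_of_nonneg_left (by linarith [hup.1, hdown.1]) hwε
  · calc _ ≤ w * ε * (2 * (Δ * (1 + 6 * η))) :=
          mul_le_mul_of_nonneg_left (by linarith [hup.2, hdown.2]) hwε
      _ = 2 * (w * ε) * Δ * (1 + 6 * η) := by ring

lemma tilt_up_le_mul_tilt_down (W : IsWindow η w) (hs : w ^ 3 ≤ stdDev n t) (hz : |z| ≤ 4 * √w) :
    1 + z * (1 - t) / stdDev n t ≤ (1 + η) * (1 - z * t / stdDev n t) := by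
  have h := W.stdDev_pos hs
  have hη := W.tolerance_pos
  obtain ⟨-, hdown⟩ := abs_tilt_le_half h (z := z) (by linarith [W.sqrt_le_stdDev hs])
  have hratio : z / stdDev n t ≤ η / 1024 := by
    rw [div_le_iff₀ h]
    linarith [le_abs_self z, W.sqrt_le_tolerance_mul hs]
  have hsplit : 1 + z * (1 - t) / stdDev n t = 1 - z * t / stdDev n t + z / stdDev n t := by ring
  nlinarith [(abs_le.1 hdown).2]

end IsWindow

lemma pow_mul_pow_le_of_tilt {b c q : ℝ} (hη : 0 ≤ η) (hb : 0 ≤ b) (hc : 0 ≤ c)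
    (hq : q ∈ Icc (0 : ℝ) 1) (hbc : b ≤ (1 + η) * c) (hstay : 1 ≤ (1 + η) * (1 - q) ^ (n - k))
    (hk : k + r ≤ n) :
    b ^ (k + r) * c ^ (n - (k + r))
      ≤ (1 + η) ^ (r + 1) * (b ^ k * (q * b + (1 - q) * c) ^ (n - k)) := by
  have hq₀ : 0 ≤ q * b := mul_nonneg hq.1 hb
  have hq₁ : 0 ≤ (1 - q) * c := mul_nonneg (sub_nonneg.2 hq.2) hc
  rw [show n - k = r + (n - (k + r)) by omega] at hstay ⊢
  set m := n - (k + r)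
  calc b ^ (k + r) * c ^ m ≤ b ^ k * ((1 + η) * c) ^ r * c ^ m := by
        rw [pow_add]
        gcongr
    _ = (1 + η) ^ r * (b ^ k * c ^ (r + m)) * 1 := by rw [mul_pow, pow_add]; ring
    _ ≤ (1 + η) ^ r * (b ^ k * c ^ (r + m)) * ((1 + η) * (1 - q) ^ (r + m)) := by gcongr
    _ = (1 + η) ^ (r + 1) * (b ^ k * ((1 - q) * c) ^ (r + m)) := by
        rw [mul_pow (1 - q)]; ring
    _ ≤ (1 + η) ^ (r + 1) * (b ^ k * (q * b + (1 - q) * c) ^ (r + m)) := by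
        gcongr
        linarith

lemma one_le_mul_stay_pow {q : ℝ} (hη : η ∈ Ioc (0 : ℝ) (1 / 20)) (hq : q ∈ Icc (0 : ℝ) 1)
    (hmq : k * q ≤ η / 2) : 1 ≤ (1 + η) * (1 - q) ^ k := by
  have hbernoulli := one_add_mul_le_pow (a := -q) (by linarith [hq.2]) k
  rw [← sub_eq_add_neg] at hbernoulli
  nlinarith [hη.1, hη.2]

lemma expansion_le_of_le_mul {a c : ℝ} (hη : η ∈ Ioc (0 : ℝ) (1 / 20)) (ha : a ≤ 1 + 22 * η)
    (hc : c ≤ (1 + η) ^ (r + 1) * a) : c ≤ 1 + 30 * η + 12 * ((2 : ℝ) ^ r - 1 - r) := by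
  obtain ⟨hη₀, hη₁⟩ := hη
  refine hc.trans ((mul_le_mul_of_nonneg_left ha (by positivity)).trans ?_)
  rcases r with _ | _ | r
  · norm_num
    nlinarith
  · norm_num
    nlinarith [mul_pos hη₀ hη₀, pow_pos hη₀ 3]
  · have hpow : (r : ℝ) + 1 ≤ 2 ^ r := by exact_mod_cast Nat.lt_two_pow_self
    have hprod : (1 + η) ^ (r + 2 + 1) * (1 + 22 * η) ≤ (21 / 20) ^ 3 * 2 ^ r * (21 / 10) := by
      rw [show r + 2 + 1 = 3 + r by ring, pow_add]
      gcongr <;> linarith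
    push_cast
    rw [show (2 : ℝ) ^ (r + 1 + 1) = 4 * 2 ^ r by ring]
    norm_num at hprod ⊢
    linarith

namespace IsWindow

lemma likeRatio_jump_le (W : IsWindow η w) (hs : w ^ 3 ≤ stdDev n (logisticTime (s + Δ)))
    (hΔ : 0 ≤ Δ) (hnΔ : 4 * n * Δ ≤ η) (hk : k + r ≤ n) (hz : |z * Real.exp Δ| ≤ 4 * √w) :
    likeRatio n (logisticTime (s + Δ)) (z * Real.exp Δ) (k + r)
      ≤ (1 + η) ^ (r + 1) * likeRatio n (logisticTime s) z k := by
  have h := W.stdDev_pos hs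
  have hn := pos_of_stdDev_pos h
  have hz' : |z * Real.exp Δ| ≤ stdDev n (logisticTime (s + Δ)) := by
    linarith [W.sqrt_le_stdDev hs, W.four_le_sqrt]
  have hb := one_add_tilt_nonneg h hz'
  have hc := one_sub_tilt_nonneg h hz'
  have hbc := W.tilt_up_le_mul_tilt_down hs hz
  rw [tilt_down_logisticTime hn] at hc hbc
  rw [tilt_up_logisticTime hn] at hb hbc
  rw [likeRatio_logisticTime_add hn, likeRatio_logisticTime hn,
    ← jumpProb_mul_tilt_add s Δ (z / √n)]
  have hq := jumpProb_logisticTime_mem_Icc (s := s) hΔ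
  refine pow_mul_pow_le_of_tilt W.tolerance_pos.le hb hc hq hbc
    (one_le_mul_stay_pow ⟨W.tolerance_pos, W.tolerance_le⟩ hq ?_) hk
  calc ((n - k : ℕ) : ℝ) * jumpProb (logisticTime s) (logisticTime (s + Δ)) ≤ n * (2 * Δ) :=
        mul_le_mul (by exact_mod_cast n.sub_le k) (jumpProb_logisticTime_le hΔ) hq.1 n.cast_nonneg
    _ ≤ η / 2 := by linarith

lemma windowMix_jump_le (W : IsWindow η w) (hs : w ^ 3 ≤ stdDev n (logisticTime (s + Δ)))
    (hΔ : 0 ≤ Δ) (hnΔ : 4 * n * Δ ≤ η) (hk : k + r ≤ n) (hσ : |σ| = 1) :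
    windowMix n w (logisticTime (s + Δ)) σ (k + r) ≤ (1 + η) ^ (r + 1)
      * mixLR n (logisticTime s) σ (minLogShift w - Δ) (maxLogShift w - Δ) k := by
  rw [windowMix, mixLR, mixLR_shift, ← intervalIntegral.integral_const_mul]
  refine intervalIntegral.integral_mono_on W.minLogShift_le_maxLogShift
    (intervalIntegrable_likeRatio_exp n _ σ _ _ _)
    ((continuous_likeRatio_exp_sub n _ σ Δ k).const_mul _ |>.intervalIntegrable _ _) fun v hv ↦ ?_
  have hshift : σ * Real.exp v = σ * Real.exp (v - Δ) * Real.exp Δ := by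
    rw [mul_assoc, ← Real.exp_add, sub_add_cancel]
  rw [hshift]
  refine W.likeRatio_jump_le hs hΔ hnΔ hk ?_
  rw [← hshift, abs_mul, hσ, one_mul, abs_of_pos (Real.exp_pos v)]
  exact W.exp_le_of_le_maxLogShift hv.2

lemma potential_jump_le (W : IsWindow η w) (hε : 0 ≤ ε)
    (hs : w ^ 3 ≤ stdDev n (logisticTime (s + Δ)))
    (hΔ : 0 ≤ Δ) (hnΔ : 4 * n * Δ ≤ η) (hk : k + r ≤ n) :
    potential n w ε (logisticTime (s + Δ)) (k + r)
      ≤ (1 + η) ^ (r + 1) * shiftedPotential n w ε (logisticTime s) Δ k := by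
  have hup := W.windowMix_jump_le hs hΔ hnΔ hk (σ := 1) abs_one
  have hdown := W.windowMix_jump_le hs hΔ hnΔ hk (σ := -1) (by simp)
  have hw := W.le_window
  rw [potential, shiftedPotential, mul_left_comm, mul_add ((1 + η) ^ (r + 1))]
  gcongr

lemma potential_after_jump_le (W : IsWindow η w) (E : IsLevel η w ε)
    (hs : w ^ 3 ≤ stdDev n (logisticTime s)) (hs' : w ^ 3 ≤ stdDev n (logisticTime (s + Δ)))
    (hwε : w * ε ≤ 1) (hΔ : 0 ≤ Δ) (hΔη : Δ ≤ η / 4) (hnΔ : 4 * n * Δ ≤ η) (hk : k + r ≤ n)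
    (hc : NonCrossing n ε (logisticTime s) k) :
    potential n w ε (logisticTime (s + Δ)) (k + r)
      ≤ 1 + 30 * η + 12 * ((2 : ℝ) ^ r - 1 - r) := by
  have hη₀ := W.tolerance_pos
  have hη₁ := W.tolerance_le
  have hkn : k ≤ n := by omega
  refine expansion_le_of_le_mul ⟨hη₀, hη₁⟩ ?_ (W.potential_jump_le E.pos.le hs' hΔ hnΔ hk)
  have hpot := W.potential_le E hs hkn hc
  have hdrift := (W.shiftedPotential_sub_potential_mem E hs hkn hc ⟨hΔ, by linarith⟩).2
  have hsmall : 2 * (w * ε) * Δ * (1 + 6 * η) ≤ 2 * 1 * (η / 4) * (1 + 6 * (1 / 20)) := by gcongr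
  linarith

end IsWindow

end CountChain

/-! ### Survival of the killed chain -/

section Survival

variable {n k m j : ℕ} {s t t' w η ε Δ p : ℝ} {α τ : ℕ → ℝ} {B : ℕ → Set ℕ}

lemma sum_binomMass_mul_two_pow_sub_le (hp : 0 ≤ p) (hnp : n * p ≤ 1) :
    ∑ r ∈ Finset.range (n + 1), binomMass n p r * ((2 : ℝ) ^ r - 1 - r) ≤ (n * p) ^ 2 := by
  have hsum : ∑ r ∈ Finset.range (n + 1), binomMass n p r * ((2 : ℝ) ^ r - 1 - r)
      = (1 + p) ^ n - 1 - n * p := by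
    simp only [mul_sub, Finset.sum_sub_distrib, mul_one, sum_binomMass_mul_pow,
      sum_binomMass_mul_id, sum_binomMass]
    ring_nf
  have hpow : (1 + p) ^ n ≤ Real.exp (n * p) := by
    rw [Real.exp_nat_mul, add_comm]
    gcongr
    exact Real.add_one_le_exp p
  have hexp := Real.abs_exp_sub_one_sub_id_le (x := n * p) (by rwa [abs_of_nonneg (by positivity)])
  linarith [le_abs_self (Real.exp (n * p) - 1 - n * p)]

lemma condMean_le_add_of_jump_le (hq : jumpProb t t' ∈ Icc (0 : ℝ) 1)
    (hnq : n * jumpProb t t' ≤ 1) {c : ℝ} (hc : 0 ≤ c) {f g : ℕ → ℝ} (hk : k ≤ n)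
    (hfg : ∀ r, k + r ≤ n → f (k + r) ≤ g (k + r) + c * ((2 : ℝ) ^ r - 1 - r)) :
    condMean n t t' f k ≤ condMean n t t' g k + c * (n * jumpProb t t') ^ 2 := by
  have hle : ((n - k : ℕ) : ℝ) * jumpProb t t' ≤ n * jumpProb t t' :=
    mul_le_mul_of_nonneg_right (by exact_mod_cast n.sub_le k) hq.1
  have herr := sum_binomMass_mul_two_pow_sub_le hq.1 (hle.trans hnq)
  rw [condMean_eq_sum_jump t t' f hk, condMean_eq_sum_jump t t' g hk]
  calc _ ≤ ∑ r ∈ Finset.range (n - k + 1), (binomMass (n - k) (jumpProb t t') r * g (k + r)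
        + c * (binomMass (n - k) (jumpProb t t') r * ((2 : ℝ) ^ r - 1 - r))) := by
        refine Finset.sum_le_sum fun r hr ↦ ?_
        have hkr : k + r ≤ n := by have := Finset.mem_range.1 hr; omega
        rw [mul_left_comm, ← mul_add]
        exact mul_le_mul_of_nonneg_left (hfg r hkr) (binomMass_nonneg hq _ _)
    _ ≤ _ := by
        rw [Finset.sum_add_distrib, ← Finset.mul_sum]
        gcongr
        exact herr.trans (pow_le_pow_left₀ (mul_nonneg (Nat.cast_nonneg _) hq.1) hle 2)

/-- One step, from time `t` to time `t'`, of the count chain started from the sub-distribution `α`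
and killed if it arrives outside `A`. -/
def killedStep (n : ℕ) (t t' : ℝ) (A : Set ℕ) (α : ℕ → ℝ) : ℕ → ℝ :=
  A.indicator fun l ↦ ∑ k ∈ Finset.range (n + 1), α k * transition n t t' k l

lemma sum_killedStep_mul (n : ℕ) (t t' : ℝ) (A : Set ℕ) (α f : ℕ → ℝ) :
    ∑ l ∈ Finset.range (n + 1), killedStep n t t' A α l * f l
      = ∑ k ∈ Finset.range (n + 1), α k * condMean n t t' (A.indicator f) k := by
  simp only [condMean, Finset.mul_sum]
  rw [Finset.sum_comm]
  refine Finset.sum_congr rfl fun l _ ↦ ?_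
  by_cases hl : l ∈ A
  · simp only [killedStep, indicator_of_mem hl, Finset.sum_mul, mul_assoc]
  · simp only [killedStep, indicator_of_notMem hl, zero_mul, mul_zero, Finset.sum_const_zero]

/-- The integral of `1 + θ - potential` against the sub-distribution `α`. The offset `θ` absorbs the
uncertainty about the potential at a crossing. -/
def meanSlack (n : ℕ) (w ε t θ : ℝ) (α : ℕ → ℝ) : ℝ :=
  ∑ k ∈ Finset.range (n + 1), α k * (1 + θ - potential n w ε t k)

lemma condMean_slack (hn : 0 < n) (w ε s Δ θ : ℝ) (hk : k ≤ n) :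
    condMean n (logisticTime s) (logisticTime (s + Δ))
      (fun l ↦ 1 + θ - potential n w ε (logisticTime (s + Δ)) l) k
        = 1 + θ - shiftedPotential n w ε (logisticTime s) Δ k := by
  rw [condMean_sub, condMean_const _ _ _ hk, condMean_potential hn w ε s Δ hk]

namespace IsWindow

lemma le_meanSlack_killedStep (W : IsWindow η w) (E : IsLevel η w ε)
    (hs : w ^ 3 ≤ stdDev n (logisticTime s)) (hs' : w ^ 3 ≤ stdDev n (logisticTime (s + Δ)))
    (hα : ∀ k, 0 ≤ α k) (hsupp : ∀ k, ¬NonCrossing n ε (logisticTime s) k → α k = 0)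
    (hΔ : Δ ∈ Icc (0 : ℝ) (1 / 4)) :
    meanSlack n w ε (logisticTime s) (-(9 * η)) α
        - 2 * (w * ε) * Δ * (1 + 6 * η) * ∑ k ∈ Finset.range (n + 1), α k
      ≤ meanSlack n w ε (logisticTime (s + Δ)) (-(9 * η))
          (killedStep n (logisticTime s) (logisticTime (s + Δ))
            {l | NonCrossing n ε (logisticTime (s + Δ)) l} α) := by
  rw [meanSlack, meanSlack, sum_killedStep_mul, Finset.mul_sum, ← Finset.sum_sub_distrib]
  refine Finset.sum_le_sum fun k hk ↦ ?_
  replace hk : k ≤ n := Nat.lt_succ_iff.1 (Finset.mem_range.1 hk)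
  by_cases hc : NonCrossing n ε (logisticTime s) k
  swap
  · simp [hsupp k hc]
  have hdrift := (W.shiftedPotential_sub_potential_mem E hs hk hc hΔ).2
  have hkill : 1 + -(9 * η) - shiftedPotential n w ε (logisticTime s) Δ k
      ≤ condMean n (logisticTime s) (logisticTime (s + Δ))
          ({l | NonCrossing n ε (logisticTime (s + Δ)) l}.indicator
            fun l ↦ 1 + -(9 * η) - potential n w ε (logisticTime (s + Δ)) l) k := by
    rw [← condMean_slack (pos_of_stdDev_pos (W.stdDev_pos hs)) w ε s Δ _ hk]
    refine condMean_mono (jumpProb_logisticTime_mem_Icc hΔ.1) hk fun r hr ↦ ?_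
    refine le_indicator_apply (s := {l | NonCrossing n ε (logisticTime (s + Δ)) l})
      (fun _ ↦ le_rfl) fun hout ↦ ?_
    linarith [W.le_potential E hs' hr hout]
  rw [mul_comm _ (α k), ← mul_sub]
  exact mul_le_mul_of_nonneg_left (by linarith) (hα k)

lemma condMean_indicator_slack_le (W : IsWindow η w) (E : IsLevel η w ε)
    (hs : w ^ 3 ≤ stdDev n (logisticTime s)) (hs' : w ^ 3 ≤ stdDev n (logisticTime (s + Δ)))
    (hwε : w * ε ≤ 1) (hΔ : 0 ≤ Δ) (hΔη : Δ ≤ η / 4) (hnΔ : 4 * n * Δ ≤ η) (hk : k ≤ n)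
    (hc : NonCrossing n ε (logisticTime s) k) :
    condMean n (logisticTime s) (logisticTime (s + Δ))
        ({l | NonCrossing n ε (logisticTime (s + Δ)) l}.indicator
          fun l ↦ 1 + 30 * η - potential n w ε (logisticTime (s + Δ)) l) k
      ≤ 1 + 30 * η - shiftedPotential n w ε (logisticTime s) Δ k + 48 * (n * Δ) ^ 2 := by
  have hq := jumpProb_logisticTime_mem_Icc (s := s) hΔ
  have hnq : n * jumpProb (logisticTime s) (logisticTime (s + Δ)) ≤ 2 * (n * Δ) := calc
    _ ≤ n * (2 * Δ) := mul_le_mul_of_nonneg_left (jumpProb_logisticTime_le hΔ) n.cast_nonneg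
    _ = 2 * (n * Δ) := by ring
  have hη := W.tolerance_le
  rw [← condMean_slack (pos_of_stdDev_pos (W.stdDev_pos hs)) w ε s Δ _ hk]
  have hnq₁ : n * jumpProb (logisticTime s) (logisticTime (s + Δ)) ≤ 1 := by linarith
  refine (condMean_le_add_of_jump_le hq hnq₁ (c := 12)
    (g := fun l ↦ 1 + 30 * η - potential n w ε (logisticTime (s + Δ)) l)
    (by norm_num) hk ?_).trans ?_
  · intro r hr
    have hpow : (r : ℝ) + 1 ≤ 2 ^ r := by exact_mod_cast Nat.lt_two_pow_self
    refine indicator_apply_le' (fun _ ↦ by linarith) fun _ ↦ ?_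
    linarith [W.potential_after_jump_le E hs hs' hwε hΔ hΔη hnΔ hr hc]
  · have hsq := pow_le_pow_left₀ (mul_nonneg n.cast_nonneg hq.1) hnq 2
    linarith

lemma meanSlack_killedStep_le (W : IsWindow η w) (E : IsLevel η w ε)
    (hs : w ^ 3 ≤ stdDev n (logisticTime s)) (hs' : w ^ 3 ≤ stdDev n (logisticTime (s + Δ)))
    (hα : ∀ k, 0 ≤ α k) (hsupp : ∀ k, ¬NonCrossing n ε (logisticTime s) k → α k = 0)
    (hwε : w * ε ≤ 1) (hΔ : 0 ≤ Δ) (hΔη : Δ ≤ η / 4) (hnΔ : 4 * n * Δ ≤ η) :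
    meanSlack n w ε (logisticTime (s + Δ)) (30 * η)
        (killedStep n (logisticTime s) (logisticTime (s + Δ))
          {l | NonCrossing n ε (logisticTime (s + Δ)) l} α)
      ≤ meanSlack n w ε (logisticTime s) (30 * η) α
        - (2 * (w * ε) * Δ * (1 - 7 * η) - 48 * (n * Δ) ^ 2)
          * ∑ k ∈ Finset.range (n + 1), α k := by
  rw [meanSlack, meanSlack, sum_killedStep_mul, Finset.mul_sum, ← Finset.sum_sub_distrib]
  refine Finset.sum_le_sum fun k hk ↦ ?_
  replace hk : k ≤ n := Nat.lt_succ_iff.1 (Finset.mem_range.1 hk)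
  by_cases hc : NonCrossing n ε (logisticTime s) k
  swap
  · simp [hsupp k hc]
  have hη := W.tolerance_le
  have hdrift := (W.shiftedPotential_sub_potential_mem E hs hk hc ⟨hΔ, by linarith⟩).1
  have hkill := W.condMean_indicator_slack_le E hs hs' hwε hΔ hΔη hnΔ hk hc
  rw [mul_comm _ (α k), ← mul_sub]
  exact mul_le_mul_of_nonneg_left (by linarith) (hα k)

end IsWindow

/-- The law at step `j` of the count chain observed at the times `τ` and killed at the first step
`i` at which it is outside `B i`. -/
def killedLaw (n : ℕ) (τ : ℕ → ℝ) (B : ℕ → Set ℕ) : ℕ → ℕ → ℝ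
  | 0 => (B 0).indicator (binomMass n (τ 0))
  | j + 1 => killedStep n (τ j) (τ (j + 1)) (B (j + 1)) (killedLaw n τ B j)

lemma killedLaw_of_notMem (n : ℕ) (τ : ℕ → ℝ) (hk : k ∉ B j) : killedLaw n τ B j k = 0 := by
  cases j with
  | zero => exact indicator_of_notMem hk (binomMass n (τ 0))
  | succ j => rw [killedLaw, killedStep, indicator_of_notMem hk]

lemma jumpProb_step_mem_Icc (hτ : Monotone τ) (hτ' : ∀ j, τ j ∈ Ico (0 : ℝ) 1) (j : ℕ) :
    jumpProb (τ j) (τ (j + 1)) ∈ Icc (0 : ℝ) 1 :=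
  jumpProb_mem_Icc (hτ' j).2 (hτ j.le_succ) (hτ' _).2.le

lemma killedLaw_nonneg (hτ : Monotone τ) (hτ' : ∀ j, τ j ∈ Ico (0 : ℝ) 1) (n : ℕ) (B : ℕ → Set ℕ)
    (j k : ℕ) : 0 ≤ killedLaw n τ B j k := by
  induction j generalizing k with
  | zero => exact indicator_apply_nonneg fun _ ↦ binomMass_nonneg (Ico_subset_Icc_self (hτ' 0)) n k
  | succ j ih =>
    rw [killedLaw, killedStep]
    exact indicator_apply_nonneg fun _ ↦ Finset.sum_nonneg fun i _ ↦
      mul_nonneg (ih i) (transition_nonneg (jumpProb_step_mem_Icc hτ hτ' j) n i k)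

lemma killedLaw_le_binomMass (hτ : Monotone τ) (hτ' : ∀ j, τ j ∈ Ico (0 : ℝ) 1) (B : ℕ → Set ℕ)
    (j : ℕ) (hk : k ≤ n) : killedLaw n τ B j k ≤ binomMass n (τ j) k := by
  have hpos (j : ℕ) := binomMass_nonneg (Ico_subset_Icc_self (hτ' j)) n
  induction j generalizing k with
  | zero => exact indicator_apply_le' (fun _ ↦ le_rfl) fun _ ↦ hpos 0 k
  | succ j ih =>
    rw [killedLaw, killedStep]
    refine indicator_apply_le' (fun _ ↦ ?_) fun _ ↦ hpos _ k
    rw [← sum_binomMass_mul_transition (hτ' j).2 (τ (j + 1)) hk]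
    exact Finset.sum_le_sum fun i hi ↦ mul_le_mul_of_nonneg_right
      (ih (Nat.lt_succ_iff.1 (Finset.mem_range.1 hi)))
      (transition_nonneg (jumpProb_step_mem_Icc hτ hτ' j) n i k)

lemma sum_killedLaw_le_one (hτ : Monotone τ) (hτ' : ∀ j, τ j ∈ Ico (0 : ℝ) 1) (n : ℕ)
    (B : ℕ → Set ℕ) (j : ℕ) : ∑ k ∈ Finset.range (n + 1), killedLaw n τ B j k ≤ 1 := by
  rw [← sum_binomMass n (τ j)]
  exact Finset.sum_le_sum fun k hk ↦
    killedLaw_le_binomMass hτ hτ' B j (Nat.lt_succ_iff.1 (Finset.mem_range.1 hk))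

lemma sum_binomMass_filter_upperTail_lt_le (hp : p ∈ Icc (0 : ℝ) 1) (n : ℕ) (hε : 0 ≤ ε) :
    ∑ k ∈ Finset.range (n + 1) with upperTail n p k < ε, binomMass n p k ≤ ε := by
  obtain hempty | hne :=
    (Finset.filter (upperTail n p · < ε) (Finset.range (n + 1))).eq_empty_or_nonempty
  · rwa [hempty, Finset.sum_empty]
  refine le_trans ?_ (Finset.mem_filter.1 (Finset.min'_mem _ hne)).2.le
  refine Finset.sum_le_sum_of_subset_of_nonneg (fun k hk ↦ ?_) fun k _ _ ↦ binomMass_nonneg hp n k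
  exact Finset.mem_Icc.2 ⟨Finset.min'_le _ k hk,
    Nat.lt_succ_iff.1 (Finset.mem_range.1 (Finset.mem_filter.1 hk).1)⟩

lemma sum_binomMass_filter_lowerTail_lt_le (hp : p ∈ Icc (0 : ℝ) 1) (n : ℕ) (hε : 0 ≤ ε) :
    ∑ k ∈ Finset.range (n + 1) with lowerTail n p k < ε, binomMass n p k ≤ ε := by
  obtain hempty | hne :=
    (Finset.filter (lowerTail n p · < ε) (Finset.range (n + 1))).eq_empty_or_nonempty
  · rwa [hempty, Finset.sum_empty]
  refine le_trans ?_ (Finset.mem_filter.1 (Finset.max'_mem _ hne)).2.le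
  refine Finset.sum_le_sum_of_subset_of_nonneg (fun k hk ↦ ?_) fun k _ _ ↦ binomMass_nonneg hp n k
  exact Finset.mem_range.2 (Nat.lt_succ_iff.2 (Finset.le_max' _ k hk))

lemma one_sub_two_mul_le_sum_nonCrossing (hp : p ∈ Icc (0 : ℝ) 1) (n : ℕ) (hε : 0 ≤ ε) :
    1 - 2 * ε ≤ ∑ k ∈ Finset.range (n + 1),
      {k | NonCrossing n ε p k}.indicator (binomMass n p) k := by
  classical
  have hupper := sum_binomMass_filter_upperTail_lt_le hp n hε
  have hlower := sum_binomMass_filter_lowerTail_lt_le hp n hε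
  rw [Finset.sum_filter] at hupper hlower
  have hcover : ∑ k ∈ Finset.range (n + 1), binomMass n p k ≤ _ :=
    Finset.sum_le_sum (g := fun k ↦ {k | NonCrossing n ε p k}.indicator (binomMass n p) k
      + ((if upperTail n p k < ε then binomMass n p k else 0)
        + if lowerTail n p k < ε then binomMass n p k else 0)) fun k _ ↦ by
      have := binomMass_nonneg hp n k
      simp only [indicator_apply, mem_ofPred_eq, NonCrossing, ← not_lt]
      split_ifs <;> simp_all
  rw [sum_binomMass, Finset.sum_add_distrib, Finset.sum_add_distrib] at hcover
  linarith

/-- The law of the count chain at the times `τ`, killed when it crosses the boundary of level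
`ε`. -/
def survivalLaw (n : ℕ) (ε : ℝ) (τ : ℕ → ℝ) : ℕ → ℕ → ℝ :=
  killedLaw n τ fun j ↦ {k | NonCrossing n ε (τ j) k}

/-- The probability that the count chain at the times `τ 0, …, τ m` never crosses the boundary of
level `ε`. -/
def survivalMass (n : ℕ) (ε : ℝ) (τ : ℕ → ℝ) (m : ℕ) : ℝ :=
  ∑ k ∈ Finset.range (n + 1), survivalLaw n ε τ m k

/-- The time grid of step `Δ` on the logistic scale. -/
def logisticGrid (s Δ : ℝ) (j : ℕ) : ℝ := logisticTime (s + j * Δ)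

lemma logisticGrid_succ (s Δ : ℝ) (j : ℕ) :
    logisticGrid s Δ (j + 1) = logisticTime (s + j * Δ + Δ) := by
  rw [logisticGrid, Nat.cast_succ, add_one_mul, add_assoc]

lemma monotone_logisticGrid (s : ℝ) (hΔ : 0 ≤ Δ) : Monotone (logisticGrid s Δ) :=
  fun _ _ hij ↦ logisticTime_mono (by gcongr)

lemma logisticGrid_mem_Ico (s Δ : ℝ) (j : ℕ) : logisticGrid s Δ j ∈ Ico (0 : ℝ) 1 :=
  Ioo_subset_Ico_self (logisticTime_mem_Ioo _)

lemma survivalLaw_logisticGrid_nonneg (n : ℕ) (ε s : ℝ) (hΔ : 0 ≤ Δ) (j k : ℕ) :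
    0 ≤ survivalLaw n ε (logisticGrid s Δ) j k :=
  killedLaw_nonneg (monotone_logisticGrid s hΔ) (logisticGrid_mem_Ico s Δ) n _ j k

lemma survivalMass_logisticGrid_le_one (n : ℕ) (ε s : ℝ) (hΔ : 0 ≤ Δ) (m : ℕ) :
    survivalMass n ε (logisticGrid s Δ) m ≤ 1 :=
  sum_killedLaw_le_one (monotone_logisticGrid s hΔ) (logisticGrid_mem_Ico s Δ) n _ m

lemma survivalLaw_logisticGrid_succ (n : ℕ) (ε s Δ : ℝ) (j : ℕ) :
    survivalLaw n ε (logisticGrid s Δ) (j + 1) =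
      killedStep n (logisticTime (s + j * Δ)) (logisticTime (s + j * Δ + Δ))
        {l | NonCrossing n ε (logisticTime (s + j * Δ + Δ)) l}
        (survivalLaw n ε (logisticGrid s Δ) j) := by
  rw [← logisticGrid_succ]
  rfl

lemma meanSlack_eq (n : ℕ) (w ε t θ : ℝ) (α : ℕ → ℝ) :
    meanSlack n w ε t θ α = (1 + θ) * ∑ k ∈ Finset.range (n + 1), α k
      - ∑ k ∈ Finset.range (n + 1), α k * potential n w ε t k := by
  simp only [meanSlack, mul_sub, Finset.sum_sub_distrib, ← Finset.sum_mul]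
  rw [mul_comm]

/-- The value of `meanSlack` for the chain on a logistic grid that has survived `j` steps. -/
def gridSlack (n : ℕ) (w ε s Δ θ : ℝ) (j : ℕ) : ℝ :=
  meanSlack n w ε (logisticGrid s Δ j) θ (survivalLaw n ε (logisticGrid s Δ) j)

namespace IsWindow

lemma gridSlack_le (W : IsWindow η w) (hε : 0 ≤ ε) (hs : w ^ 3 ≤ stdDev n (logisticGrid s Δ j))
    (hΔ : 0 ≤ Δ) (θ : ℝ) :
    gridSlack n w ε s Δ θ j ≤ (1 + θ) * survivalMass n ε (logisticGrid s Δ) j := by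
  rw [gridSlack, meanSlack_eq, survivalMass, sub_le_self_iff]
  exact Finset.sum_nonneg fun k hk ↦ mul_nonneg (survivalLaw_logisticGrid_nonneg n ε s hΔ j k)
    (W.potential_nonneg hε hs (Nat.lt_succ_iff.1 (Finset.mem_range.1 hk)))

lemma le_gridSlack (W : IsWindow η w) (hε : 0 ≤ ε) (hs : w ^ 3 ≤ stdDev n (logisticGrid s Δ j))
    (hΔ : 0 ≤ Δ) (θ : ℝ) :
    (1 + θ) * survivalMass n ε (logisticGrid s Δ) j - 2 * (w * ε) * logShiftRange w
      ≤ gridSlack n w ε s Δ θ j := by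
  rw [gridSlack, meanSlack_eq, survivalMass,
    ← sum_binomMass_mul_potential (W.stdDev_pos hs) w ε]
  refine sub_le_sub_left (Finset.sum_le_sum fun k hk ↦ ?_) _
  have hk := Nat.lt_succ_iff.1 (Finset.mem_range.1 hk)
  exact mul_le_mul_of_nonneg_right (killedLaw_le_binomMass (monotone_logisticGrid s hΔ)
    (logisticGrid_mem_Ico s Δ) _ j hk) (W.potential_nonneg hε hs hk)

lemma le_gridSlack_succ (W : IsWindow η w) (E : IsLevel η w ε)
    (hs : w ^ 3 ≤ stdDev n (logisticGrid s Δ j))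
    (hs' : w ^ 3 ≤ stdDev n (logisticGrid s Δ (j + 1))) (hΔ : Δ ∈ Icc (0 : ℝ) (1 / 4)) :
    gridSlack n w ε s Δ (-(9 * η)) j
        - 2 * (w * ε) * Δ * (1 + 6 * η) * survivalMass n ε (logisticGrid s Δ) j
      ≤ gridSlack n w ε s Δ (-(9 * η)) (j + 1) := by
  rw [logisticGrid_succ] at hs'
  rw [gridSlack, gridSlack, survivalLaw_logisticGrid_succ, logisticGrid_succ]
  exact W.le_meanSlack_killedStep E hs hs' (survivalLaw_logisticGrid_nonneg n ε s hΔ.1 j)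
    (fun k hk ↦ killedLaw_of_notMem n _ hk) hΔ

lemma gridSlack_succ_le (W : IsWindow η w) (E : IsLevel η w ε)
    (hs : w ^ 3 ≤ stdDev n (logisticGrid s Δ j))
    (hs' : w ^ 3 ≤ stdDev n (logisticGrid s Δ (j + 1)))
    (hwε : w * ε ≤ 1) (hΔ : 0 ≤ Δ) (hΔη : Δ ≤ η / 4) (hnΔ : 4 * n * Δ ≤ η) :
    gridSlack n w ε s Δ (30 * η) (j + 1) ≤ gridSlack n w ε s Δ (30 * η) j
      - (2 * (w * ε) * Δ * (1 - 7 * η) - 48 * (n * Δ) ^ 2)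
        * survivalMass n ε (logisticGrid s Δ) j := by
  rw [logisticGrid_succ] at hs'
  rw [gridSlack, gridSlack, survivalLaw_logisticGrid_succ, logisticGrid_succ]
  exact W.meanSlack_killedStep_le E hs hs' (survivalLaw_logisticGrid_nonneg n ε s hΔ j)
    (fun k hk ↦ killedLaw_of_notMem n _ hk) hwε hΔ hΔη hnΔ

lemma le_survivalMass (W : IsWindow η w) (E : IsLevel η w ε)
    (hs : ∀ j ≤ m, w ^ 3 ≤ stdDev n (logisticGrid s Δ j)) (hΔ : Δ ∈ Icc (0 : ℝ) (1 / 4))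
    (hrate : 2 * (w * ε) * Δ * (1 + 6 * η) / (1 - 9 * η) ≤ 1) :
    (1 - 2 * (w * ε) * Δ * (1 + 6 * η) / (1 - 9 * η)) ^ m * ((1 - 9 * η) * (1 - 2 * ε))
      - 2 * (w * ε) * logShiftRange w ≤ survivalMass n ε (logisticGrid s Δ) m := by
  have hη : 0 < 1 - 9 * η := by linarith [W.tolerance_le]
  have hη₀ := W.tolerance_pos
  have hw := W.le_window
  have hε := E.pos
  have hΔ₀ := hΔ.1
  set c := 2 * (w * ε) * Δ * (1 + 6 * η)
  set γ := 2 * (w * ε) * logShiftRange w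
  set X := gridSlack n w ε s Δ (-(9 * η))
  set M := survivalMass n ε (logisticGrid s Δ)
  have hM₀ : 1 - 2 * ε ≤ M 0 :=
    one_sub_two_mul_le_sum_nonCrossing (Ico_subset_Icc_self (logisticGrid_mem_Ico s Δ 0)) n hε.le
  have hX (j : ℕ) (hj : j ≤ m) : (1 - 9 * η) * M j ≤ X j + γ := by
    linarith [W.le_gridSlack hε.le (hs j hj) hΔ₀ (-(9 * η))]
  have hstep (j : ℕ) (hj : j < m) : (1 - c / (1 - 9 * η)) * (X j + γ) ≤ X (j + 1) + γ := by
    have hdrift : c * M j ≤ c / (1 - 9 * η) * (X j + γ) := calc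
      c * M j = c / (1 - 9 * η) * ((1 - 9 * η) * M j) := by field_simp
      _ ≤ _ := mul_le_mul_of_nonneg_left (hX j hj.le) (by positivity)
    linarith [W.le_gridSlack_succ E (hs j hj.le) (hs (j + 1) hj) hΔ]
  have hgronwall := geom_le (u := fun j ↦ X j + γ) (sub_nonneg.2 hrate) m hstep
  have hM : X m ≤ M m := by
    have hle := W.gridSlack_le hε.le (hs m le_rfl) hΔ₀ (-(9 * η))
    have : 0 ≤ M m := Finset.sum_nonneg fun k _ ↦ survivalLaw_logisticGrid_nonneg n ε s hΔ₀ m k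
    nlinarith
  have hinit : (1 - c / (1 - 9 * η)) ^ m * ((1 - 9 * η) * (1 - 2 * ε))
      ≤ (1 - c / (1 - 9 * η)) ^ m * (X 0 + γ) :=
    mul_le_mul_of_nonneg_left ((mul_le_mul_of_nonneg_left hM₀ hη.le).trans (hX 0 m.zero_le))
      (pow_nonneg (sub_nonneg.2 hrate) m)
  linarith

lemma survivalMass_le (W : IsWindow η w) (E : IsLevel η w ε)
    (hs : ∀ j ≤ m, w ^ 3 ≤ stdDev n (logisticGrid s Δ j)) (hwε : w * ε ≤ 1) (hΔ : 0 ≤ Δ)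
    (hΔη : Δ ≤ η / 4) (hnΔ : 4 * n * Δ ≤ η)
    (hrate : 2 * (w * ε) * Δ * (1 - 7 * η) / (1 + 30 * η) ≤ 1) :
    survivalMass n ε (logisticGrid s Δ) m
      ≤ (1 - 2 * (w * ε) * Δ * (1 - 7 * η) / (1 + 30 * η)) ^ m * (1 + 30 * η)
        + m * (48 * (n * Δ) ^ 2) + 2 * (w * ε) * logShiftRange w := by
  have hη₀ := W.tolerance_pos
  have hη₁ : 0 ≤ 1 - 7 * η := by linarith [W.tolerance_le]
  have hw := W.le_window
  have hε := E.pos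
  set c := 2 * (w * ε) * Δ * (1 - 7 * η)
  set e := 48 * (n * Δ) ^ 2
  set X := gridSlack n w ε s Δ (30 * η)
  set M := survivalMass n ε (logisticGrid s Δ)
  have hM (j : ℕ) : M j ≤ 1 := survivalMass_logisticGrid_le_one n ε s hΔ j
  have hX (j : ℕ) (hj : j ≤ m) : X j ≤ (1 + 30 * η) * M j :=
    W.gridSlack_le hε.le (hs j hj) hΔ (30 * η)
  have he : 0 ≤ e := by positivity
  have hc : 0 ≤ c / (1 + 30 * η) := by positivity
  have hstep (j : ℕ) (hj : j < m) :
      X (j + 1) - (j + 1 : ℕ) * e ≤ (1 - c / (1 + 30 * η)) * (X j - j * e) := by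
    have hdrift : c / (1 + 30 * η) * X j ≤ c * M j := calc
      _ ≤ c / (1 + 30 * η) * ((1 + 30 * η) * M j) := mul_le_mul_of_nonneg_left (hX j hj.le) hc
      _ = c * M j := by field_simp
    have hjump : e * M j ≤ e := mul_le_of_le_one_right he (hM j)
    have hpast : 0 ≤ c / (1 + 30 * η) * (j * e) := by positivity
    have := W.gridSlack_succ_le E (hs j hj.le) (hs (j + 1) hj) hwε hΔ hΔη hnΔ
    push_cast
    linarith
  have hgronwall := le_geom (u := fun j : ℕ ↦ X j - j * e) (sub_nonneg.2 hrate) m hstep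
  have hinit : X 0 - (0 : ℕ) * e ≤ 1 + 30 * η := by
    have := hX 0 m.zero_le
    have := hM 0
    push_cast
    nlinarith
  have hlast := W.le_gridSlack hε.le (hs m le_rfl) hΔ (30 * η)
  have hM₀ : 0 ≤ 30 * η * M m := mul_nonneg (by positivity) <|
    Finset.sum_nonneg fun k _ ↦ survivalLaw_logisticGrid_nonneg n ε s hΔ m k
  have := mul_le_mul_of_nonneg_left hinit (pow_nonneg (sub_nonneg.2 hrate) m)
  linarith

end IsWindow

end Survival

/-! ### Law of the count process -/

lemma measureReal_pi_pi_finset {ι α : Type*} [Fintype ι] [MeasurableSpace α] (μ : Measure α)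
    [IsProbabilityMeasure μ] (S : Finset ι) (C : ι → Set α) :
    (Measure.pi fun _ : ι ↦ μ).real ((S : Set ι).pi C) = ∏ i ∈ S, μ.real (C i) := by
  simp_rw [measureReal_def, Measure.pi_pi_finset, ENNReal.toReal_prod]

lemma measureReal_inter_pi_compl {ι α : Type*} [Fintype ι] [DecidableEq ι] [MeasurableSpace α]
    (μ : Measure α) [IsProbabilityMeasure μ] (S : Finset ι) {F : Set (ι → α)}
    (hF : MeasurableSet F) (hdep : DependsOn (· ∈ F) (S : Set ι)) {C : ι → Set α}
    (hC : ∀ i, MeasurableSet (C i)) :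
    (Measure.pi fun _ : ι ↦ μ).real (F ∩ ((Sᶜ : Finset ι) : Set ι).pi C)
      = (Measure.pi fun _ : ι ↦ μ).real F * ∏ i ∈ Sᶜ, μ.real (C i) := by
  obtain ⟨a⟩ := μ.nonempty_of_neZero
  let restr (T : Finset ι) (u : ι → α) (i : T) : α := u i
  have hindep : ProbabilityTheory.IndepFun (restr S) (restr Sᶜ) (Measure.pi fun _ : ι ↦ μ) :=
    (ProbabilityTheory.iIndepFun_pi (X := fun _ ↦ id) fun _ ↦ aemeasurable_id).indepFun_finset
      S Sᶜ disjoint_compl_right measurable_pi_apply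
  let F' : Set (S → α) := Function.updateFinset (fun _ ↦ a) S ⁻¹' F
  have hF' : restr S ⁻¹' F' = F := by
    ext u
    refine iff_of_eq (hdep fun i hi ↦ ?_)
    simp [restr, Function.updateFinset, Finset.mem_coe.1 hi]
  have hC' : restr Sᶜ ⁻¹' univ.pi (fun i ↦ C i) = ((Sᶜ : Finset ι) : Set ι).pi C := by
    ext u
    simp [restr, Set.mem_pi]
  have hmul := hindep.measure_inter_preimage_eq_mul F' (univ.pi fun i ↦ C i)
    (measurable_updateFinset hF) (MeasurableSet.univ_pi fun i ↦ hC i)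
  rw [hF', hC'] at hmul
  rw [← measureReal_pi_pi_finset, measureReal_def, hmul, ENNReal.toReal_mul]
  rfl

/-- The uniform distribution on `[0, 1]`, of which `nullMeasure n` is the `n`-fold power. -/
abbrev unitUniform : Measure ℝ := volume.restrict (Icc 0 1)

instance : IsProbabilityMeasure unitUniform := ⟨by simp⟩

instance (n : ℕ) : IsProbabilityMeasure (nullMeasure n) :=
  inferInstanceAs (IsProbabilityMeasure (Measure.pi fun _ ↦ unitUniform))

section PathEvents

variable {n j k l : ℕ} {t t' : ℝ} {u : Fin n → ℝ} {S S' : Finset (Fin n)} {τ : ℕ → ℝ}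

lemma unitUniform_real_Ioc (ht : 0 ≤ t) (htt' : t ≤ t') (ht' : t' ≤ 1) :
    unitUniform.real (Ioc t t') = t' - t := by
  rw [measureReal_restrict_apply measurableSet_Ioc,
    inter_eq_left.2 (Ioc_subset_Icc_self.trans (Icc_subset_Icc ht ht')),
    Real.volume_real_Ioc_of_le htt']

lemma unitUniform_real_Ioi (ht : t ∈ Icc (0 : ℝ) 1) : unitUniform.real (Ioi t) = 1 - t := by
  rw [measureReal_restrict_apply measurableSet_Ioi, ← Ici_inter_Iic, ← inter_assoc,
    inter_eq_left.2 (Ioi_subset_Ici ht.1), Ioi_inter_Iic, Real.volume_real_Ioc_of_le ht.2]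

lemma unitUniform_real_Iic (ht : t ∈ Icc (0 : ℝ) 1) : unitUniform.real (Iic t) = t := by
  rw [measureReal_restrict_apply measurableSet_Iic, inter_comm, ← Ici_inter_Iic, inter_assoc,
    Iic_inter_Iic, min_eq_right ht.2, Ici_inter_Iic, Real.volume_real_Icc_of_le ht.1, sub_zero]

/-- The indices of the observations of the sample `u` that are at most `t`. -/
def arrived (u : Fin n → ℝ) (t : ℝ) : Finset (Fin n) := {i | u i ≤ t}

lemma mem_arrived {i : Fin n} : i ∈ arrived u t ↔ u i ≤ t := by simp [arrived]

lemma arrived_mono (u : Fin n → ℝ) (h : t ≤ t') : arrived u t ⊆ arrived u t' :=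
  fun _ hi ↦ mem_arrived.2 ((mem_arrived.1 hi).trans h)

lemma arrived_eq_iff : arrived u t = S ↔ (∀ i ∈ S, u i ≤ t) ∧ ∀ i ∈ Sᶜ, t < u i := by
  simp only [Finset.ext_iff, mem_arrived, Finset.mem_compl, ← not_le]
  exact ⟨fun h ↦ ⟨fun i ↦ (h i).2, fun i ↦ mt (h i).1⟩, fun h i ↦ ⟨not_imp_not.1 (h.2 i), h.1 i⟩⟩

/-- The event that exactly the observations indexed by `S` have arrived by time `τ j`, and that the
number of arrivals up to `τ i` was in `B i` for every `i ≤ j`. -/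
def pathEvent (τ : ℕ → ℝ) (B : ℕ → Set ℕ) (j : ℕ) (S : Finset (Fin n)) : Set (Fin n → ℝ) :=
  {u | arrived u (τ j) = S ∧ ∀ i ≤ j, (arrived u (τ i)).card ∈ B i}

/-- The part of `pathEvent τ B j S` that concerns the observations indexed by `S` only. -/
def pastEvent (τ : ℕ → ℝ) (B : ℕ → Set ℕ) (j : ℕ) (S : Finset (Fin n)) : Set (Fin n → ℝ) :=
  {u | (∀ i ∈ S, u i ≤ τ j) ∧ ∀ i ≤ j, {a ∈ S | u a ≤ τ i}.card ∈ B i}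

lemma measurable_card_filter_le (S : Finset (Fin n)) (t : ℝ) :
    Measurable fun u : Fin n → ℝ ↦ {i ∈ S | u i ≤ t}.card := by
  simp_rw [Finset.card_filter]
  exact Finset.measurable_sum _ fun i _ ↦
    Measurable.ite (measurableSet_le (measurable_pi_apply i) measurable_const) measurable_const
      measurable_const

lemma measurableSet_forall_card_filter_mem (τ : ℕ → ℝ) (B : ℕ → Set ℕ) (j : ℕ)
    (S : Finset (Fin n)) :
    MeasurableSet {u : Fin n → ℝ | ∀ i ≤ j, {a ∈ S | u a ≤ τ i}.card ∈ B i} := by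
  simp only [ofPred_forall]
  exact MeasurableSet.iInter fun i ↦ MeasurableSet.iInter fun _ ↦
    measurable_card_filter_le S (τ i) (MeasurableSet.of_discrete (s := B i))

lemma measurableSet_pastEvent (τ : ℕ → ℝ) (B : ℕ → Set ℕ) (j : ℕ) (S : Finset (Fin n)) :
    MeasurableSet (pastEvent τ B j S) :=
  MeasurableSet.inter (MeasurableSet.pi S.countable_toSet fun _ _ ↦ measurableSet_Iic)
    (measurableSet_forall_card_filter_mem τ B j S)

lemma dependsOn_pastEvent (τ : ℕ → ℝ) (B : ℕ → Set ℕ) (j : ℕ) (S : Finset (Fin n)) :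
    DependsOn (· ∈ pastEvent τ B j S) (S : Set (Fin n)) := by
  intro u v huv
  have hfilter (i : ℕ) : {a ∈ S | u a ≤ τ i} = {a ∈ S | v a ≤ τ i} :=
    Finset.filter_congr fun a ha ↦ by rw [huv a ha]
  have hle : (∀ i ∈ S, u i ≤ τ j) ↔ ∀ i ∈ S, v i ≤ τ j :=
    forall₂_congr fun i hi ↦ by rw [huv i hi]
  simp only [pastEvent, mem_ofPred_eq, hfilter, hle]

lemma pathEvent_eq (hτ : Monotone τ) (B : ℕ → Set ℕ) (j : ℕ) (S : Finset (Fin n)) :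
    pathEvent τ B j S
      = pastEvent τ B j S ∩ ((Sᶜ : Finset (Fin n)) : Set (Fin n)).pi fun _ ↦ Ioi (τ j) := by
  ext u
  have hfilter (h : arrived u (τ j) = S) {i : ℕ} (hi : i ≤ j) :
      {a ∈ S | u a ≤ τ i} = arrived u (τ i) := by
    ext a
    simpa [mem_arrived, ← h] using fun ha : u a ≤ τ i ↦ ha.trans (hτ hi)
  constructor
  · rintro ⟨h, hB⟩
    exact ⟨⟨(arrived_eq_iff.1 h).1, fun i hi ↦ by rw [hfilter h hi]; exact hB i hi⟩,
      (arrived_eq_iff.1 h).2⟩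
  · rintro ⟨⟨hle, hB⟩, hlt⟩
    have h := arrived_eq_iff.2 ⟨hle, hlt⟩
    exact ⟨h, fun i hi ↦ by rw [← hfilter h hi]; exact hB i hi⟩

lemma measurableSet_pathEvent (hτ : Monotone τ) (B : ℕ → Set ℕ) (j : ℕ) (S : Finset (Fin n)) :
    MeasurableSet (pathEvent τ B j S) := by
  rw [pathEvent_eq hτ]
  exact (measurableSet_pastEvent τ B j S).inter
    (MeasurableSet.pi (Finset.countable_toSet _) fun _ _ ↦ measurableSet_Ioi)

lemma measureReal_pastEvent_inter_pi (τ : ℕ → ℝ) (B : ℕ → Set ℕ) (j : ℕ) (S : Finset (Fin n))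
    {C : Fin n → Set ℝ} (hC : ∀ i, MeasurableSet (C i)) :
    (nullMeasure n).real (pastEvent τ B j S ∩ ((Sᶜ : Finset (Fin n)) : Set (Fin n)).pi C)
      = (nullMeasure n).real (pastEvent τ B j S) * ∏ i ∈ Sᶜ, unitUniform.real (C i) :=
  measureReal_inter_pi_compl unitUniform S (measurableSet_pastEvent τ B j S)
    (dependsOn_pastEvent τ B j S) hC

lemma measureReal_pathEvent (hτ : Monotone τ) (hτ' : ∀ j, τ j ∈ Ico (0 : ℝ) 1) (B : ℕ → Set ℕ)
    (j : ℕ) (S : Finset (Fin n)) :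
    (nullMeasure n).real (pathEvent τ B j S)
      = (nullMeasure n).real (pastEvent τ B j S) * (1 - τ j) ^ (n - S.card) := by
  rw [pathEvent_eq hτ, measureReal_pastEvent_inter_pi τ B j S fun _ ↦ measurableSet_Ioi,
    Finset.prod_const, unitUniform_real_Ioi (Ico_subset_Icc_self (hτ' j)), Finset.card_compl,
    Fintype.card_fin]

lemma measureReal_pathEvent_zero (hτ : Monotone τ) (hτ' : ∀ j, τ j ∈ Ico (0 : ℝ) 1)
    (B : ℕ → Set ℕ) (hS : S.card ∈ B 0) :
    (nullMeasure n).real (pathEvent τ B 0 S) = τ 0 ^ S.card * (1 - τ 0) ^ (n - S.card) := by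
  have hpast : pastEvent τ B 0 S = (S : Set (Fin n)).pi fun _ ↦ Iic (τ 0) := by
    ext u
    refine ⟨And.left, fun hu ↦ ⟨hu, fun i hi ↦ ?_⟩⟩
    rwa [Nat.le_zero.1 hi, Finset.filter_true_of_mem (p := fun a ↦ u a ≤ τ 0) hu]
  have hbox := measureReal_pi_pi_finset unitUniform S fun _ ↦ Iic (τ 0)
  rw [Finset.prod_const, unitUniform_real_Iic (Ico_subset_Icc_self (hτ' 0))] at hbox
  rw [measureReal_pathEvent hτ hτ', hpast, ← hbox, nullMeasure]

lemma pathEvent_eq_empty (τ : ℕ → ℝ) {B : ℕ → Set ℕ} (hS : S.card ∉ B j) :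
    pathEvent τ B j S = ∅ := by
  refine eq_empty_of_forall_notMem ?_
  rintro u ⟨rfl, hu⟩
  exact hS (hu j le_rfl)

lemma pathEvent_inter_arrived_eq (hτ : Monotone τ) (B : ℕ → Set ℕ) (hSS' : S ⊆ S') :
    pathEvent τ B j S ∩ {u | arrived u (τ (j + 1)) = S'}
      = pastEvent τ B j S ∩ ((Sᶜ : Finset (Fin n)) : Set (Fin n)).pi
          fun i ↦ if i ∈ S' then Ioc (τ j) (τ (j + 1)) else Ioi (τ (j + 1)) := by
  have hmono : τ j ≤ τ (j + 1) := hτ j.le_succ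
  rw [pathEvent_eq hτ, inter_assoc]
  ext u
  refine and_congr_right fun hpast ↦ ⟨?_, fun hu ↦ ⟨fun i hi ↦ ?_, arrived_eq_iff.2
    ⟨fun i hi ↦ ?_, fun i hi ↦ ?_⟩⟩⟩
  · rintro ⟨hj, hj'⟩ i hi
    change u i ∈ ite _ _ _
    split_ifs with hi'
    · exact ⟨hj i hi, (arrived_eq_iff.1 hj').1 i hi'⟩
    · exact (arrived_eq_iff.1 hj').2 i (Finset.mem_compl.2 hi')
  · have hui : u i ∈ ite _ _ _ := hu i hi
    split_ifs at hui
    exacts [hui.1, hmono.trans_lt hui]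
  · by_cases hiS : i ∈ S
    · exact (hpast.1 i hiS).trans hmono
    · have hui : u i ∈ ite _ _ _ := hu i (Finset.mem_coe.2 (Finset.mem_compl.2 hiS))
      rw [if_pos hi] at hui
      exact hui.2
  · have hui : u i ∈ ite _ _ _ := hu i (Finset.mem_coe.2 (Finset.compl_subset_compl.2 hSS' hi))
    rwa [if_neg (Finset.mem_compl.1 hi)] at hui

lemma measureReal_pathEvent_inter_arrived_eq (hτ : Monotone τ)
    (hτ' : ∀ j, τ j ∈ Ico (0 : ℝ) 1) (B : ℕ → Set ℕ) (hSS' : S ⊆ S') :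
    (nullMeasure n).real (pathEvent τ B j S ∩ {u | arrived u (τ (j + 1)) = S'})
      = (nullMeasure n).real (pathEvent τ B j S)
        * (jumpProb (τ j) (τ (j + 1)) ^ (S'.card - S.card)
          * (1 - jumpProb (τ j) (τ (j + 1))) ^ (n - S'.card)) := by
  have hmeas (i : Fin n) :
      MeasurableSet (if i ∈ S' then Ioc (τ j) (τ (j + 1)) else Ioi (τ (j + 1))) := by
    split_ifs
    exacts [measurableSet_Ioc, measurableSet_Ioi]
  have hpos : 1 - τ j ≠ 0 := (sub_pos.2 (hτ' j).2).ne'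
  have harrive : (1 - τ j) * jumpProb (τ j) (τ (j + 1)) = τ (j + 1) - τ j := mul_div_cancel₀ _ hpos
  have hwait : (1 - τ j) * (1 - jumpProb (τ j) (τ (j + 1))) = 1 - τ (j + 1) := by
    rw [mul_one_sub, harrive]
    ring
  have hcard : S'.card ≤ n := S'.card_le_univ.trans_eq (Fintype.card_fin n)
  have hsdiff : ({i ∈ Sᶜ | i ∈ S'} : Finset (Fin n)).card = S'.card - S.card := by
    rw [Finset.filter_mem_eq_inter, Finset.inter_comm, ← Finset.sdiff_eq_inter_compl,
      Finset.card_sdiff_of_subset hSS']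
  have hcompl : ({i ∈ Sᶜ | i ∉ S'} : Finset (Fin n)).card = n - S'.card := by
    rw [Finset.filter_notMem_eq_sdiff, Finset.sdiff_eq_inter_compl, ← Finset.compl_union,
      Finset.union_eq_right.2 hSS', Finset.card_compl, Fintype.card_fin]
  rw [pathEvent_inter_arrived_eq hτ B hSS', measureReal_pastEvent_inter_pi τ B j S hmeas,
    measureReal_pathEvent hτ hτ', mul_assoc]
  congr 1
  simp only [apply_ite, unitUniform_real_Ioc (hτ' j).1 (hτ j.le_succ) (hτ' (j + 1)).2.le,
    unitUniform_real_Ioi (Ico_subset_Icc_self (hτ' (j + 1)))]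
  rw [Finset.prod_ite, Finset.prod_const, Finset.prod_const, hsdiff, hcompl, ← harrive, ← hwait,
    mul_pow, mul_pow, mul_mul_mul_comm, ← pow_add, add_comm, Nat.sub_add_sub_cancel hcard
    (Finset.card_le_card hSS')]

lemma pathEvent_succ_eq_biUnion (hτ : Monotone τ) (B : ℕ → Set ℕ) (hS' : S'.card ∈ B (j + 1)) :
    pathEvent τ B (j + 1) S'
      = ⋃ S ∈ S'.powerset, pathEvent τ B j S ∩ {u | arrived u (τ (j + 1)) = S'} := by
  ext u
  simp only [mem_iUnion, Finset.mem_powerset, exists_prop]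
  constructor
  · rintro ⟨rfl, hu⟩
    exact ⟨arrived u (τ j), arrived_mono u (hτ j.le_succ),
      ⟨rfl, fun i hi ↦ hu i (hi.trans j.le_succ)⟩, rfl⟩
  · rintro ⟨_, _, ⟨rfl, hu⟩, rfl⟩
    exact ⟨rfl, fun i hi ↦ (Nat.le_succ_iff.1 hi).elim (hu i) fun h ↦ h ▸ hS'⟩

lemma pairwise_disjoint_pathEvent (τ : ℕ → ℝ) (B : ℕ → Set ℕ) (j : ℕ) :
    Pairwise (Function.onFun Disjoint (pathEvent (n := n) τ B j)) :=
  fun _ _ hne ↦ disjoint_left.2 fun _ hu hu' ↦ hne (hu.1.symm.trans hu'.1)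

lemma measurableSet_arrived_eq (t : ℝ) (S : Finset (Fin n)) :
    MeasurableSet {u : Fin n → ℝ | arrived u t = S} := by
  simp only [arrived_eq_iff]
  exact (MeasurableSet.pi S.countable_toSet fun _ _ ↦ measurableSet_Iic).inter
    (MeasurableSet.pi (Finset.countable_toSet _) fun _ _ ↦ measurableSet_Ioi)

lemma measureReal_pathEvent_succ (hτ : Monotone τ) (hτ' : ∀ j, τ j ∈ Ico (0 : ℝ) 1)
    (B : ℕ → Set ℕ) (hS' : S'.card ∈ B (j + 1)) :
    (nullMeasure n).real (pathEvent τ B (j + 1) S')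
      = ∑ S ∈ S'.powerset, (nullMeasure n).real (pathEvent τ B j S)
          * (jumpProb (τ j) (τ (j + 1)) ^ (S'.card - S.card)
            * (1 - jumpProb (τ j) (τ (j + 1))) ^ (n - S'.card)) := by
  rw [pathEvent_succ_eq_biUnion hτ B hS', measureReal_biUnion_finset]
  · exact Finset.sum_congr rfl fun S hS ↦
      measureReal_pathEvent_inter_arrived_eq hτ hτ' B (Finset.mem_powerset.1 hS)
  · exact fun S _ R _ hne ↦ (pairwise_disjoint_pathEvent τ B j hne).mono inter_subset_left
      inter_subset_left
  · exact fun S _ ↦ (measurableSet_pathEvent hτ B j S).inter (measurableSet_arrived_eq _ S')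

lemma choose_mul_transition (t t' : ℝ) (hkl : k ≤ l) :
    n.choose k * transition n t t' k l
      = l.choose k * n.choose l * (jumpProb t t' ^ (l - k) * (1 - jumpProb t t') ^ (n - l)) := by
  have hchoose : (n.choose k : ℝ) * (n - k).choose (l - k) = l.choose k * n.choose l := by
    exact_mod_cast (Nat.choose_mul hkl).symm.trans (mul_comm _ _)
  rw [transition, if_pos hkl, binomMass, tsub_tsub_tsub_cancel_right hkl, ← hchoose]
  ring

theorem measureReal_pathEvent_eq (hτ : Monotone τ) (hτ' : ∀ j, τ j ∈ Ico (0 : ℝ) 1)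
    (B : ℕ → Set ℕ) (j : ℕ) (S : Finset (Fin n)) :
    (nullMeasure n).real (pathEvent τ B j S) = killedLaw n τ B j S.card / n.choose S.card := by
  have hcard (S : Finset (Fin n)) : S.card ≤ n := S.card_le_univ.trans_eq (Fintype.card_fin n)
  have hchoose {k : ℕ} (hk : k ≤ n) : (n.choose k : ℝ) ≠ 0 := by
    exact_mod_cast (Nat.choose_pos hk).ne'
  have hout {j : ℕ} {S : Finset (Fin n)} (hS : S.card ∉ B j) :
      (nullMeasure n).real (pathEvent τ B j S) = killedLaw n τ B j S.card / n.choose S.card := by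
    rw [pathEvent_eq_empty τ hS, measureReal_empty, killedLaw_of_notMem n τ hS, zero_div]
  induction j generalizing S with
  | zero =>
    by_cases hS : S.card ∈ B 0
    · rw [measureReal_pathEvent_zero hτ hτ' B hS, killedLaw, indicator_of_mem hS, binomMass,
        mul_assoc, mul_div_cancel_left₀ _ (hchoose (hcard S))]
    · exact hout hS
  | succ j ih =>
    by_cases hS : S.card ∈ B (j + 1)
    swap
    · exact hout hS
    have hrange : Finset.range (S.card + 1) ⊆ Finset.range (n + 1) :=
      Finset.range_subset_range.2 (Nat.succ_le_succ (hcard S))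
    rw [measureReal_pathEvent_succ hτ hτ' B hS, killedLaw, killedStep, indicator_of_mem hS,
      Finset.sum_div, ← Finset.sum_subset hrange fun k _ hk ↦ by
        rw [transition, if_neg fun h ↦ hk (Finset.mem_range.2 (Nat.lt_succ_of_le h)), mul_zero,
          zero_div]]
    simp_rw [ih]
    refine (Finset.sum_powerset_apply_card fun k ↦ killedLaw n τ B j k / n.choose k
      * (jumpProb (τ j) (τ (j + 1)) ^ (S.card - k)
        * (1 - jumpProb (τ j) (τ (j + 1))) ^ (n - S.card))).trans ?_
    refine Finset.sum_congr rfl fun k hk ↦ ?_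
    have hkS := Nat.lt_succ_iff.1 (Finset.mem_range.1 hk)
    have htrans := choose_mul_transition (n := n) (τ j) (τ (j + 1)) hkS
    rw [nsmul_eq_mul, div_mul_eq_mul_div, mul_div_assoc', div_eq_div_iff
      (hchoose (hkS.trans (hcard S))) (hchoose (hcard S))]
    linear_combination -killedLaw n τ B j k * htrans

theorem measureReal_forall_arrived_mem (hτ : Monotone τ) (hτ' : ∀ j, τ j ∈ Ico (0 : ℝ) 1)
    (B : ℕ → Set ℕ) (m : ℕ) :
    (nullMeasure n).real {u | ∀ i ≤ m, (arrived u (τ i)).card ∈ B i}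
      = ∑ k ∈ Finset.range (n + 1), killedLaw n τ B m k := by
  have hunion : {u : Fin n → ℝ | ∀ i ≤ m, (arrived u (τ i)).card ∈ B i}
      = ⋃ S, pathEvent τ B m S := by
    ext u
    simp [pathEvent]
  have hsum := Finset.sum_powerset_apply_card (x := (Finset.univ : Finset (Fin n)))
    fun k ↦ killedLaw n τ B m k / n.choose k
  rw [hunion, measureReal_iUnion_fintype (pairwise_disjoint_pathEvent τ B m)
    (measurableSet_pathEvent hτ B m)]
  simp_rw [measureReal_pathEvent_eq hτ hτ']
  rw [Finset.powerset_univ, Finset.card_fin] at hsum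
  refine hsum.trans (Finset.sum_congr rfl fun k hk ↦ ?_)
  have hchoose : (n.choose k : ℝ) ≠ 0 := by
    exact_mod_cast (Nat.choose_pos (Nat.lt_succ_iff.1 (Finset.mem_range.1 hk))).ne'
  rw [nsmul_eq_mul, mul_div_cancel₀ _ hchoose]

end PathEvents

/-! ### Crossings and the Berk-Jones statistic -/

section BerkJonesBoundary

variable {n k m K : ℕ} {t t' s Δ ε x : ℝ} {u : Fin n → ℝ} {τ : ℕ → ℝ}

lemma betaPDF_eq_binomMass (hk : k ≤ n) (t : ℝ) :
    betaPDF (k + 1) (n - k + 1) t = (n + 1) * binomMass n t k := by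
  have hfac : (n.choose k : ℝ) * k.factorial * (n - k).factorial = n.factorial := by
    exact_mod_cast Nat.choose_mul_factorial_mul_factorial hk
  have hsum : (k : ℝ) + 1 + (n - k + 1) = (n + 1 : ℕ) + 1 := by push_cast; ring
  have hpow (a : ℝ) (l : ℕ) : a ^ ((l : ℝ) + 1 - 1) = a ^ l := by
    rw [add_sub_cancel_right, Real.rpow_natCast]
  have := Nat.factorial_ne_zero k
  have := Nat.factorial_ne_zero (n - k)
  have := Nat.factorial_ne_zero n
  rw [betaPDF, binomMass, hsum, ← Nat.cast_sub hk, hpow, hpow, Real.Gamma_nat_eq_factorial,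
    Real.Gamma_nat_eq_factorial, Real.Gamma_nat_eq_factorial, Nat.factorial_succ, Nat.cast_mul,
    ← hfac]
  push_cast
  field_simp

lemma regIncBeta_eq_upperTail (i : Fin n) (hx : 0 ≤ x) :
    regIncBeta ((i : ℕ) + 1) (n - (i : ℕ)) x = upperTail n x (i + 1) := by
  obtain _ | n := n
  · exact i.elim0
  have hi : (i : ℕ) ≤ n := Nat.lt_succ_iff.1 i.2
  rw [← integral_binomMass_eq_upperTail hi, intervalIntegral.integral_of_le hx, regIncBeta]
  refine integral_congr_ae (Eventually.of_forall fun t ↦ ?_)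
  simp only [← betaPDF_eq_binomMass hi]
  congr 1
  push_cast
  ring

lemma measureReal_nullMeasure_mono {A A' : Set (Fin n → ℝ)}
    (h : ∀ u : Fin n → ℝ, (∀ i, u i ∈ Icc (0 : ℝ) 1) → u ∈ A → u ∈ A') :
    (nullMeasure n).real A ≤ (nullMeasure n).real A' := by
  have hcube : ∀ᵐ u ∂nullMeasure n, ∀ i, u i ∈ Icc (0 : ℝ) 1 := by
    refine ae_all_iff.2 fun i ↦ ?_
    exact (measurePreserving_eval (fun _ ↦ unitUniform) i).quasiMeasurePreserving.ae
      (ae_restrict_mem measurableSet_Icc)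
  exact ENNReal.toReal_mono (measure_ne_top _ _) (measure_mono_ae (hcube.mono h))

lemma orderStat_le_iff (u : Fin n → ℝ) (i : Fin n) (t : ℝ) :
    orderStat u i ≤ t ↔ i < (arrived u t).card := by
  have hcard : (arrived u t).card = Finset.card {i | (u ∘ Tuple.sort u) i ≤ t} :=
    (Finset.card_equiv (Tuple.sort u) fun i ↦ by simp [arrived]).symm
  rw [hcard, Tuple.lt_card_le_iff_apply_le_of_monotone (Tuple.monotone_sort u)]
  rfl

lemma card_arrived_le (u : Fin n → ℝ) (t : ℝ) : (arrived u t).card ≤ n :=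
  card_finset_fin_le _

lemma Mn_lt_iff (hn : 0 < n) (hu : ∀ i, u i ∈ Icc (0 : ℝ) 1) (ε : ℝ) :
    Mn u < ε ↔ ∃ i : Fin n, upperTail n (orderStat u i) (i + 1) < ε ∨
      lowerTail n (orderStat u i) i < ε := by
  have : Nonempty (Fin n) := ⟨⟨0, hn⟩⟩
  rw [Mn, MnPlus, MnMinus, min_lt_iff, ciInf_lt_iff (finite_range _).bddBelow,
    ciInf_lt_iff (finite_range _).bddBelow, ← exists_or]
  refine exists_congr fun i ↦ ?_
  rw [lowerTail_eq_one_sub _ i.2.le, pOrd, regIncBeta_eq_upperTail (x := orderStat u i) i (hu _).1]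

lemma Mn_lt_of_not_nonCrossing (hu : ∀ i, u i ∈ Icc (0 : ℝ) 1) (hε : ε ≤ 1)
    (ht : t ∈ Icc (0 : ℝ) 1) (h : ¬NonCrossing n ε t (arrived u t).card) : Mn u < ε := by
  obtain h | h := not_and_or.1 h <;> rw [not_le] at h
  · obtain ⟨k, hk⟩ : ∃ k, (arrived u t).card = k + 1 := by
      refine Nat.exists_eq_succ_of_ne_zero fun h0 ↦ ?_
      rw [h0, upperTail_zero] at h
      exact h.not_ge hε
    have hkn : k < n := Nat.lt_of_succ_le (hk.symm.trans_le (card_arrived_le u t))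
    rw [hk] at h
    refine (Mn_lt_iff (by omega) hu ε).2 ⟨⟨k, hkn⟩, Or.inl (h.trans_le' ?_)⟩
    exact upperTail_mono_param n (k + 1) (hu _).1
      ((orderStat_le_iff u ⟨k, hkn⟩ t).2 (hk ▸ k.lt_succ_self)) ht.2
  · have hkn : (arrived u t).card < n := by
      refine (card_arrived_le u t).lt_of_ne fun hn ↦ ?_
      rw [hn, lowerTail_self] at h
      exact h.not_ge hε
    refine (Mn_lt_iff (by omega) hu ε).2 ⟨⟨_, hkn⟩, Or.inr (h.trans_le' ?_)⟩
    exact lowerTail_anti_param hkn.le ht.1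
      (not_le.1 ((orderStat_le_iff u ⟨_, hkn⟩ t).not.2 (lt_irrefl _))).le (hu _).2

lemma measureReal_exists_not_nonCrossing (hτ : Monotone τ) (hτ' : ∀ j, τ j ∈ Ico (0 : ℝ) 1)
    (n : ℕ) (ε : ℝ) (m : ℕ) :
    (nullMeasure n).real {u | ∃ j ≤ m, ¬NonCrossing n ε (τ j) (arrived u (τ j)).card}
      = 1 - survivalMass n ε τ m := by
  let B (j : ℕ) : Set ℕ := {k | NonCrossing n ε (τ j) k}
  have hcompl : {u : Fin n → ℝ | ∃ j ≤ m, ¬NonCrossing n ε (τ j) (arrived u (τ j)).card}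
      = {u | ∀ j ≤ m, (arrived u (τ j)).card ∈ B j}ᶜ := by
    ext u
    simp [B]
  have hmeas : MeasurableSet {u : Fin n → ℝ | ∀ j ≤ m, (arrived u (τ j)).card ∈ B j} :=
    measurableSet_forall_card_filter_mem τ B m Finset.univ
  rw [hcompl, probReal_compl_eq_one_sub hmeas, measureReal_forall_arrived_mem hτ hτ']
  rfl

lemma one_sub_survivalMass_le (hτ : Monotone τ) (hτ' : ∀ j, τ j ∈ Ico (0 : ℝ) 1) (n : ℕ)
    (hε : ε ≤ 1) (m : ℕ) :
    1 - survivalMass n ε τ m ≤ (nullMeasure n).real {u | Mn u < ε} := by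
  rw [← measureReal_exists_not_nonCrossing hτ hτ']
  exact measureReal_nullMeasure_mono fun u hu ⟨j, _, hj⟩ ↦
    Mn_lt_of_not_nonCrossing hu hε (Ico_subset_Icc_self (hτ' j)) hj

lemma upperTail_le_ratio_pow_mul (ht : 0 < t) (htt' : t ≤ t') (ht' : t' ≤ 1) (n k : ℕ) :
    upperTail n t' k ≤ (t' / t) ^ n * upperTail n t k := by
  rw [upperTail, upperTail, Finset.mul_sum]
  refine Finset.sum_le_sum fun l hl ↦ ?_
  have hone : 1 ≤ t' / t := (one_le_div ht).2 htt'
  have hpow : t' ^ l ≤ (t' / t) ^ n * t ^ l := calc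
    t' ^ l = (t' / t) ^ l * t ^ l := by rw [← mul_pow, div_mul_cancel₀ _ ht.ne']
    _ ≤ (t' / t) ^ n * t ^ l := by
      have := (Finset.mem_Icc.1 hl).2
      gcongr
  have : 0 ≤ 1 - t' := sub_nonneg.2 ht'
  calc binomMass n t' l
      ≤ n.choose l * ((t' / t) ^ n * t ^ l) * (1 - t) ^ (n - l) := by
        have : 0 < t' := ht.trans_le htt'
        unfold binomMass
        gcongr
    _ = (t' / t) ^ n * binomMass n t l := by rw [binomMass]; ring

lemma logisticTime_add_div_le (s : ℝ) (hΔ : 0 ≤ Δ) :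
    logisticTime (s + Δ) / logisticTime s ≤ Real.exp (2 * Δ) := by
  rw [logisticTime_eq, logisticTime_eq, neg_add, Real.exp_add, Real.exp_add, two_mul, Real.exp_add,
    div_div_div_eq, div_le_iff₀ (by positivity)]
  have hsq : 1 ≤ Real.exp Δ ^ 2 := one_le_pow₀ (Real.one_le_exp hΔ)
  have hinv : Real.exp Δ * Real.exp (-Δ) = 1 := by
    rw [← Real.exp_add, add_neg_cancel, Real.exp_zero]
  linear_combination Real.exp s ^ 2 * Real.exp Δ * hsq
    - Real.exp s * Real.exp (-s) * Real.exp Δ * hinv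

lemma upperTail_logisticTime_add_le (hΔ : 0 ≤ Δ) (hst : logisticTime s ≤ t)
    (ht : t ≤ logisticTime (s + Δ)) (n k : ℕ) :
    upperTail n (logisticTime (s + Δ)) k ≤ Real.exp (2 * Δ) ^ n * upperTail n t k := by
  have hs := (logisticTime_mem_Ioo s).1
  have ht0 : 0 < t := hs.trans_le hst
  have ht1 := (logisticTime_mem_Ioo (s + Δ)).2.le
  have hratio : logisticTime (s + Δ) / t ≤ Real.exp (2 * Δ) :=
    (div_le_div_of_nonneg_left (ht0.le.trans ht) hs hst).trans (logisticTime_add_div_le s hΔ)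
  have hpow := pow_le_pow_left₀ (div_nonneg (ht0.le.trans ht) ht0.le) hratio n
  exact (upperTail_le_ratio_pow_mul ht0 ht ht1 n k).trans
    (mul_le_mul_of_nonneg_right hpow (upperTail_nonneg ⟨ht0.le, ht.trans ht1⟩ n k))

lemma lowerTail_logisticTime_le (hΔ : 0 ≤ Δ) (hst : logisticTime s ≤ t)
    (ht : t ≤ logisticTime (s + Δ)) (hk : k ≤ n) :
    lowerTail n (logisticTime s) k ≤ Real.exp (2 * Δ) ^ n * lowerTail n t k := by
  have hs : 1 - logisticTime s = logisticTime (-(s + Δ) + Δ) := by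
    rw [← logisticTime_neg]
    ring_nf
  rw [← upperTail_one_sub _ hk, ← upperTail_one_sub _ hk, hs]
  refine upperTail_logisticTime_add_le hΔ ?_ ?_ n (n - k)
  · rw [logisticTime_neg]
    linarith
  · rw [← hs]
    linarith

lemma exists_lt_le_succ (h0 : τ 0 < x) (hm : x ≤ τ m) : ∃ j < m, τ j < x ∧ x ≤ τ (j + 1) := by
  by_contra! h
  have hlt : ∀ j ≤ m, τ j < x := fun j ↦ by
    induction j with
    | zero => exact fun _ ↦ h0
    | succ j ih => exact fun hj ↦ h j hj (ih (by omega))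
  exact (hlt m le_rfl).not_ge hm

lemma exists_not_nonCrossing_logisticGrid (hΔ : 0 ≤ Δ) {i : Fin n}
    (h0 : logisticGrid s Δ 0 < orderStat u i) (hm : orderStat u i ≤ logisticGrid s Δ m)
    (hi : upperTail n (orderStat u i) (i + 1) < ε ∨ lowerTail n (orderStat u i) i < ε) :
    ∃ j ≤ m, ¬NonCrossing n (Real.exp (2 * Δ) ^ n * ε) (logisticGrid s Δ j)
      (arrived u (logisticGrid s Δ j)).card := by
  obtain ⟨j, hjm, hj, hj'⟩ := exists_lt_le_succ h0 hm
  have hgrid (j) : logisticGrid s Δ j ∈ Icc (0 : ℝ) 1 :=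
    Ico_subset_Icc_self (logisticGrid_mem_Ico s Δ j)
  have hexp : 0 < Real.exp (2 * Δ) ^ n := by positivity
  rcases hi with hi | hi
  · refine ⟨j + 1, hjm, fun h ↦ h.1.not_gt ?_⟩
    calc upperTail n (logisticGrid s Δ (j + 1)) (arrived u (logisticGrid s Δ (j + 1))).card
        ≤ upperTail n (logisticGrid s Δ (j + 1)) (i + 1) :=
          upperTail_anti (hgrid _) ((orderStat_le_iff u i _).1 hj')
      _ ≤ Real.exp (2 * Δ) ^ n * upperTail n (orderStat u i) (i + 1) := by
          rw [logisticGrid_succ] at hj' ⊢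
          exact upperTail_logisticTime_add_le hΔ hj.le hj' n _
      _ < Real.exp (2 * Δ) ^ n * ε := by gcongr
  · refine ⟨j, hjm.le, fun h ↦ h.2.not_gt ?_⟩
    have hcard := not_lt.1 ((orderStat_le_iff u i _).not.1 hj.not_ge)
    rw [logisticGrid_succ] at hj'
    calc lowerTail n (logisticGrid s Δ j) (arrived u (logisticGrid s Δ j)).card
        ≤ lowerTail n (logisticGrid s Δ j) i := lowerTail_mono (hgrid j) hcard
      _ ≤ Real.exp (2 * Δ) ^ n * lowerTail n (orderStat u i) i :=
          lowerTail_logisticTime_le hΔ hj.le hj' i.2.le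
      _ < Real.exp (2 * Δ) ^ n * ε := by gcongr

lemma measureReal_card_arrived_mem (ht : t ∈ Ico (0 : ℝ) 1) (B : Set ℕ) :
    (nullMeasure n).real {u | (arrived u t).card ∈ B}
      = ∑ k ∈ Finset.range (n + 1), B.indicator (binomMass n t) k := by
  simpa [killedLaw] using
    measureReal_forall_arrived_mem (n := n) monotone_const (fun _ ↦ ht) (fun _ ↦ B) 0

lemma measureReal_le_card_arrived (ht : t ∈ Ico (0 : ℝ) 1) (k : ℕ) :
    (nullMeasure n).real {u | k ≤ (arrived u t).card} = upperTail n t k := by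
  refine (measureReal_card_arrived_mem ht (Ici k)).trans ?_
  simp only [indicator_apply, upperTail, ← Finset.sum_filter]
  congr 1
  ext l
  simp
  omega

lemma measureReal_card_arrived_le (ht : t ∈ Ico (0 : ℝ) 1) (hk : k ≤ n) :
    (nullMeasure n).real {u | (arrived u t).card ≤ k} = lowerTail n t k := by
  refine (measureReal_card_arrived_mem ht (Iic k)).trans ?_
  simp only [indicator_apply, lowerTail, ← Finset.sum_filter]
  congr 1
  ext l
  simp
  omega

lemma upperTail_le_div (ht : t ∈ Icc (0 : ℝ) 1) (n : ℕ) (hK : 0 < K) :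
    upperTail n t K ≤ n * t / K := by
  rw [le_div_iff₀ (by positivity), ← sum_binomMass_mul_id, upperTail, Finset.sum_mul]
  calc ∑ l ∈ Finset.Icc K n, binomMass n t l * K
      ≤ ∑ l ∈ Finset.Icc K n, binomMass n t l * l := by
        refine Finset.sum_le_sum fun l hl ↦ ?_
        have := binomMass_nonneg ht n l
        have := (Finset.mem_Icc.1 hl).1
        gcongr
    _ ≤ ∑ l ∈ Finset.range (n + 1), binomMass n t l * l := by
        refine Finset.sum_le_sum_of_subset_of_nonneg (fun l hl ↦ ?_)
          fun l _ _ ↦ mul_nonneg (binomMass_nonneg ht n l) l.cast_nonneg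
        exact Finset.mem_range_succ_iff.2 (Finset.mem_Icc.1 hl).2

lemma measureReal_lt_card_arrived_le (ht : t ∈ Ico (0 : ℝ) 1) (n : ℕ) (hK : 0 < K) :
    (nullMeasure n).real {u | K < (arrived u t).card} ≤ n * t / K :=
  (measureReal_mono fun _ (h : K < _) ↦ h.le).trans <|
    (measureReal_le_card_arrived ht K).trans_le (upperTail_le_div (Ico_subset_Icc_self ht) n hK)

lemma measureReal_card_arrived_add_lt_le (ht : t ∈ Ico (0 : ℝ) 1) (n : ℕ) (hK : 0 < K) :
    (nullMeasure n).real {u | (arrived u t).card + K < n} ≤ n * (1 - t) / K := by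
  have ht' : 1 - t ∈ Icc (0 : ℝ) 1 := ⟨by linarith [ht.2], by linarith [ht.1]⟩
  rcases lt_or_ge n K with hnK | hKn
  · have hempty : {u : Fin n → ℝ | (arrived u t).card + K < n} = ∅ :=
      eq_empty_of_forall_notMem fun u (hu : _ < n) ↦ by omega
    rw [hempty, measureReal_empty]
    have := ht'.1
    positivity
  · calc (nullMeasure n).real {u | (arrived u t).card + K < n}
        ≤ (nullMeasure n).real {u | (arrived u t).card ≤ n - K} :=
          measureReal_mono fun u (hu : _ < n) ↦ show _ ≤ n - K by omega
      _ = lowerTail n t (n - K) := measureReal_card_arrived_le ht (n.sub_le K)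
      _ = upperTail n (1 - t) K := by
          rw [← upperTail_one_sub t (n.sub_le K), Nat.sub_sub_self hKn]
      _ ≤ n * (1 - t) / K := upperTail_le_div ht' n hK

lemma exists_upperTail_eq (hk : k < n) (hε : ε ∈ Ico (0 : ℝ) 1) :
    ∃ x ∈ Ico (0 : ℝ) 1, upperTail n x (k + 1) = ε := by
  have himage := intermediate_value_Ico zero_le_one (continuous_upperTail n (k + 1)).continuousOn
  rw [upperTail_at_zero, upperTail_at_one hk] at himage
  exact himage hε

lemma measureReal_upperTail_orderStat_lt_le (i : Fin n) (hε : ε ∈ Ico (0 : ℝ) 1) :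
    (nullMeasure n).real {u | upperTail n (orderStat u i) (i + 1) < ε} ≤ ε := by
  obtain ⟨x, hx, rfl⟩ := exists_upperTail_eq i.2 hε
  refine le_of_le_of_eq ?_ (measureReal_le_card_arrived hx (i + 1))
  refine measureReal_nullMeasure_mono fun u hu h ↦ (orderStat_le_iff u i x).1 ?_
  by_contra! hlt
  exact (upperTail_mono_param n (i + 1) hx.1 hlt.le (hu _).2).not_gt h

lemma measureReal_lowerTail_orderStat_lt_le (i : Fin n) (hε : ε ∈ Ioc (0 : ℝ) 1) :
    (nullMeasure n).real {u | lowerTail n (orderStat u i) i < ε} ≤ ε := by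
  obtain ⟨x, hx, hxε⟩ := exists_upperTail_eq i.2
    (show 1 - ε ∈ Ico (0 : ℝ) 1 from ⟨by linarith [hε.2], by linarith [hε.1]⟩)
  obtain rfl : lowerTail n x i = ε := by rw [lowerTail_eq_one_sub x i.2.le, hxε, sub_sub_cancel]
  refine le_of_le_of_eq ?_ (measureReal_card_arrived_le hx i.2.le)
  refine measureReal_nullMeasure_mono fun u hu h ↦
    not_lt.1 ((orderStat_le_iff u i x).not.1 fun hle ↦ ?_)
  exact (lowerTail_anti_param i.2.le (hu _).1 hle hx.2.le).not_gt h

lemma card_extreme_indices_le (n K : ℕ) :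
    Finset.card {i : Fin n | (i : ℕ) < K ∨ n ≤ i + K} ≤ 2 * K := by
  have hsub : Finset.map Fin.valEmbedding {i : Fin n | (i : ℕ) < K ∨ n ≤ i + K}
      ⊆ Finset.range K ∪ Finset.Ico (n - K) n := by
    intro k hk
    simp only [Finset.mem_map, Finset.mem_filter_univ, Fin.valEmbedding_apply, Finset.mem_union,
      Finset.mem_range, Finset.mem_Ico] at hk ⊢
    omega
  have hcard := (Finset.card_le_card hsub).trans (Finset.card_union_le _ _)
  rw [Finset.card_map, Finset.card_range, Nat.card_Ico] at hcard
  omega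

lemma measureReal_extreme_tail_lt_le (n K : ℕ) (hε : ε ∈ Ioo (0 : ℝ) 1) :
    (nullMeasure n).real (⋃ i ∈ ({i | (i : ℕ) < K ∨ n ≤ i + K} : Finset (Fin n)),
      ({u | upperTail n (orderStat u i) (i + 1) < ε} ∪ {u | lowerTail n (orderStat u i) i < ε}))
      ≤ 4 * K * ε := by
  have htail (i : Fin n) : (nullMeasure n).real ({u | upperTail n (orderStat u i) (i + 1) < ε} ∪
      {u | lowerTail n (orderStat u i) i < ε}) ≤ ε + ε :=
    (measureReal_union_le _ _).trans <| add_le_add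
      (measureReal_upperTail_orderStat_lt_le i (Ioo_subset_Ico_self hε))
      (measureReal_lowerTail_orderStat_lt_le i (Ioo_subset_Ioc_self hε))
  refine (measureReal_biUnion_finset_le _ _).trans ?_
  refine (Finset.sum_le_card_nsmul _ _ _ fun i _ ↦ htail i).trans ?_
  rw [nsmul_eq_mul]
  have hcard : ((Finset.card {i : Fin n | (i : ℕ) < K ∨ n ≤ i + K} : ℕ) : ℝ) ≤ 2 * K := by
    exact_mod_cast card_extreme_indices_le n K
  nlinarith [hε.1]

lemma measureReal_Mn_lt_le (hn : 0 < n) (hε : ε ∈ Ioo (0 : ℝ) 1) (s : ℝ) (hΔ : 0 ≤ Δ) (m : ℕ)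
    (hK : 0 < K) :
    (nullMeasure n).real {u | Mn u < ε} ≤
      1 - survivalMass n (Real.exp (2 * Δ) ^ n * ε) (logisticGrid s Δ) m
        + n * logisticGrid s Δ 0 / K + n * (1 - logisticGrid s Δ m) / K + 4 * K * ε := by
  have hgrid := logisticGrid_mem_Ico s Δ
  rw [← measureReal_exists_not_nonCrossing (monotone_logisticGrid s hΔ) hgrid]
  refine (measureReal_nullMeasure_mono fun u hu (h : Mn u < ε) ↦ ?_).trans <|
    (measureReal_union_le _ _).trans <| add_le_add ((measureReal_union_le _ _).trans <|
      add_le_add ((measureReal_union_le _ _).trans <| add_le_add le_rfl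
        (measureReal_lt_card_arrived_le (hgrid 0) n hK))
      (measureReal_card_arrived_add_lt_le (hgrid m) n hK)) (measureReal_extreme_tail_lt_le n K hε)
  obtain ⟨i, hi⟩ := (Mn_lt_iff hn hu ε).1 h
  by_cases hext : (i : ℕ) < K ∨ n ≤ i + K
  · exact Or.inr (mem_biUnion (by simpa using hext) hi)
  by_cases h0 : K < (arrived u (logisticGrid s Δ 0)).card
  · exact Or.inl (Or.inl (Or.inr h0))
  by_cases hm : (arrived u (logisticGrid s Δ m)).card + K < n
  · exact Or.inl (Or.inr hm)
  refine Or.inl (Or.inl (Or.inl (exists_not_nonCrossing_logisticGrid hΔ ?_ ?_ hi)))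
  · rw [← not_le, orderStat_le_iff]
    omega
  · rw [orderStat_le_iff]
    omega

end BerkJonesBoundary

/-! ### Choice of the window and the grid -/

section Asymptotics

variable {η w b c : ℝ}

lemma tendsto_pow_mul_exp_neg_atTop (k : ℕ) (hb : 0 < b) :
    Tendsto (fun w : ℝ ↦ w ^ k * Real.exp (-b * w)) atTop (𝓝 0) := by
  simpa only [Real.rpow_natCast] using tendsto_rpow_mul_exp_neg_mul_atTop_nhds_zero k b hb

lemma eventually_pow_mul_exp_neg_le (k : ℕ) (hb : 0 < b) (hc : 0 < c) :
    ∀ᶠ w : ℝ in atTop, w ^ k * Real.exp (-b * w) ≤ c :=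
  (tendsto_pow_mul_exp_neg_atTop k hb).eventually_le_const hc

lemma logShiftRange_le (hw : 1 ≤ w) : logShiftRange w ≤ 5 * w := by
  have hsqrt : √w ≤ w := Real.sqrt_le_left (by linarith) |>.2 (by nlinarith)
  have hmax := Real.log_le_sub_one_of_pos (show 0 < 4 * √w by positivity)
  have hmin := Real.log_le_sub_one_of_pos (zero_lt_one.trans_le hw)
  unfold logShiftRange maxLogShift minLogShift
  linarith

lemma eventually_mul_logShiftRange_mul_exp_neg_le (hb : 0 < b) (hc : 0 < c) :
    ∀ᶠ w in atTop, w * logShiftRange w * Real.exp (-b * w) ≤ c := by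
  filter_upwards [eventually_ge_atTop 1,
    eventually_pow_mul_exp_neg_le 2 hb (show 0 < c / 5 by positivity)] with w hw hle
  calc w * logShiftRange w * Real.exp (-b * w)
      ≤ w * (5 * w) * Real.exp (-b * w) := by
        gcongr
        exact logShiftRange_le hw
    _ = 5 * (w ^ 2 * Real.exp (-b * w)) := by ring
    _ ≤ c := by linarith

lemma eventually_le_mul_sqrt_pow (hη : 0 < η) :
    ∀ᶠ w : ℝ in atTop, 2 * √w ≤ η * w ∧ 256 * √w ^ 3 ≤ η * w ^ 3 := by
  filter_upwards [eventually_ge_atTop 1, Real.tendsto_sqrt_atTop.eventually_ge_atTop (256 / η)]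
    with w hw hsqrt
  rw [div_le_iff₀ hη] at hsqrt
  have hone : 1 ≤ √w := Real.one_le_sqrt.2 hw
  have hsq : √w ^ 2 = w := Real.sq_sqrt (by linarith)
  constructor
  · nlinarith
  · calc 256 * √w ^ 3 ≤ √w * η * √w ^ 3 := by gcongr
      _ = η * √w ^ 4 := by ring
      _ ≤ η * √w ^ 6 := by gcongr; norm_num
      _ = η * (√w ^ 2) ^ 3 := by ring
      _ = η * w ^ 3 := by rw [hsq]

lemma eventually_isWindow (hη : 0 < η) (hη' : η ≤ 1 / 20) : ∀ᶠ w in atTop, IsWindow η w := by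
  filter_upwards [eventually_ge_atTop 16, eventually_ge_atTop (12 / η ^ 3),
    eventually_le_mul_sqrt_pow hη,
    eventually_pow_mul_exp_neg_le 0 one_pos (show 0 < η / Real.exp 1 by positivity),
    eventually_mul_logShiftRange_mul_exp_neg_le (show 0 < η ^ 2 / 8 by positivity)
      (show 0 < η / (4 * Real.exp 2) by positivity),
    eventually_mul_logShiftRange_mul_exp_neg_le (show 0 < η / 4 by positivity)
      (show 0 < 3 / 4 / Real.exp 2 by positivity),
    eventually_mul_logShiftRange_mul_exp_neg_le (show 0 < 1 / 4 by positivity)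
      (show 0 < η / 3 by positivity)]
    with w hw hdev hsqrt hexp hsmall hint hopp
  rw [div_le_iff₀ (by positivity)] at hdev
  rw [le_div_iff₀ (by positivity)] at hexp hsmall hint
  refine ⟨hη, hη', hw, by linarith, ?_, hsqrt.2, ?_, hsqrt.1, ?_, ?_⟩
  · rw [sub_eq_add_neg, Real.exp_add, show -(η ^ 2 * w / 8) = -(η ^ 2 / 8) * w by ring]
    linarith
  · rw [← div_le_iff₀ (Real.exp_pos _), div_eq_mul_inv, ← Real.exp_neg,
      show -(η * w / 4) = -(η / 4) * w by ring]
    linarith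
  · rw [pow_zero, one_mul, neg_one_mul] at hexp
    rw [sub_eq_add_neg, Real.exp_add]
    linarith
  · rw [show -w / 4 = -(1 / 4) * w by ring]
    linarith

lemma tendsto_one_sub_pow {ι : Type*} {l : Filter ι} {y : ι → ℝ} {m : ι → ℕ}
    (hy : Tendsto y l (𝓝 0)) (hm : Tendsto (fun i ↦ m i * y i) l (𝓝 c)) :
    Tendsto (fun i ↦ (1 - y i) ^ m i) l (𝓝 (Real.exp (-c))) := by
  have hlower : Tendsto (fun i ↦ Real.exp (-(m i * y i / (1 - y i)))) l (𝓝 (Real.exp (-c))) := by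
    have hdiv := (hm.div (hy.const_sub 1) (by norm_num)).neg
    rw [sub_zero, div_one] at hdiv
    exact (Real.continuous_exp.tendsto _).comp hdiv
  have hupper : Tendsto (fun i ↦ Real.exp (-(m i * y i))) l (𝓝 (Real.exp (-c))) :=
    (Real.continuous_exp.tendsto _).comp hm.neg
  refine tendsto_of_tendsto_of_tendsto_of_le_of_le' hlower hupper ?_ ?_ <;>
    filter_upwards [hy.eventually_lt_const one_pos] with i hi
  · have hpos : 0 < 1 - y i := by linarith
    have hexp : Real.exp (-(y i / (1 - y i))) ≤ 1 - y i := by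
      rw [Real.exp_neg, inv_le_comm₀ (Real.exp_pos _) hpos]
      calc (1 - y i)⁻¹ = y i / (1 - y i) + 1 := by field_simp; ring
        _ ≤ Real.exp (y i / (1 - y i)) := Real.add_one_le_exp _
    calc Real.exp (-(m i * y i / (1 - y i))) = Real.exp (-(y i / (1 - y i))) ^ m i := by
          rw [← Real.exp_nat_mul]
          ring_nf
      _ ≤ (1 - y i) ^ m i := by gcongr
  · calc (1 - y i) ^ m i ≤ Real.exp (-y i) ^ m i :=
          pow_le_pow_left₀ (by linarith) (Real.one_sub_le_exp_neg _) _
      _ = Real.exp (-(m i * y i)) := by rw [← Real.exp_nat_mul, mul_neg]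

end Asymptotics

section Calibration

variable {n : ℕ} {s T x η a : ℝ} {c ε : ℕ → ℝ}

/-- The window used for a sample of size `n`. A level of order `1 / (log n * log log n)` is
`Real.exp (-w / 2)` up to a power of `w`, as `IsLevel` requires. -/
def windowSize (n : ℕ) : ℝ := 2 * Real.log (Real.log n)

/-- The length, in logistic time, of the central range of times. Trimming `log n` keeps the
expected count at both ends of the range large. -/
def timeSpan (n : ℕ) : ℝ := Real.log n - windowSize n / 8

/-- The mesh of the grid, small enough for the `n ^ 3` discretization errors to vanish. -/
def timeStep (n : ℕ) : ℝ := timeSpan n / (n ^ 3 : ℕ)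

/-- The grid of `n ^ 3` steps, equally spaced in logistic time, on the central range of times. -/
def centralGrid (n : ℕ) : ℕ → ℝ := logisticGrid (-(timeSpan n / 2)) (timeStep n)

/-- The number of extreme order statistics at each end that are treated by a union bound. -/
def edgeCount (n : ℕ) : ℕ := ⌈Real.exp (windowSize n / 4)⌉₊

/-- The levels `ε n` are asymptotic to `x / (2 * log n * log log n)`. -/
def IsCritical (x : ℝ) (ε : ℕ → ℝ) : Prop :=
  Tendsto (fun n ↦ windowSize n * ε n * Real.log n) atTop (𝓝 x)

lemma tendsto_log_natCast_atTop : Tendsto (fun n : ℕ ↦ Real.log n) atTop atTop :=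
  Real.tendsto_log_atTop.comp tendsto_natCast_atTop_atTop

lemma tendsto_windowSize_atTop : Tendsto windowSize atTop atTop :=
  (Real.tendsto_log_atTop.comp tendsto_log_natCast_atTop).const_mul_atTop two_pos

lemma exp_half_windowSize (hn : 1 < n) : Real.exp (windowSize n / 2) = Real.log n := by
  rw [windowSize, mul_div_cancel_left₀ _ two_ne_zero,
    Real.exp_log (Real.log_pos (Nat.one_lt_cast.2 hn))]

lemma timeSpan_nonneg (n : ℕ) : 0 ≤ timeSpan n := by
  have hlog := Real.log_natCast_nonneg n
  have := Real.log_le_self hlog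
  unfold timeSpan windowSize
  linarith

lemma timeStep_nonneg (n : ℕ) : 0 ≤ timeStep n := div_nonneg (timeSpan_nonneg n) (by positivity)

lemma cube_mul_timeStep (hn : 0 < n) : (n ^ 3 : ℕ) * timeStep n = timeSpan n :=
  mul_div_cancel₀ _ (by positivity)

lemma tendsto_timeSpan_div_log : Tendsto (fun n ↦ timeSpan n / Real.log n) atTop (𝓝 1) := by
  have hratio : Tendsto (fun n : ℕ ↦ Real.log (Real.log n) / Real.log n) atTop (𝓝 0) :=
    Real.isLittleO_log_id_atTop.tendsto_div_nhds_zero.comp tendsto_log_natCast_atTop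
  have hsub := (hratio.div_const 4).const_sub 1
  rw [zero_div, sub_zero] at hsub
  refine hsub.congr' ?_
  filter_upwards [tendsto_log_natCast_atTop.eventually_gt_atTop 0] with n hlog
  unfold timeSpan windowSize
  field_simp
  ring

lemma tendsto_timeSpan_pow_div (k : ℕ) : Tendsto (fun n ↦ timeSpan n ^ k / n) atTop (𝓝 0) := by
  have hlog : Tendsto (fun n : ℕ ↦ Real.log n ^ k / n) atTop (𝓝 0) :=
    Real.isLittleO_pow_log_id_atTop.tendsto_div_nhds_zero.comp tendsto_natCast_atTop_atTop
  have hmul := (tendsto_timeSpan_div_log.pow k).mul hlog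
  rw [mul_zero] at hmul
  refine hmul.congr' ?_
  filter_upwards [tendsto_log_natCast_atTop.eventually_gt_atTop 0] with n hlog
  rw [div_pow]
  field_simp

lemma tendsto_mul_timeStep : Tendsto (fun n ↦ n * timeStep n) atTop (𝓝 0) := by
  have hmul := (tendsto_timeSpan_pow_div 1).mul tendsto_inv_atTop_nhds_zero_nat
  rw [mul_zero] at hmul
  refine hmul.congr' ?_
  filter_upwards [eventually_gt_atTop 0] with n hn
  unfold timeStep
  push_cast
  field_simp

lemma tendsto_cube_mul_sq_timeStep :
    Tendsto (fun n : ℕ ↦ (n ^ 3 : ℕ) * (48 * (n * timeStep n) ^ 2)) atTop (𝓝 0) := by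
  have hmul := (tendsto_timeSpan_pow_div 2).const_mul 48
  rw [mul_zero] at hmul
  refine hmul.congr' ?_
  filter_upwards [eventually_gt_atTop 0] with n hn
  unfold timeStep
  push_cast
  field_simp

lemma tendsto_exp_timeStep_pow :
    Tendsto (fun n ↦ Real.exp (2 * timeStep n) ^ n) atTop (𝓝 1) := by
  have hexp := (Real.continuous_exp.tendsto _).comp (tendsto_mul_timeStep.const_mul 2)
  rw [mul_zero, Real.exp_zero] at hexp
  refine hexp.congr fun n ↦ ?_
  rw [Function.comp_apply, ← Real.exp_nat_mul]
  ring_nf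

lemma le_stdDev_logisticTime (n : ℕ) (hs : |s| ≤ T) :
    √n / (2 * Real.exp T) ≤ stdDev n (logisticTime s) := by
  obtain ⟨hlo, hhi⟩ := abs_le.1 hs
  have hpos : Real.exp s ≤ Real.exp T := Real.exp_le_exp.2 hhi
  have hneg : Real.exp (-s) ≤ Real.exp T := Real.exp_le_exp.2 (by linarith)
  rw [stdDev_logisticTime]
  gcongr
  linarith

lemma exp_sub_timeSpan (hn : 0 < n) :
    Real.exp (-timeSpan n) * n = Real.exp (windowSize n / 8) := by
  rw [← Real.exp_log (Nat.cast_pos.2 hn), ← Real.exp_add, timeSpan]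
  ring_nf

lemma eventually_pow_le_stdDev_centralGrid :
    ∀ᶠ n in atTop, ∀ j ≤ n ^ 3, windowSize n ^ 3 ≤ stdDev n (centralGrid n j) := by
  filter_upwards [eventually_gt_atTop 0, tendsto_windowSize_atTop.eventually
    (eventually_pow_mul_exp_neg_le 3 (b := 1 / 16) (by norm_num) one_half_pos)]
    with n hn hw j hj
  have hΔ := timeStep_nonneg n
  have hj' : j * timeStep n ≤ timeSpan n := by
    rw [← cube_mul_timeStep hn]
    gcongr
  have hs : |-(timeSpan n / 2) + j * timeStep n| ≤ timeSpan n / 2 := by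
    have : 0 ≤ j * timeStep n := by positivity
    exact abs_le.2 ⟨by linarith, by linarith⟩
  have hsqrt : √n = Real.exp (windowSize n / 16) * Real.exp (timeSpan n / 2) := by
    rw [Real.sqrt_eq_iff_mul_self_eq (by positivity) (by positivity), ← Real.exp_add,
      ← Real.exp_add, ← Real.exp_log (Nat.cast_pos.2 hn), timeSpan]
    ring_nf
  refine le_trans ?_ (le_stdDev_logisticTime n hs)
  rw [hsqrt, mul_div_mul_right _ _ (Real.exp_pos _).ne', le_div_iff₀ two_pos]
  rw [neg_mul, Real.exp_neg, ← div_eq_mul_inv, div_le_iff₀ (Real.exp_pos _)] at hw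
  calc windowSize n ^ 3 * 2 ≤ 1 / 2 * Real.exp (1 / 16 * windowSize n) * 2 := by gcongr
    _ = Real.exp (windowSize n / 16) := by ring_nf

lemma mul_centralGrid_zero_le (hn : 0 < n) :
    n * centralGrid n 0 ≤ Real.exp (windowSize n / 8) := by
  have hle : centralGrid n 0 ≤ Real.exp (-timeSpan n) := by
    rw [centralGrid, logisticGrid, logisticTime, Real.sigmoid_def, inv_le_comm₀ (by positivity)
      (Real.exp_pos _), ← Real.exp_neg]
    refine (Real.exp_le_exp.2 (le_of_eq ?_)).trans (le_add_of_nonneg_left zero_le_one)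
    push_cast
    ring
  calc n * centralGrid n 0 ≤ n * Real.exp (-timeSpan n) := by gcongr
    _ = Real.exp (windowSize n / 8) := by rw [mul_comm, exp_sub_timeSpan hn]

lemma one_sub_centralGrid_last (hn : 0 < n) : 1 - centralGrid n (n ^ 3) = centralGrid n 0 := by
  rw [centralGrid, logisticGrid, logisticGrid, cube_mul_timeStep hn, ← logisticTime_neg]
  ring_nf

lemma eventually_timeStep_le (hη : 0 < η) :
    ∀ᶠ n in atTop, timeStep n ≤ η / 4 ∧ 4 * n * timeStep n ≤ η := by
  filter_upwards [eventually_gt_atTop 0,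
    tendsto_mul_timeStep.eventually_le_const (show 0 < η / 4 by positivity)] with n hn hle
  have := timeStep_nonneg n
  have hone : (1 : ℝ) ≤ n := Nat.one_le_cast.2 hn
  exact ⟨by nlinarith, by linarith⟩

lemma edgeCount_pos (n : ℕ) : 0 < edgeCount n := Nat.ceil_pos.2 (Real.exp_pos _)

lemma tendsto_mul_centralGrid_zero_div_edgeCount :
    Tendsto (fun n ↦ n * centralGrid n 0 / edgeCount n) atTop (𝓝 0) := by
  have hdecay := (tendsto_pow_mul_exp_neg_atTop 0 (b := 1 / 8) (by norm_num)).comp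
    tendsto_windowSize_atTop
  refine squeeze_zero' ?_ ?_ hdecay
  · exact Eventually.of_forall fun n ↦
      div_nonneg (mul_nonneg n.cast_nonneg (logisticTime_mem_Ioo _).1.le) (Nat.cast_nonneg _)
  · filter_upwards [eventually_gt_atTop 0] with n hn
    calc n * centralGrid n 0 / edgeCount n
        ≤ Real.exp (windowSize n / 8) / Real.exp (windowSize n / 4) := by
          gcongr
          · exact mul_centralGrid_zero_le hn
          · exact Nat.le_ceil _
      _ = windowSize n ^ 0 * Real.exp (-(1 / 8) * windowSize n) := by
          rw [← Real.exp_sub, pow_zero, one_mul]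
          ring_nf

lemma isCritical_div_log (x : ℝ) :
    IsCritical x fun n ↦ x / (2 * Real.log n * Real.log (Real.log n)) := by
  refine tendsto_const_nhds.congr' ?_
  filter_upwards [tendsto_log_natCast_atTop.eventually_gt_atTop 1] with n hlog
  have : 0 < Real.log (Real.log n) := Real.log_pos hlog
  unfold windowSize
  field_simp

namespace IsCritical

lemma mul_of_tendsto_one (h : IsCritical x ε) (hc : Tendsto c atTop (𝓝 1)) :
    IsCritical x fun n ↦ c n * ε n := by
  have hmul := hc.mul h
  rw [one_mul] at hmul
  exact hmul.congr fun n ↦ by ring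

lemma tendsto_window_mul (h : IsCritical x ε) :
    Tendsto (fun n ↦ windowSize n * ε n) atTop (𝓝 0) := by
  refine (h.div_atTop tendsto_log_natCast_atTop).congr' ?_
  filter_upwards [tendsto_log_natCast_atTop.eventually_gt_atTop 0] with n hlog
  field_simp

lemma tendsto_zero (h : IsCritical x ε) : Tendsto ε atTop (𝓝 0) := by
  refine (h.tendsto_window_mul.div_atTop tendsto_windowSize_atTop).congr' ?_
  filter_upwards [tendsto_windowSize_atTop.eventually_gt_atTop 0] with n hw
  field_simp

lemma tendsto_mul_timeSpan (h : IsCritical x ε) :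
    Tendsto (fun n ↦ windowSize n * ε n * timeSpan n) atTop (𝓝 x) := by
  have hmul := h.mul tendsto_timeSpan_div_log
  rw [mul_one] at hmul
  refine hmul.congr' ?_
  filter_upwards [tendsto_log_natCast_atTop.eventually_gt_atTop 0] with n hlog
  field_simp

lemma tendsto_mul_logShiftRange (h : IsCritical x ε) :
    Tendsto (fun n ↦ 2 * (windowSize n * ε n) * logShiftRange (windowSize n)) atTop (𝓝 0) := by
  have hratio : Tendsto (fun n ↦ logShiftRange (windowSize n) * Real.exp (-(1 / 2) * windowSize n))
      atTop (𝓝 0) := by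
    have hbound := ((tendsto_pow_mul_exp_neg_atTop 1 one_half_pos).const_mul 5).comp
      tendsto_windowSize_atTop
    rw [mul_zero] at hbound
    refine squeeze_zero' ?_ ?_ hbound <;> filter_upwards [tendsto_windowSize_atTop.eventually
      (eventually_isWindow (η := 1 / 20) (by norm_num) le_rfl)] with n W
    · exact mul_nonneg W.logShiftRange_nonneg (Real.exp_pos _).le
    · have := logShiftRange_le (w := windowSize n) (by linarith [W.le_window])
      rw [Function.comp_apply, pow_one, ← mul_assoc]
      gcongr
  have hmul := (h.const_mul 2).mul hratio
  rw [mul_zero] at hmul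
  refine hmul.congr' ?_
  filter_upwards [eventually_gt_atTop 1] with n hn
  have hlog : Real.log n ≠ 0 := (Real.log_pos (Nat.one_lt_cast.2 hn)).ne'
  rw [show -(1 / 2) * windowSize n = -(windowSize n / 2) by ring, Real.exp_neg,
    exp_half_windowSize hn]
  field_simp

lemma tendsto_cube_mul_rate (h : IsCritical x ε) (a b : ℝ) :
    Tendsto (fun n : ℕ ↦ (n ^ 3 : ℕ) * (2 * (windowSize n * ε n) * timeStep n * a / b)) atTop
      (𝓝 (2 * x * a / b)) := by
  refine (((h.tendsto_mul_timeSpan.const_mul 2).mul_const a).div_const b).congr' ?_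
  filter_upwards [eventually_gt_atTop 0] with n hn
  rw [← cube_mul_timeStep hn]
  ring

lemma tendsto_rate (h : IsCritical x ε) (a b : ℝ) :
    Tendsto (fun n ↦ 2 * (windowSize n * ε n) * timeStep n * a / b) atTop (𝓝 0) := by
  have hcube : Tendsto (fun n : ℕ ↦ ((n ^ 3 : ℕ) : ℝ)) atTop atTop :=
    tendsto_natCast_atTop_atTop.comp (tendsto_pow_atTop three_ne_zero)
  refine ((h.tendsto_cube_mul_rate a b).div_atTop hcube).congr' ?_
  filter_upwards [eventually_gt_atTop 0] with n hn
  exact mul_div_cancel_left₀ _ (by positivity)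

lemma tendsto_one_sub_rate_pow (h : IsCritical x ε) (a b : ℝ) :
    Tendsto (fun n : ℕ ↦ (1 - 2 * (windowSize n * ε n) * timeStep n * a / b) ^ n ^ 3) atTop
      (𝓝 (Real.exp (-(2 * x * a / b)))) :=
  tendsto_one_sub_pow (h.tendsto_rate a b) (h.tendsto_cube_mul_rate a b)

lemma eventually_isLevel (h : IsCritical x ε) (hx : 0 < x) (hη : 0 < η) :
    ∀ᶠ n in atTop, IsLevel η (windowSize n) (ε n) := by
  filter_upwards [eventually_gt_atTop 1, tendsto_windowSize_atTop.eventually_gt_atTop (2 * x),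
    tendsto_windowSize_atTop.eventually (eventually_pow_mul_exp_neg_le 1
      (b := η / 2) (by positivity) (half_pos hx)),
    h.eventually_const_le (half_lt_self hx), h.eventually_le_const (show x < 2 * x by linarith)]
    with n hn hw hexp hlo hhi
  have hpos : 0 < windowSize n * Real.log n :=
    mul_pos (by linarith) (Real.log_pos (Nat.one_lt_cast.2 hn))
  constructor <;> refine le_of_mul_le_mul_right ?_ hpos
  · calc Real.exp (-(1 + η) * windowSize n / 2) * (windowSize n * Real.log n)
        = windowSize n ^ 1 * Real.exp (-(η / 2) * windowSize n) := by
          rw [← exp_half_windowSize hn, mul_left_comm, ← Real.exp_add]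
          ring_nf
      _ ≤ windowSize n * ε n * Real.log n := hexp.trans hlo
      _ = ε n * (windowSize n * Real.log n) := by ring
  · have hone : 1 ≤ Real.exp (η / 4 * windowSize n) :=
      Real.one_le_exp (mul_nonneg (by positivity) (by linarith))
    calc ε n * (windowSize n * Real.log n) = windowSize n * ε n * Real.log n := by ring
      _ ≤ windowSize n * 1 := by linarith
      _ ≤ windowSize n * Real.exp (η / 4 * windowSize n) := by gcongr; linarith
      _ = Real.exp (-(1 - η / 2) * windowSize n / 2) * (windowSize n * Real.log n) := by
          rw [← exp_half_windowSize hn, mul_left_comm, ← Real.exp_add]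
          ring_nf

lemma eventually_lt_survivalMass (h : IsCritical x ε) (hx : 0 < x) (hη : 0 < η) (hη' : η ≤ 1 / 20)
    (ha : a < Real.exp (-(2 * x * (1 + 6 * η) / (1 - 9 * η))) * (1 - 9 * η)) :
    ∀ᶠ n in atTop, a < survivalMass n (ε n) (centralGrid n) (n ^ 3) := by
  have hlim := ((h.tendsto_one_sub_rate_pow (1 + 6 * η) (1 - 9 * η)).mul
    (((h.tendsto_zero.const_mul 2).const_sub 1).const_mul (1 - 9 * η))).sub
      h.tendsto_mul_logShiftRange
  rw [mul_zero, sub_zero, sub_zero, mul_one] at hlim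
  filter_upwards [hlim.eventually_const_lt ha, eventually_pow_le_stdDev_centralGrid,
    tendsto_windowSize_atTop.eventually (eventually_isWindow hη hη'),
    h.eventually_isLevel hx hη, eventually_timeStep_le hη,
    (h.tendsto_rate (1 + 6 * η) (1 - 9 * η)).eventually_le_const one_pos]
    with n hlt hs W E hΔ hrate
  exact hlt.trans_le (W.le_survivalMass E hs ⟨timeStep_nonneg n, by linarith⟩ hrate)

lemma eventually_survivalMass_lt (h : IsCritical x ε) (hx : 0 < x) (hη : 0 < η) (hη' : η ≤ 1 / 20)
    (ha : Real.exp (-(2 * x * (1 - 7 * η) / (1 + 30 * η))) * (1 + 30 * η) < a) :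
    ∀ᶠ n in atTop, survivalMass n (ε n) (centralGrid n) (n ^ 3) < a := by
  have hlim := (((h.tendsto_one_sub_rate_pow (1 - 7 * η) (1 + 30 * η)).mul_const
    (1 + 30 * η)).add tendsto_cube_mul_sq_timeStep).add h.tendsto_mul_logShiftRange
  rw [add_zero, add_zero] at hlim
  filter_upwards [hlim.eventually_lt_const ha, eventually_pow_le_stdDev_centralGrid,
    tendsto_windowSize_atTop.eventually (eventually_isWindow hη hη'),
    h.eventually_isLevel hx hη, eventually_timeStep_le hη,
    h.tendsto_window_mul.eventually_le_const one_pos,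
    (h.tendsto_rate (1 - 7 * η) (1 + 30 * η)).eventually_le_const one_pos]
    with n hlt hs W E hΔ hwε hrate
  exact (W.survivalMass_le E hs hwε (timeStep_nonneg n) hΔ.1 hΔ.2 hrate).trans_lt hlt

lemma tendsto_survivalMass (h : IsCritical x ε) (hx : 0 < x) :
    Tendsto (fun n ↦ survivalMass n (ε n) (centralGrid n) (n ^ 3)) atTop
      (𝓝 (Real.exp (-2 * x))) := by
  have hsmall : ∀ᶠ η : ℝ in 𝓝[>] 0, η ∈ Ioc 0 (1 / 20) := Ioc_mem_nhdsGT (by norm_num)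
  refine tendsto_order.2 ⟨fun a ha ↦ ?_, fun a ha ↦ ?_⟩
  · have hcont : ContinuousAt (fun η : ℝ ↦
        Real.exp (-(2 * x * (1 + 6 * η) / (1 - 9 * η))) * (1 - 9 * η)) 0 := by
      have : (1 : ℝ) - 9 * 0 ≠ 0 := by norm_num
      fun_prop (disch := assumption)
    have hlt := hcont.tendsto.eventually_const_lt (u := a) (by simpa [neg_mul] using ha)
    obtain ⟨η, hη, haη⟩ := (hsmall.and (hlt.filter_mono nhdsWithin_le_nhds)).exists
    exact h.eventually_lt_survivalMass hx hη.1 hη.2 haη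
  · have hcont : ContinuousAt (fun η : ℝ ↦
        Real.exp (-(2 * x * (1 - 7 * η) / (1 + 30 * η))) * (1 + 30 * η)) 0 := by
      have : (1 : ℝ) + 30 * 0 ≠ 0 := by norm_num
      fun_prop (disch := assumption)
    have hlt := hcont.tendsto.eventually_lt_const (u := a) (by simpa [neg_mul] using ha)
    obtain ⟨η, hη, haη⟩ := (hsmall.and (hlt.filter_mono nhdsWithin_le_nhds)).exists
    exact h.eventually_survivalMass_lt hx hη.1 hη.2 haη

lemma tendsto_edgeCount_mul (h : IsCritical x ε) :
    Tendsto (fun n ↦ 4 * edgeCount n * ε n) atTop (𝓝 0) := by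
  have hceil : Tendsto (fun n ↦ edgeCount n / Real.exp (windowSize n / 4)) atTop (𝓝 1) :=
    (tendsto_nat_ceil_div_atTop (R := ℝ)).comp
      (Real.tendsto_exp_atTop.comp (tendsto_windowSize_atTop.atTop_div_const four_pos))
  have hdecay :
      Tendsto (fun n ↦ Real.exp (-(1 / 4) * windowSize n) / windowSize n) atTop (𝓝 0) := by
    have hexp := (tendsto_pow_mul_exp_neg_atTop 0 (b := 1 / 4) (by norm_num)).comp
      tendsto_windowSize_atTop
    simp only [pow_zero, one_mul] at hexp
    exact hexp.div_atTop tendsto_windowSize_atTop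
  have hmul := ((hceil.mul h).mul hdecay).const_mul 4
  rw [mul_zero, mul_zero] at hmul
  refine hmul.congr' ?_
  filter_upwards [eventually_gt_atTop 1, tendsto_windowSize_atTop.eventually_gt_atTop 0]
    with n hn hw
  have hexp : Real.log n * Real.exp (-(1 / 4) * windowSize n) = Real.exp (windowSize n / 4) := by
    rw [← exp_half_windowSize hn, ← Real.exp_add]
    ring_nf
  calc 4 * (edgeCount n / Real.exp (windowSize n / 4) * (windowSize n * ε n * Real.log n)
        * (Real.exp (-(1 / 4) * windowSize n) / windowSize n))
      = 4 * edgeCount n * ε n * (Real.log n * Real.exp (-(1 / 4) * windowSize n)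
        / Real.exp (windowSize n / 4)) := by
        field_simp
    _ = 4 * edgeCount n * ε n := by rw [hexp, div_self (Real.exp_pos _).ne', mul_one]

lemma eventually_measureReal_Mn_lt_le (h : IsCritical x ε) (hx : 0 < x) :
    ∀ᶠ n in atTop, (nullMeasure n).real {u | Mn u < ε n}
      ≤ 1 - survivalMass n (Real.exp (2 * timeStep n) ^ n * ε n) (centralGrid n) (n ^ 3)
        + n * centralGrid n 0 / edgeCount n + n * centralGrid n 0 / edgeCount n
        + 4 * edgeCount n * ε n := by
  filter_upwards [eventually_gt_atTop 0, h.eventually_isLevel hx one_pos,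
    h.tendsto_zero.eventually_lt_const one_pos] with n hn E hε
  have hle := measureReal_Mn_lt_le hn ⟨E.pos, hε⟩ (-(timeSpan n / 2)) (timeStep_nonneg n) (n ^ 3)
    (edgeCount_pos n)
  rw [← centralGrid, one_sub_centralGrid_last hn] at hle
  exact hle

lemma eventually_one_sub_survivalMass_le (h : IsCritical x ε) :
    ∀ᶠ n in atTop, 1 - survivalMass n (ε n) (centralGrid n) (n ^ 3)
      ≤ (nullMeasure n).real {u | Mn u < ε n} := by
  filter_upwards [h.tendsto_zero.eventually_le_const one_pos] with n hε
  exact one_sub_survivalMass_le (monotone_logisticGrid _ (timeStep_nonneg n))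
    (logisticGrid_mem_Ico _ _) n hε (n ^ 3)

end IsCritical

end Calibration

end BerkJones

end

open BerkJones

theorem berk_jones_Mn_null_limit (x : ℝ) (hx : 0 < x) :
    Filter.Tendsto (fun n : ℕ =>
        ((nullMeasure n) {u | Mn u < x / (2 * Real.log n * Real.log (Real.log n))}).toReal)
      Filter.atTop (nhds (1 - Real.exp (-2 * x))) := by
  have hε := isCritical_div_log x
  have hε' := hε.mul_of_tendsto_one tendsto_exp_timeStep_pow
  have hedge := tendsto_mul_centralGrid_zero_div_edgeCount
  have hlower := (hε.tendsto_survivalMass hx).const_sub 1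
  have hupper := ((((hε'.tendsto_survivalMass hx).const_sub 1).add hedge).add hedge).add
    hε.tendsto_edgeCount_mul
  simp only [add_zero] at hupper
  exact tendsto_of_tendsto_of_tendsto_of_le_of_le' hlower hupper
    hε.eventually_one_sub_survivalMass_le (hε.eventually_measureReal_Mn_lt_le hx)
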